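/- Let (M,J) be an almost complex manifold with hermitian metric ω, Ω ⊂ M open, and let u be J-plurisubharmonic on Ω with u ∈ W^{1,2}_loc(Ω). If a sequence (u_j) of bounded J-plurisubharmonic functions on Ω increases to u almost everywhere, then u_j converges to u in W^{1,2}_loc(Ω). -/

import Mathlib

/-!
The argument turns `J`-plurisubharmonicity into the weak subsolution property for a linear elliptic
operator, after which convergence in `W^{1,2}_loc` is an energy estimate. It has four parts.

**Discs.** Through every point `p` and for every direction `e` there is a `J`-holomorphic disc whose
derivative at `0` is nearly a multiple of `e` (`exists_disc`). After rescaling by a small `r`, the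
Cauchy-Riemann equation becomes `ω_x + J₀ ω_y = a(r Re ω) ω_y` with `J₀ = J p` and `a 0 = 0`. It is
solved on the torus: the constant coefficient operator is inverted by a Fourier multiplier gaining
one derivative (`Dat.W_f`), and the resulting fixed point equation is solved by Picard iteration.
The iterates are bounded in every weighted Wiener norm `W s` by tame estimates (`Dat.Phi_tame`) and
converge geometrically in `W 0` (`Dat.Phi_contr`), so the limit is smooth (`Dat.exists_fixed`).

**Smooth almost subsolutions.** Let `u` be bounded and plurisubharmonic, and let `v_ε` be its
sup-convolution, with `p` a maximiser for the point `y`. Comparing a paraboloid through `y` with a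
disc through `p` gives a lower bound on the circular means of `v_ε` (`visc`); the error is of order
`|y - p|²/ε`, which is at most `4 (v_{2ε} - v_ε)(y)` (`scv_gap`) and hence tends to zero with `ε`.
Mollifying (`moll_visc`) yields smooth `v_m` converging to `u` in `L²_loc` with `Lop S v_m ≥ -η_m`
and `η_m → 0` in `L¹_loc` (`exists_approx`). Here `Lop S` is the sum over the coordinate directions
`e_i` of `D²(e_i, e_i) + D²(J e_i, J e_i)` and a first order term; its leading matrix `1 + J Jᵀ` is
uniformly elliptic.

**Weak subsolutions.** Integration by parts with a cut-off (`exists_cut`) gives an energy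
inequality for `v_m`. Tested with `v_m + const` it is a Caccioppoli bound, so by weak compactness
(`weak_limit`) `u` lies in `W^{1,2}_loc`, and passing to the limit shows that `u` is a weak
subsolution (`exists_grad`, `IsSub`).

**Convergence** (`conv_main`). Testing the inequality for `u_j` with `u_j + C₀` bounds the energies
uniformly, because `0 ≤ u_j + C₀ ≤ u + C₀` and `u ∈ L²_loc`; hence the gradients `g_j` converge
weakly to the gradient `g` of `u`. Testing with `u_j - u_k ≥ 0` for `j ≥ k` gives
`∫ α(g_j, g_j) ≤ ∫ α(g_j, g_k) + t B + (4t)⁻¹ ∫ (u - u_k)² |γ|²` for every `t > 0`. Letting `j → ∞`,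
then `k → ∞`, then `t → 0` shows `limsup ∫ α(g_j, g_j) ≤ ∫ α(g, g)`, and with weak convergence this
gives strong convergence of the gradients.
-/


open MeasureTheory Metric Filter Topology Set
open scoped Classical

noncomputable section

/-- `ℝ^{2n}`, the model space of an almost complex manifold of complex dimension `n`. -/
abbrev ESp (n : ℕ) : Type := EuclideanSpace ℝ (Fin (2 * n))

/-- The standard basis vectors of `ℝ^{2n}`. -/
def sb (n : ℕ) (i : Fin (2 * n)) : ESp n := EuclideanSpace.single i (1 : ℝ)

/-- An almost complex structure on a set `M ⊆ ℝ^{2n}`: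
a smooth field of endomorphisms of the tangent bundle squaring to `-id`. -/
structure ACStruct (n : ℕ) (M : Set (ESp n)) : Type where
  J : ESp n → ESp n →L[ℝ] ESp n
  smooth : ContDiffOn ℝ (⊤ : ℕ∞) J M
  sq : ∀ x ∈ M, ∀ v : ESp n, J x (J x v) = -v

/-- The open unit disc in `ℂ`. -/
def unitDisc : Set ℂ := Metric.ball 0 1

/-- Average of `f` over the circle of radius `r` centred at `c`. -/
def circAvg (f : ℂ → ℝ) (c : ℂ) (r : ℝ) : ℝ :=
  (2 * Real.pi)⁻¹ * ∫ t in (0:ℝ)..(2 * Real.pi), f (c + r * Complex.exp (t * Complex.I))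

/-- Subharmonicity on a set `U ⊆ ℂ`: upper semicontinuity together with
the sub-mean value inequality on discs contained in `U`. -/
structure SubhOn (f : ℂ → ℝ) (U : Set ℂ) : Prop where
  usc : UpperSemicontinuousOn f U
  submean : ∀ c r, 0 < r → Metric.closedBall c r ⊆ U → f c ≤ circAvg f c r

/-- A `J`-holomorphic disc in `M`: smooth on the unit disc, mapping the unit disc into `M`,
and satisfying `λ'(∂/∂z̄) ∈ T^{0,1}M`, i.e. `∂λ/∂y = J(λ)(∂λ/∂x)`. -/
structure IsJHoloDisc {n : ℕ} {M : Set (ESp n)} (S : ACStruct n M) (lam : ℂ → ESp n) : Prop where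
  smooth : ∀ z ∈ unitDisc, ContDiffAt ℝ (⊤ : ℕ∞) lam z
  maps : Set.MapsTo lam unitDisc M
  CR : ∀ z ∈ unitDisc, fderiv ℝ lam z Complex.I = S.J (lam z) (fderiv ℝ lam z 1)

/-- `J`-plurisubharmonicity on `Ω`: upper semicontinuous on `Ω`, and subharmonic along
every `J`-holomorphic disc with image in `Ω`. -/
def JPsh {n : ℕ} {M : Set (ESp n)} (S : ACStruct n M) (Ω : Set (ESp n)) (u : ESp n → ℝ) : Prop :=
  UpperSemicontinuousOn u Ω ∧
  ∀ lam : ℂ → ESp n, IsJHoloDisc S lam → Set.MapsTo lam unitDisc Ω →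
    SubhOn (fun z => u (lam z)) unitDisc

/-- Strict `J`-plurisubharmonicity on `Ω`: `u` is `J`-plurisubharmonic, and for every
`D ⋐ Ω` and every `C²` function `φ` on a neighbourhood of `D̄` there is `ε > 0` with
`u + εφ` `J`-plurisubharmonic on `D`. -/
def StrictJPsh {n : ℕ} {M : Set (ESp n)} (S : ACStruct n M) (Ω : Set (ESp n))
    (u : ESp n → ℝ) : Prop :=
  JPsh S Ω u ∧
  ∀ D : Set (ESp n), IsOpen D → closure D ⊆ Ω → IsCompact (closure D) →
    ∀ φ : ESp n → ℝ,
      (∃ V : Set (ESp n), IsOpen V ∧ closure D ⊆ V ∧ ContDiffOn ℝ 2 φ V) →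
      ∃ ε : ℝ, 0 < ε ∧ JPsh S D (fun x => u x + ε * φ x)

/-- `g` is a weak (distributional) gradient of `u` on the open set `Ω ⊆ ℝ^{2n}`. -/
def HasWeakGradOn {n : ℕ} (u : ESp n → ℝ) (g : ESp n → ESp n) (Ω : Set (ESp n)) : Prop :=
  LocallyIntegrableOn u Ω volume ∧ LocallyIntegrableOn g Ω volume ∧
  ∀ φ : ESp n → ℝ, ContDiff ℝ (⊤ : ℕ∞) φ → HasCompactSupport φ → tsupport φ ⊆ Ω →
    ∀ i : Fin (2 * n),
      (∫ x in Ω, u x * fderiv ℝ φ x (sb n i)) = -∫ x in Ω, φ x * g x i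

/-- `u` belongs to the local Sobolev space `W^{1,2}_loc(Ω)`. -/
def MemW12loc {n : ℕ} (u : ESp n → ℝ) (Ω : Set (ESp n)) : Prop :=
  ∃ g : ESp n → ESp n, HasWeakGradOn u g Ω ∧
    ∀ K : Set (ESp n), K ⊆ Ω → IsCompact K →
      IntegrableOn (fun x => (u x) ^ 2 + ‖g x‖ ^ 2) K volume

/-- The square of the `W^{1,2}` norm of `u` (with weak gradient `g`) on `A`. -/
def W12normSq {n : ℕ} (u : ESp n → ℝ) (g : ESp n → ESp n) (A : Set (ESp n)) : ℝ :=
  ∫ x in A, ((u x) ^ 2 + ‖g x‖ ^ 2)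

/-! ### Fourier coefficients of doubly periodic functions -/

namespace PshAux

/-- The character `(x, y) ↦ exp (i (m₁ x + m₂ y))`. -/
def ex (m : ℤ × ℤ) (z : ℝ × ℝ) : ℂ :=
  Complex.exp (Complex.I * ((m.1 : ℂ) * (z.1 : ℂ) + (m.2 : ℂ) * (z.2 : ℂ)))

/-- Partial derivative in the first variable. -/
def dx (F : ℝ × ℝ → ℂ) (z : ℝ × ℝ) : ℂ := fderiv ℝ F z (1, 0)

/-- Partial derivative in the second variable. -/
def dy (F : ℝ × ℝ → ℂ) (z : ℝ × ℝ) : ℂ := fderiv ℝ F z (0, 1)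

/-- Smooth functions on the plane that are `2π`-periodic in each variable. -/
structure SmPer (F : ℝ × ℝ → ℂ) : Prop where
  smooth : ContDiff ℝ (⊤ : ℕ∞) F
  px : ∀ x y, F (x + 2 * Real.pi, y) = F (x, y)
  py : ∀ x y, F (x, y + 2 * Real.pi) = F (x, y)

lemma ex_add (m k : ℤ × ℤ) (z : ℝ × ℝ) : ex (m + k) z = ex m z * ex k z := by
  simp only [ex, ← Complex.exp_add, Prod.fst_add, Prod.snd_add]
  congr 1; push_cast; ring

lemma ex_zero (z : ℝ × ℝ) : ex 0 z = 1 := by simp [ex]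

lemma norm_ex (m : ℤ × ℤ) (z : ℝ × ℝ) : ‖ex m z‖ = 1 := by
  have : Complex.I * ((m.1 : ℂ) * (z.1 : ℂ) + (m.2 : ℂ) * (z.2 : ℂ))
      = ((m.1 * z.1 + m.2 * z.2 : ℝ) : ℂ) * Complex.I := by push_cast; ring
  rw [ex, this, Complex.norm_exp_ofReal_mul_I]

lemma ex_contDiff (m : ℤ × ℤ) : ContDiff ℝ (⊤ : ℕ∞) (ex m) := by
  unfold ex
  have h1 : ContDiff ℝ (⊤ : ℕ∞) (fun z : ℝ × ℝ => (z.1 : ℂ)) :=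
    Complex.ofRealCLM.contDiff.comp contDiff_fst
  have h2 : ContDiff ℝ (⊤ : ℕ∞) (fun z : ℝ × ℝ => (z.2 : ℂ)) :=
    Complex.ofRealCLM.contDiff.comp contDiff_snd
  fun_prop

lemma ex_cont (m : ℤ × ℤ) : Continuous (ex m) := (ex_contDiff m).continuous

lemma ex_hasFDeriv (m : ℤ × ℤ) (z : ℝ × ℝ) :
    HasFDerivAt (ex m) ((Complex.I * m.1 * ex m z) • (Complex.ofRealCLM.comp
        (ContinuousLinearMap.fst ℝ ℝ ℝ)) + (Complex.I * m.2 * ex m z) • (Complex.ofRealCLM.comp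
        (ContinuousLinearMap.snd ℝ ℝ ℝ)) : ℝ × ℝ →L[ℝ] ℂ) z := by
  have h1 : HasFDerivAt (fun z : ℝ × ℝ => (z.1 : ℂ)) (Complex.ofRealCLM.comp
        (ContinuousLinearMap.fst ℝ ℝ ℝ)) z := Complex.ofRealCLM.hasFDerivAt.comp z hasFDerivAt_fst
  have h2 : HasFDerivAt (fun z : ℝ × ℝ => (z.2 : ℂ)) (Complex.ofRealCLM.comp
        (ContinuousLinearMap.snd ℝ ℝ ℝ)) z := Complex.ofRealCLM.hasFDerivAt.comp z hasFDerivAt_snd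
  have h3 := (((h1.const_mul (m.1 : ℂ)).add (h2.const_mul (m.2 : ℂ))).const_mul Complex.I).cexp
  refine h3.congr_fderiv ?_
  ext <;> simp [ex] <;> ring

lemma ex_px (m : ℤ × ℤ) (x y : ℝ) : ex m (x + 2 * Real.pi, y) = ex m (x, y) := by
  simp only [ex]
  rw [Complex.exp_eq_exp_iff_exists_int]
  exact ⟨m.1, by push_cast; ring⟩

lemma ex_py (m : ℤ × ℤ) (x y : ℝ) : ex m (x, y + 2 * Real.pi) = ex m (x, y) := by
  simp only [ex]
  rw [Complex.exp_eq_exp_iff_exists_int]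
  exact ⟨m.2, by push_cast; ring⟩

lemma ex_smPer (m : ℤ × ℤ) : SmPer (ex m) := ⟨ex_contDiff m, ex_px m, ex_py m⟩

namespace SmPer
variable {F G : ℝ × ℝ → ℂ}

lemma diff (hF : SmPer F) : Differentiable ℝ F := hF.smooth.differentiable (by simp)
lemma cont (hF : SmPer F) : Continuous F := hF.smooth.continuous

lemma add (hF : SmPer F) (hG : SmPer G) : SmPer (fun z => F z + G z) :=
  ⟨hF.smooth.add hG.smooth, fun x y => by simp [hF.px, hG.px], fun x y => by simp [hF.py, hG.py]⟩
lemma sub (hF : SmPer F) (hG : SmPer G) : SmPer (fun z => F z - G z) :=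
  ⟨hF.smooth.sub hG.smooth, fun x y => by simp [hF.px, hG.px], fun x y => by simp [hF.py, hG.py]⟩
lemma mul (hF : SmPer F) (hG : SmPer G) : SmPer (fun z => F z * G z) :=
  ⟨hF.smooth.mul hG.smooth, fun x y => by simp [hF.px, hG.px], fun x y => by simp [hF.py, hG.py]⟩
lemma const (c : ℂ) : SmPer (fun _ => c) := ⟨contDiff_const, fun _ _ => rfl, fun _ _ => rfl⟩
lemma const_mul (c : ℂ) (hF : SmPer F) : SmPer (fun z => c * F z) := (const c).mul hF
lemma sum {ι : Type*} {s : Finset ι} {f : ι → ℝ × ℝ → ℂ} (h : ∀ i ∈ s, SmPer (f i)) :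
    SmPer (fun z => ∑ i ∈ s, f i z) :=
  ⟨ContDiff.sum fun i hi => (h i hi).smooth,
   fun x y => Finset.sum_congr rfl fun i hi => (h i hi).px x y,
   fun x y => Finset.sum_congr rfl fun i hi => (h i hi).py x y⟩
lemma conj (hF : SmPer F) : SmPer (fun z => (starRingEnd ℂ) (F z)) :=
  ⟨Complex.conjCLE.contDiff.comp hF.smooth, fun x y => by simp [hF.px],
    fun x y => by simp [hF.py]⟩
lemma re (hF : SmPer F) : SmPer (fun z => ((F z).re : ℂ)) :=
  ⟨Complex.ofRealCLM.contDiff.comp (Complex.reCLM.contDiff.comp hF.smooth),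
    fun x y => by simp [hF.px], fun x y => by simp [hF.py]⟩

lemma fderiv_px (hF : SmPer F) (x y : ℝ) : fderiv ℝ F (x + 2 * Real.pi, y) = fderiv ℝ F (x, y) := by
  have h : (fun z : ℝ × ℝ => F (z + (2 * Real.pi, 0))) = F := by
    ext ⟨a, b⟩; simpa using hF.px a b
  have := fderiv_comp_add_right (𝕜 := ℝ) (f := F) (x := (x, y)) ((2 * Real.pi, 0) : ℝ × ℝ)
  rw [h] at this
  simpa using this.symm

lemma fderiv_py (hF : SmPer F) (x y : ℝ) : fderiv ℝ F (x, y + 2 * Real.pi) = fderiv ℝ F (x, y) := by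
  have h : (fun z : ℝ × ℝ => F (z + (0, 2 * Real.pi))) = F := by
    ext ⟨a, b⟩; simpa using hF.py a b
  have := fderiv_comp_add_right (𝕜 := ℝ) (f := F) (x := (x, y)) ((0, 2 * Real.pi) : ℝ × ℝ)
  rw [h] at this
  simpa using this.symm

lemma dx (hF : SmPer F) : SmPer (dx F) :=
  ⟨(hF.smooth.fderiv_right (m := (⊤ : ℕ∞)) (by simp)).clm_apply contDiff_const,
    fun x y => by simp [PshAux.dx, hF.fderiv_px], fun x y => by simp [PshAux.dx, hF.fderiv_py]⟩
lemma dy (hF : SmPer F) : SmPer (dy F) :=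
  ⟨(hF.smooth.fderiv_right (m := (⊤ : ℕ∞)) (by simp)).clm_apply contDiff_const,
    fun x y => by simp [PshAux.dy, hF.fderiv_px], fun x y => by simp [PshAux.dy, hF.fderiv_py]⟩

end SmPer

section
variable {F G : ℝ × ℝ → ℂ}
lemma dx_mul (hF : SmPer F) (hG : SmPer G) :
    dx (fun z => F z * G z) = fun z => F z * dx G z + dx F z * G z := by
  ext z; simp [dx, fderiv_fun_mul (hF.diff z) (hG.diff z)]; ring
lemma dy_mul (hF : SmPer F) (hG : SmPer G) :
    dy (fun z => F z * G z) = fun z => F z * dy G z + dy F z * G z := by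
  ext z; simp [dy, fderiv_fun_mul (hF.diff z) (hG.diff z)]; ring
lemma dx_add (hF : SmPer F) (hG : SmPer G) :
    dx (fun z => F z + G z) = fun z => dx F z + dx G z := by
  ext z; simp [dx, fderiv_fun_add (hF.diff z) (hG.diff z)]
lemma dy_add (hF : SmPer F) (hG : SmPer G) :
    dy (fun z => F z + G z) = fun z => dy F z + dy G z := by
  ext z; simp [dy, fderiv_fun_add (hF.diff z) (hG.diff z)]
end

/-- The fundamental square. -/
def Q : Set (ℝ × ℝ) := Ioc 0 (2 * Real.pi) ×ˢ Ioc 0 (2 * Real.pi)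

lemma Q_vol : (volume : Measure (ℝ × ℝ)).real Q = 4 * Real.pi ^ 2 := by
  rw [Q, Measure.real, Measure.volume_eq_prod, Measure.prod_prod]
  simp only [Real.volume_Ioc, sub_zero]
  rw [← ENNReal.ofReal_mul (by positivity), ENNReal.toReal_ofReal (by positivity)]; ring

lemma Q_int {F : ℝ × ℝ → ℂ} (hF : Continuous F) : IntegrableOn F Q volume :=
  (hF.continuousOn.integrableOn_compact (isCompact_Icc.prod isCompact_Icc)).mono_set
    (prod_mono Ioc_subset_Icc_self Ioc_subset_Icc_self)

lemma Q_int_mul {F G : ℝ × ℝ → ℂ} (hF : Continuous F) (hG : Continuous G) :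
    IntegrableOn (fun z => F z * G z) Q volume := Q_int (hF.mul hG)

/-- Fourier coefficients of a doubly periodic function. -/
def cf (F : ℝ × ℝ → ℂ) (m : ℤ × ℤ) : ℂ :=
  ((4 * Real.pi ^ 2 : ℝ) : ℂ)⁻¹ * ∫ z in Q, ex (-m) z * F z

lemma cf_add {F G : ℝ × ℝ → ℂ} (hF : Continuous F) (hG : Continuous G) (m : ℤ × ℤ) :
    cf (fun z => F z + G z) m = cf F m + cf G m := by
  simp only [cf, mul_add]
  rw [integral_add (Q_int_mul (ex_cont _) hF) (Q_int_mul (ex_cont _) hG), mul_add]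

lemma cf_sub {F G : ℝ × ℝ → ℂ} (hF : Continuous F) (hG : Continuous G) (m : ℤ × ℤ) :
    cf (fun z => F z - G z) m = cf F m - cf G m := by
  simp only [cf, mul_sub]
  rw [integral_sub (Q_int_mul (ex_cont _) hF) (Q_int_mul (ex_cont _) hG), mul_sub]

lemma cf_const_mul (c : ℂ) (F : ℝ × ℝ → ℂ) (m : ℤ × ℤ) :
    cf (fun z => c * F z) m = c * cf F m := by
  simp only [cf]
  rw [mul_left_comm c, ← integral_const_mul c]
  congr 2; funext z; ring

lemma cf_norm_le {F : ℝ × ℝ → ℂ} {C : ℝ} (hF : ∀ z, ‖F z‖ ≤ C) (m : ℤ × ℤ) :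
    ‖cf F m‖ ≤ C := by
  rw [cf, norm_mul, norm_inv, Complex.norm_real, Real.norm_of_nonneg (by positivity),
    inv_mul_le_iff₀ (by positivity), mul_comm, ← Q_vol]
  refine norm_setIntegral_le_of_norm_le_const (C := C) ?_ ?_
  · rw [Q, Measure.volume_eq_prod, Measure.prod_prod]
    exact ENNReal.mul_lt_top measure_Ioc_lt_top measure_Ioc_lt_top
  · intro z _; rw [norm_mul, norm_ex, one_mul]; exact hF z

lemma cf_conj (F : ℝ × ℝ → ℂ) (m : ℤ × ℤ) :
    cf (fun z => (starRingEnd ℂ) (F z)) m = (starRingEnd ℂ) (cf F (-m)) := by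
  simp only [cf, map_mul, ← integral_conj, map_inv₀, Complex.conj_ofReal]
  congr 2; ext z; congr 1
  simp only [ex, ← Complex.exp_conj]
  congr 1; simp; ring

lemma cf_one (m : ℤ × ℤ) : cf (fun _ => 1) m = if m = 0 then 1 else 0 := by
  have hpi : (Real.pi : ℂ) ≠ 0 := by exact_mod_cast Real.pi_ne_zero
  have h1 : ∀ k : ℤ, ∫ x in Ioc 0 (2 * Real.pi), Complex.exp (Complex.I * (k * (x:ℂ)))
      = if k = 0 then ((2 * Real.pi : ℝ) : ℂ) else 0 := by
    intro k
    rw [← intervalIntegral.integral_of_le (by positivity)]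
    split_ifs with h
    · simp [h]
    · have : ∀ x : ℝ, Complex.exp (Complex.I * (k * (x:ℂ))) = Complex.exp ((Complex.I * k) * x) := by
        intro x; ring_nf
      simp_rw [this]
      rw [integral_exp_mul_complex (by simp [h])]
      have h2 : Complex.exp (Complex.I * k * ((2 * Real.pi : ℝ) : ℂ)) = 1 := by
        rw [Complex.exp_eq_one_iff]; exact ⟨k, by push_cast; ring⟩
      rw [h2]; simp
  have h2 : ∀ z : ℝ × ℝ, ex (-m) z * 1 = Complex.exp (Complex.I * ((-m.1 : ℤ) * (z.1:ℂ)))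
      * Complex.exp (Complex.I * ((-m.2 : ℤ) * (z.2:ℂ))) := by
    intro z; rw [ex, ← Complex.exp_add, mul_one]; congr 1; simp; ring
  rw [cf, Q]
  simp_rw [h2]
  rw [Measure.volume_eq_prod, setIntegral_prod_mul (fun x : ℝ => Complex.exp (Complex.I * ((-m.1 : ℤ) * (x:ℂ)))) (fun x : ℝ => Complex.exp (Complex.I * ((-m.2 : ℤ) * (x:ℂ)))), h1, h1]
  rcases m with ⟨a, b⟩
  by_cases ha : a = 0 <;> by_cases hb : b = 0 <;> simp [ha, hb]
  field_simp; norm_num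

lemma cf_ex_mul (k : ℤ × ℤ) (G : ℝ × ℝ → ℂ) (m : ℤ × ℤ) :
    cf (fun z => ex k z * G z) m = cf G (m - k) := by
  simp only [cf]
  congr 2; ext z
  rw [← mul_assoc, ← ex_add]; congr 2; abel

lemma cf_tsum_mul {c : ℤ × ℤ → ℂ} (hc : Summable fun k => ‖c k‖) {G : ℝ × ℝ → ℂ}
    (hG : Continuous G) (m : ℤ × ℤ) :
    HasSum (fun k => c k * cf G (m - k)) (cf (fun z => ∑' k, c k * ex k z * G z) m) := by
  have hi : ∀ k, IntegrableOn (fun z => ex (-m) z * (c k * ex k z * G z)) Q volume := fun k =>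
    Q_int ((ex_cont _).mul ((continuous_const.mul (ex_cont _)).mul hG))
  have h := hasSum_integral_of_summable_integral_norm (μ := volume.restrict Q)
    (F := fun k z => ex (-m) z * (c k * ex k z * G z)) hi ?_
  · have h2 := h.mul_left (((4 * Real.pi ^ 2 : ℝ) : ℂ)⁻¹)
    simp only [cf]
    simp_rw [← tsum_mul_left]
    have e : (fun k => c k * ((((4 * Real.pi ^ 2 : ℝ) : ℂ)⁻¹) * ∫ z in Q, ex (-(m - k)) z * G z))
        = fun k => (((4 * Real.pi ^ 2 : ℝ) : ℂ)⁻¹) * ∫ z in Q, ex (-m) z * (c k * ex k z * G z) := by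
      funext k
      have := cf_ex_mul k G m
      simp only [cf] at this
      rw [← this, mul_left_comm (c k), ← integral_const_mul (c k)]
      congr 2; funext z; ring
    rw [e]; exact h2
  · simp only [norm_mul, norm_ex, one_mul, mul_one]
    simp_rw [integral_const_mul]
    exact hc.mul_right _

lemma prod_split {F : ℝ × ℝ → ℂ} (hF : Continuous F) :
    ∫ z in Q, F z = ∫ x in Ioc 0 (2 * Real.pi), ∫ y in Ioc 0 (2 * Real.pi), F (x, y) := by
  have := Q_int hF
  rw [Q, Measure.volume_eq_prod] at *
  exact setIntegral_prod _ this

lemma prod_split' {F : ℝ × ℝ → ℂ} (hF : Continuous F) :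
    ∫ z in Q, F z = ∫ y in Ioc 0 (2 * Real.pi), ∫ x in Ioc 0 (2 * Real.pi), F (x, y) := by
  rw [Q, Measure.volume_eq_prod, ← setIntegral_prod_swap]
  have := Q_int (F := fun z => F z.swap) (hF.comp continuous_swap)
  rw [Q, Measure.volume_eq_prod] at this
  rw [setIntegral_prod _ this]
  rfl

/-- Integration of a periodic derivative over a period. -/
lemma int_dx {F : ℝ × ℝ → ℂ} (hF : SmPer F) : ∫ z in Q, dx F z = 0 := by
  rw [prod_split' hF.dx.cont]
  have : ∀ y : ℝ, ∫ x in Ioc 0 (2 * Real.pi), dx F (x, y) = 0 := by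
    intro y
    rw [← intervalIntegral.integral_of_le (by positivity)]
    rw [intervalIntegral.integral_eq_sub_of_hasDerivAt (f := fun x => F (x, y))]
    · have := hF.px 0 y; simp only [zero_add] at this; rw [this, sub_self]
    · intro x _
      have h1 := (hF.diff (x, y)).hasFDerivAt
      have h2 : HasDerivAt (fun x : ℝ => ((x, y) : ℝ × ℝ)) (1, 0) x :=
        (hasDerivAt_id x).prodMk (hasDerivAt_const x y)
      exact h1.comp_hasDerivAt x h2
    · exact (hF.dx.cont.comp (by fun_prop : Continuous fun x : ℝ => (x, y))).intervalIntegrable _ _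
  simp [this]

lemma int_dy {F : ℝ × ℝ → ℂ} (hF : SmPer F) : ∫ z in Q, dy F z = 0 := by
  rw [prod_split hF.dy.cont]
  have : ∀ x : ℝ, ∫ y in Ioc 0 (2 * Real.pi), dy F (x, y) = 0 := by
    intro x
    rw [← intervalIntegral.integral_of_le (by positivity)]
    rw [intervalIntegral.integral_eq_sub_of_hasDerivAt (f := fun y => F (x, y))]
    · have := hF.py x 0; simp only [zero_add] at this; rw [this, sub_self]
    · intro y _
      have h1 := (hF.diff (x, y)).hasFDerivAt
      have h2 : HasDerivAt (fun y : ℝ => ((x, y) : ℝ × ℝ)) (0, 1) y :=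
        (hasDerivAt_const y x).prodMk (hasDerivAt_id y)
      exact h1.comp_hasDerivAt y h2
    · exact (hF.dy.cont.comp (by fun_prop : Continuous fun y : ℝ => (x, y))).intervalIntegrable _ _
  simp [this]

lemma dx_ex (m : ℤ × ℤ) (z) : dx (ex m) z = Complex.I * m.1 * ex m z := by
  simp [dx, (ex_hasFDeriv m z).fderiv]
lemma dy_ex (m : ℤ × ℤ) (z) : dy (ex m) z = Complex.I * m.2 * ex m z := by
  simp [dy, (ex_hasFDeriv m z).fderiv]

lemma cf_dx {F : ℝ × ℝ → ℂ} (hF : SmPer F) (m : ℤ × ℤ) :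
    cf (dx F) m = Complex.I * m.1 * cf F m := by
  have h := int_dx ((ex_smPer (-m)).mul hF)
  rw [dx_mul (ex_smPer _) hF, integral_add (Q_int_mul (ex_cont _) hF.dx.cont)
    (Q_int_mul (ex_smPer (-m)).dx.cont hF.cont)] at h
  simp_rw [dx_ex, mul_assoc] at h
  rw [integral_const_mul, integral_const_mul] at h
  simp only [cf]
  rw [eq_neg_of_add_eq_zero_left h]; simp; ring

lemma cf_dy {F : ℝ × ℝ → ℂ} (hF : SmPer F) (m : ℤ × ℤ) :
    cf (dy F) m = Complex.I * m.2 * cf F m := by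
  have h := int_dy ((ex_smPer (-m)).mul hF)
  rw [dy_mul (ex_smPer _) hF, integral_add (Q_int_mul (ex_cont _) hF.dy.cont)
    (Q_int_mul (ex_smPer (-m)).dy.cont hF.cont)] at h
  simp_rw [dy_ex, mul_assoc] at h
  rw [integral_const_mul, integral_const_mul] at h
  simp only [cf]
  rw [eq_neg_of_add_eq_zero_left h]; simp; ring

end PshAux

/-! ### Fourier series and decay of coefficients -/

namespace PshAux

/-- The Fourier series with coefficients `c`. -/
def fs (c : ℤ × ℤ → ℂ) (z : ℝ × ℝ) : ℂ := ∑' k, c k * ex k z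

/-- The weight `1 + |m₁| + |m₂|`. -/
def wt (m : ℤ × ℤ) : ℝ := 1 + |(m.1 : ℝ)| + |(m.2 : ℝ)|

lemma wt_ge (m) : 1 ≤ wt m := by
  unfold wt; linarith [abs_nonneg (m.1 : ℝ), abs_nonneg (m.2 : ℝ)]
lemma wt_pos (m) : 0 < wt m := lt_of_lt_of_le one_pos (wt_ge m)
lemma wt_neg (m) : wt (-m) = wt m := by simp [wt]
lemma wt_le_add (m k : ℤ × ℤ) : wt m ≤ wt k + wt (m - k) := by
  have h1 := abs_add_le (k.1 : ℝ) (m.1 - k.1)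
  have h2 := abs_add_le (k.2 : ℝ) (m.2 - k.2)
  simp only [add_sub_cancel] at h1 h2
  simp only [wt, Prod.fst_sub, Prod.snd_sub, Int.cast_sub]; linarith
lemma wt_le_mul (m k : ℤ × ℤ) : wt m ≤ wt k * wt (m - k) := by
  have h1 := abs_add_le (k.1 : ℝ) (m.1 - k.1)
  have h2 := abs_add_le (k.2 : ℝ) (m.2 - k.2)
  simp only [add_sub_cancel] at h1 h2
  simp only [wt, Prod.fst_sub, Prod.snd_sub, Int.cast_sub]
  have e1 := abs_nonneg (k.1 : ℝ); have e2 := abs_nonneg (k.2 : ℝ)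
  have e3 := abs_nonneg (m.1 - k.1 : ℝ); have e4 := abs_nonneg (m.2 - k.2 : ℝ)
  nlinarith [mul_nonneg (add_nonneg e1 e2) (add_nonneg e3 e4)]

/-- Membership of a coefficient family in the weighted Wiener space of order `s`. -/
def Sm (s : ℕ) (c : ℤ × ℤ → ℂ) : Prop := Summable fun m => wt m ^ s * ‖c m‖

lemma Sm.mono {s t : ℕ} {c : ℤ × ℤ → ℂ} (h : Sm t c) (hst : s ≤ t) : Sm s c :=
  Summable.of_nonneg_of_le (fun m => by have := wt_pos m; positivity)
    (fun m => mul_le_mul_of_nonneg_right (pow_le_pow_right₀ (wt_ge m) hst) (norm_nonneg _)) h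

lemma Sm.norm {s : ℕ} {c : ℤ × ℤ → ℂ} (h : Sm s c) : Summable fun m => ‖c m‖ := by
  simpa [Sm] using h.mono (Nat.zero_le s)

lemma Sm.of_le {s : ℕ} {c d : ℤ × ℤ → ℂ} (h : Sm s c) {C : ℝ} (hd : ∀ m, ‖d m‖ ≤ C * ‖c m‖) :
    Sm s d :=
  Summable.of_nonneg_of_le (fun m => by have := wt_pos m; positivity)
    (fun m => by
      have := mul_le_mul_of_nonneg_left (hd m) (pow_nonneg (wt_pos m).le s)
      linarith [mul_left_comm C (wt m ^ s) ‖c m‖]) (h.mul_left C)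

lemma Sm.dx {s : ℕ} {c : ℤ × ℤ → ℂ} (h : Sm (s+1) c) : Sm s (fun m => Complex.I * m.1 * c m) :=
  Summable.of_nonneg_of_le (fun m => by have := wt_pos m; positivity)
    (fun m => by
      have := wt_pos m
      simp only [norm_mul, Complex.norm_I, one_mul, Complex.norm_intCast, pow_succ, mul_assoc]
      gcongr
      unfold wt; linarith [abs_nonneg (m.1 : ℝ), abs_nonneg (m.2 : ℝ)]) h

lemma Sm.dy {s : ℕ} {c : ℤ × ℤ → ℂ} (h : Sm (s+1) c) : Sm s (fun m => Complex.I * m.2 * c m) :=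
  Summable.of_nonneg_of_le (fun m => by have := wt_pos m; positivity)
    (fun m => by
      have := wt_pos m
      simp only [norm_mul, Complex.norm_I, one_mul, Complex.norm_intCast, pow_succ, mul_assoc]
      gcongr
      unfold wt; linarith [abs_nonneg (m.1 : ℝ), abs_nonneg (m.2 : ℝ)]) h

lemma fs_summable {c : ℤ × ℤ → ℂ} (h : Summable fun m => ‖c m‖) (z) :
    Summable fun k => c k * ex k z :=
  Summable.of_norm (by simpa [norm_ex] using h)

lemma fs_norm_le {c : ℤ × ℤ → ℂ} (h : Summable fun m => ‖c m‖) (z) : ‖fs c z‖ ≤ ∑' m, ‖c m‖ := by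
  refine (norm_tsum_le_tsum_norm (by simpa [norm_ex] using h)).trans (le_of_eq ?_)
  simp [norm_ex]

lemma fs_hasFDeriv {c : ℤ × ℤ → ℂ} (h : Sm 1 c) (z : ℝ × ℝ) :
    HasFDerivAt (fs c) ((fs (fun m => Complex.I * m.1 * c m) z) • (Complex.ofRealCLM.comp
        (ContinuousLinearMap.fst ℝ ℝ ℝ)) + (fs (fun m => Complex.I * m.2 * c m) z) •
        (Complex.ofRealCLM.comp (ContinuousLinearMap.snd ℝ ℝ ℝ)) : ℝ × ℝ →L[ℝ] ℂ) z := by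
  set A : ℝ × ℝ →L[ℝ] ℂ := Complex.ofRealCLM.comp (ContinuousLinearMap.fst ℝ ℝ ℝ)
  set B : ℝ × ℝ →L[ℝ] ℂ := Complex.ofRealCLM.comp (ContinuousLinearMap.snd ℝ ℝ ℝ)
  have hx : Sm 0 _ := h.dx
  have hy : Sm 0 _ := h.dy
  have key := hasFDerivAt_tsum (𝕜 := ℝ) (f := fun k z => c k * ex k z)
    (f' := fun k z => (Complex.I * k.1 * c k * ex k z) • A + (Complex.I * k.2 * c k * ex k z) • B)
    (u := fun k => ‖Complex.I * k.1 * c k‖ * ‖A‖ + ‖Complex.I * k.2 * c k‖ * ‖B‖)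
    ((hx.norm.mul_right _).add (hy.norm.mul_right _))
    (fun k z => by
      refine ((ex_hasFDeriv k z).const_mul (c k)).congr_fderiv ?_
      rw [smul_add, smul_smul, smul_smul]
      congr 2 <;> ring)
    (fun k z => by
      refine (norm_add_le _ _).trans ?_
      rw [norm_smul, norm_smul, norm_mul _ (ex k z), norm_mul _ (ex k z), norm_ex, mul_one, mul_one])
    (x₀ := 0) (fs_summable h.norm 0) z
  refine key.congr_fderiv ?_
  have s1 := fs_summable hx.norm z
  have s2 := fs_summable hy.norm z
  rw [Summable.tsum_add (s1.smul_const A) (s2.smul_const B), s1.tsum_smul_const, s2.tsum_smul_const]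
  rfl

lemma fs_dx {c : ℤ × ℤ → ℂ} (h : Sm 1 c) : dx (fs c) = fs (fun m => Complex.I * m.1 * c m) := by
  ext z; simp [dx, (fs_hasFDeriv h z).fderiv]
lemma fs_dy {c : ℤ × ℤ → ℂ} (h : Sm 1 c) : dy (fs c) = fs (fun m => Complex.I * m.2 * c m) := by
  ext z; simp [dy, (fs_hasFDeriv h z).fderiv]

lemma fs_contDiff_nat (k : ℕ) : ∀ {c : ℤ × ℤ → ℂ}, (∀ s, Sm s c) → ContDiff ℝ k (fs c) := by
  induction k with
  | zero => intro c h
            rw [Nat.cast_zero, contDiff_zero]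
            exact continuous_iff_continuousAt.2 fun z => (fs_hasFDeriv (h 1) z).continuousAt
  | succ k ih =>
    intro c h
    rw [Nat.cast_succ, contDiff_succ_iff_fderiv]
    refine ⟨fun z => (fs_hasFDeriv (h 1) z).differentiableAt, by simp, ?_⟩
    have e : fderiv ℝ (fs c) = fun z => _ := funext fun z => (fs_hasFDeriv (h 1) z).fderiv
    rw [e]
    exact ((ih fun s => (h (s+1)).dx).smul contDiff_const).add
      ((ih fun s => (h (s+1)).dy).smul contDiff_const)

lemma fs_smPer {c : ℤ × ℤ → ℂ} (h : ∀ s, Sm s c) : SmPer (fs c) :=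
  ⟨contDiff_infty.2 fun k => fs_contDiff_nat k h, fun x y => by simp [fs, ex_px],
    fun x y => by simp [fs, ex_py]⟩

lemma cf_fs {c : ℤ × ℤ → ℂ} (h : Summable fun m => ‖c m‖) (m : ℤ × ℤ) : cf (fs c) m = c m := by
  have := cf_tsum_mul h (G := fun _ => 1) continuous_const m
  simp only [mul_one, cf_one] at this
  refine this.unique ?_
  have h2 := hasSum_ite_eq m (c m)
  convert h2 using 2 with k
  by_cases hk : k = m
  · simp [hk]
  · have : m - k ≠ 0 := fun h => hk (sub_eq_zero.1 h).symm
    simp [hk, this]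

/-- All partial derivatives of order at most `s` are bounded by `C`. -/
def NB : ℕ → (ℝ × ℝ → ℂ) → ℝ → Prop
  | 0, F, C => ∀ z, ‖F z‖ ≤ C
  | s + 1, F, C => NB s F C ∧ NB s (dx F) C ∧ NB s (dy F) C

lemma NB.mono {s : ℕ} : ∀ {F : ℝ × ℝ → ℂ} {C D : ℝ}, NB s F C → C ≤ D → NB s F D := by
  induction s with
  | zero => exact fun h hCD z => (h z).trans hCD
  | succ s ih => exact fun h hCD => ⟨ih h.1 hCD, ih h.2.1 hCD, ih h.2.2 hCD⟩

lemma NB.zero {s : ℕ} : ∀ {F : ℝ × ℝ → ℂ} {C : ℝ}, NB s F C → ∀ z, ‖F z‖ ≤ C := by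
  induction s with
  | zero => exact fun h => h
  | succ s ih => exact fun h => ih h.1

lemma NB.le {s t : ℕ} (hst : s ≤ t) {F : ℝ × ℝ → ℂ} {C : ℝ} (h : NB t F C) : NB s F C := by
  induction hst with
  | refl => exact h
  | step _ ih => exact ih h.1

lemma SmPer.bdd {F : ℝ × ℝ → ℂ} (hF : SmPer F) : ∃ C, ∀ z, ‖F z‖ ≤ C := by
  obtain ⟨C, hC⟩ := (isCompact_Icc.prod isCompact_Icc : IsCompact
    (Icc (0:ℝ) (2 * Real.pi) ×ˢ Icc (0:ℝ) (2 * Real.pi))).exists_bound_of_continuousOn hF.cont.continuousOn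
  refine ⟨C, fun z => ?_⟩
  have hpx : ∀ y, Function.Periodic (fun x => F (x, y)) (2 * Real.pi) := fun y x => hF.px x y
  have hpy : ∀ x, Function.Periodic (fun y => F (x, y)) (2 * Real.pi) := fun x y => hF.py x y
  obtain ⟨x, hx, h1⟩ := (hpx z.2).exists_mem_Ico₀ (by positivity) z.1
  obtain ⟨y, hy, h2⟩ := (hpy x).exists_mem_Ico₀ (by positivity) z.2
  have : F z = F (x, y) := h1.trans h2
  rw [this]
  exact hC _ ⟨Ico_subset_Icc_self hx, Ico_subset_Icc_self hy⟩

lemma SmPer.NB {F : ℝ × ℝ → ℂ} (hF : SmPer F) (s : ℕ) : ∃ C, NB s F C := by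
  induction s generalizing F with
  | zero => exact hF.bdd
  | succ s ih =>
    obtain ⟨a, ha⟩ := ih hF
    obtain ⟨b, hb⟩ := ih hF.dx
    obtain ⟨c, hc⟩ := ih hF.dy
    exact ⟨max a (max b c), ha.mono (by simp), hb.mono (by simp), hc.mono (by simp)⟩

/-- A summable decay profile on `ℤ × ℤ`. -/
def prof (m : ℤ × ℤ) : ℝ := ((1 + (m.1:ℝ)^2)⁻¹) * ((1 + (m.2:ℝ)^2)⁻¹)

lemma prof_summable : Summable prof := by
  have h1 : Summable fun m : ℤ => (1 + (m:ℝ)^2)⁻¹ := by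
    have h := (Real.summable_one_div_int_pow (p := 2)).2 (by norm_num)
    refine Summable.of_norm_bounded_eventually h ?_
    rw [Filter.eventually_cofinite]
    refine (Set.finite_singleton (0:ℤ)).subset fun m hm => ?_
    by_contra h0
    apply hm
    have : 0 < (m:ℝ)^2 := by
      have : (m:ℝ) ≠ 0 := by exact_mod_cast h0
      positivity
    rw [Real.norm_of_nonneg (by positivity), one_div]
    gcongr; linarith
  exact h1.mul_of_nonneg h1 (fun m => by positivity) (fun m => by positivity)

/-- The constant in the comparison of the Wiener norm with the `C⁴` norm. -/
def c0 : ℝ := 4 * ∑' m, prof m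
lemma c0_nonneg : 0 ≤ c0 := mul_nonneg (by norm_num) (tsum_nonneg fun m => by unfold prof; positivity)

lemma cf_decay {F : ℝ × ℝ → ℂ} (hF : SmPer F) {C : ℝ} (h : NB 4 F C) (m : ℤ × ℤ) :
    ‖cf F m‖ ≤ 4 * C * prof m := by
  have n0 := cf_norm_le (F := F) (C := C) h.zero m
  have nx := cf_norm_le (F := dx (dx F)) (C := C) h.2.1.2.1.zero m
  have ny := cf_norm_le (F := dy (dy F)) (C := C) h.2.2.2.2.zero m
  have nxy := cf_norm_le (F := dy (dy (dx (dx F)))) (C := C) h.2.1.2.1.2.2.2.2.zero m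
  rw [cf_dx hF.dx, cf_dx hF] at nx
  rw [cf_dy hF.dy, cf_dy hF] at ny
  rw [cf_dy hF.dx.dx.dy, cf_dy hF.dx.dx, cf_dx hF.dx, cf_dx hF] at nxy
  simp only [norm_mul, Complex.norm_I, one_mul, Complex.norm_intCast] at nx ny nxy
  have nx' : (m.1:ℝ)^2 * ‖cf F m‖ ≤ C := by rw [← sq_abs]; linarith
  have ny' : (m.2:ℝ)^2 * ‖cf F m‖ ≤ C := by rw [← sq_abs]; linarith
  have nxy' : (m.1:ℝ)^2 * (m.2:ℝ)^2 * ‖cf F m‖ ≤ C := by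
    rw [← sq_abs (m.1:ℝ), ← sq_abs (m.2:ℝ)]; linarith
  rw [prof, ← mul_inv, ← div_eq_mul_inv, le_div_iff₀ (by positivity)]
  linarith

end PshAux

/-! ### Weighted Wiener norms -/

namespace PshAux

lemma uniq1 {f : ℝ → ℂ} (hf : Continuous f) (hp : Function.Periodic f (2 * Real.pi))
    (h : ∀ k : ℤ, ∫ x in Ioc 0 (2 * Real.pi), Complex.exp (Complex.I * (k * (x:ℂ))) * f x = 0) :
    ∀ x, f x = 0 := by
  have : Fact (0 < 2 * Real.pi) := ⟨by positivity⟩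
  let g : C(AddCircle (2 * Real.pi), ℂ) := ⟨hp.lift, continuous_coinduced_dom.2 hf⟩
  have hpi : (Real.pi : ℂ) ≠ 0 := by exact_mod_cast Real.pi_ne_zero
  have hg : fourierCoeff g = 0 := by
    funext k
    rw [fourierCoeff_eq_intervalIntegral _ _ 0, zero_add,
      intervalIntegral.integral_of_le (by positivity)]
    have := h (-k)
    rw [Pi.zero_apply]
    refine Eq.trans ?_ (smul_zero (1 / (2 * Real.pi)) : _ • (0 : ℂ) = 0)
    rw [← this]
    congr 1
    refine integral_congr_ae (Eventually.of_forall fun x => ?_)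
    simp only [fourier_coe_apply, smul_eq_mul]
    congr 2
    push_cast; field_simp
  intro x
  have h2 := has_pointwise_sum_fourier_series_of_summable (f := g) (by rw [hg]; exact summable_zero)
    (x : AddCircle (2 * Real.pi))
  rw [hg] at h2
  simp only [Pi.zero_apply, zero_smul] at h2
  exact (h2.unique hasSum_zero)

/-- A smooth doubly periodic function with vanishing Fourier coefficients vanishes: the
one-variable statement is applied in each variable in turn. -/
lemma uniq2 {F : ℝ × ℝ → ℂ} (hF : SmPer F) (h : ∀ m, cf F m = 0) (z) : F z = 0 := by
  have hpi : (Real.pi : ℂ) ≠ 0 := by exact_mod_cast Real.pi_ne_zero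
  have h1 : ∀ m, ∫ z in Q, ex m z * F z = 0 := by
    intro m
    have := h (-m)
    rw [cf, neg_neg] at this
    refine (mul_eq_zero.1 this).resolve_left ?_
    simp [Real.pi_ne_zero]
  have h2 : ∀ k : ℤ, ∀ y : ℝ,
      ∫ x in Ioc 0 (2 * Real.pi), Complex.exp (Complex.I * (k * (x:ℂ))) * F (x, y) = 0 := by
    intro k
    refine uniq1 (f := fun y => ∫ x in Ioc 0 (2 * Real.pi),
      Complex.exp (Complex.I * (k * (x:ℂ))) * F (x, y)) ?_ ?_ ?_
    · have : Continuous (fun y => ∫ x in (0)..(2 * Real.pi),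
          Complex.exp (Complex.I * (k * (x:ℂ))) * F (x, y)) := by
        refine intervalIntegral.continuous_parametric_intervalIntegral_of_continuous' ?_ _ _
        have := hF.cont
        fun_prop
      simpa only [intervalIntegral.integral_of_le (show (0:ℝ) ≤ 2 * Real.pi by positivity)] using this
    · intro y; simp only [hF.py]
    · intro l
      rw [← h1 (k, l), prod_split' (F := fun z => ex (k, l) z * F z)
        ((ex_cont _).mul hF.cont)]
      congr 1; funext y
      rw [← integral_const_mul]
      congr 1; funext x
      simp only [ex, ← mul_assoc, ← Complex.exp_add]
      congr 2; ring
  exact uniq1 (f := fun x => F (x, z.2)) (hF.cont.comp (by fun_prop)) (fun x => hF.px x z.2)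
    (fun k => h2 k z.2) z.1

lemma cf_Sm (s : ℕ) : ∀ {F : ℝ × ℝ → ℂ}, SmPer F → Sm s (cf F) := by
  induction s with
  | zero =>
    intro F hF
    obtain ⟨C, hC⟩ := hF.NB 4
    refine Summable.of_nonneg_of_le (fun m => by positivity) (fun m => ?_)
      (prof_summable.mul_left (4 * C))
    simpa using cf_decay hF hC m
  | succ s ih =>
    intro F hF
    have := ((ih hF).add (ih hF.dx)).add (ih hF.dy)
    refine this.congr fun m => ?_
    rw [cf_dx hF, cf_dy hF]
    simp only [norm_mul, Complex.norm_I, one_mul, Complex.norm_intCast, wt]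
    ring

/-- Fourier inversion for smooth doubly periodic functions. -/
lemma fs_cf {F : ℝ × ℝ → ℂ} (hF : SmPer F) : fs (cf F) = F := by
  have h1 := fs_smPer (c := cf F) fun s => cf_Sm s hF
  funext z
  have := uniq2 (h1.sub hF) (fun m => by
    rw [cf_sub h1.cont hF.cont, cf_fs (cf_Sm 0 hF).norm, sub_self]) z
  exact sub_eq_zero.1 this

/-- The weighted Wiener norm of order `s`. -/
def W (s : ℕ) (F : ℝ × ℝ → ℂ) : ℝ := ∑' m, wt m ^ s * ‖cf F m‖

lemma W_nonneg (s F) : 0 ≤ W s F := tsum_nonneg fun m => by have := wt_pos m; positivity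

lemma W_succ (s : ℕ) {F : ℝ × ℝ → ℂ} (hF : SmPer F) :
    W (s+1) F = W s F + W s (dx F) + W s (dy F) := by
  have h1 := cf_Sm s hF
  have h2 := cf_Sm s hF.dx
  have h3 := cf_Sm s hF.dy
  unfold W
  rw [← Summable.tsum_add h1 h2, ← Summable.tsum_add (h1.add h2) h3]
  congr 1; funext m
  rw [cf_dx hF, cf_dy hF]
  simp only [norm_mul, Complex.norm_I, one_mul, Complex.norm_intCast, wt]
  ring

lemma W_mono {s t : ℕ} (hst : s ≤ t) {F : ℝ × ℝ → ℂ} (hF : SmPer F) : W s F ≤ W t F :=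
  Summable.tsum_le_tsum (fun m => mul_le_mul_of_nonneg_right (pow_le_pow_right₀ (wt_ge m) hst)
    (norm_nonneg _)) (cf_Sm s hF) (cf_Sm t hF)

lemma W_of_le {s t : ℕ} {F G : ℝ × ℝ → ℂ} (hF : SmPer F) (hG : SmPer G) {C : ℝ}
    (h : ∀ m, wt m ^ s * ‖cf F m‖ ≤ C * (wt m ^ t * ‖cf G m‖)) : W s F ≤ C * W t G := by
  rw [W, W, ← tsum_mul_left]
  exact Summable.tsum_le_tsum h (cf_Sm s hF) ((cf_Sm t hG).mul_left C)

lemma W_add (s : ℕ) {F G : ℝ × ℝ → ℂ} (hF : SmPer F) (hG : SmPer G) :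
    W s (fun z => F z + G z) ≤ W s F + W s G := by
  unfold W
  rw [← Summable.tsum_add (cf_Sm s hF) (cf_Sm s hG)]
  refine Summable.tsum_le_tsum (fun m => ?_) (cf_Sm s (hF.add hG)) ((cf_Sm s hF).add (cf_Sm s hG))
  rw [cf_add hF.cont hG.cont, ← mul_add]
  exact mul_le_mul_of_nonneg_left (norm_add_le _ _) (pow_nonneg (wt_pos m).le _)

lemma W_const_mul (s : ℕ) (c : ℂ) (F : ℝ × ℝ → ℂ) : W s (fun z => c * F z) = ‖c‖ * W s F := by
  unfold W
  rw [← tsum_mul_left]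
  congr 1; funext m; rw [cf_const_mul, norm_mul]; ring

lemma W_sub (s : ℕ) {F G : ℝ × ℝ → ℂ} (hF : SmPer F) (hG : SmPer G) :
    W s (fun z => F z - G z) ≤ W s F + W s G := by
  have := W_add s hF (hG.const_mul (-1))
  rw [W_const_mul] at this
  simpa [sub_eq_add_neg] using this

lemma W_zero (s : ℕ) : W s (fun _ => 0) = 0 := by
  have := W_const_mul s 0 (fun _ => 0)
  simpa using this

lemma W_sum (s : ℕ) {ι : Type*} (t : Finset ι) {f : ι → ℝ × ℝ → ℂ} (h : ∀ i, SmPer (f i)) :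
    W s (fun z => ∑ i ∈ t, f i z) ≤ ∑ i ∈ t, W s (f i) := by
  induction t using Finset.induction_on with
  | empty => simp [W_zero]
  | insert i t hi ih =>
    simp only [Finset.sum_insert hi]
    exact (W_add s (h i) (SmPer.sum fun j _ => h j)).trans (by gcongr)

lemma norm_le_W {F : ℝ × ℝ → ℂ} (hF : SmPer F) (z) : ‖F z‖ ≤ W 0 F := by
  conv_lhs => rw [← fs_cf hF]
  simpa [W] using fs_norm_le (cf_Sm 0 hF).norm z

lemma norm_le_W' (s : ℕ) {F : ℝ × ℝ → ℂ} (hF : SmPer F) (z) : ‖F z‖ ≤ W s F :=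
  (norm_le_W hF z).trans (W_mono (Nat.zero_le s) hF)

lemma NB_W (s : ℕ) : ∀ {F : ℝ × ℝ → ℂ}, SmPer F → NB s F (W s F) := by
  induction s with
  | zero => exact fun hF => norm_le_W hF
  | succ s ih =>
    intro F hF
    rw [W_succ s hF]
    have := W_nonneg s F; have := W_nonneg s (dx F); have := W_nonneg s (dy F)
    exact ⟨(ih hF).mono (by linarith), (ih hF.dx).mono (by linarith), (ih hF.dy).mono (by linarith)⟩

lemma W0_le {F : ℝ × ℝ → ℂ} (hF : SmPer F) {C : ℝ} (h : NB 4 F C) : W 0 F ≤ c0 * C := by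
  have : W 0 F ≤ ∑' m, 4 * C * prof m := by
    refine Summable.tsum_le_tsum (fun m => ?_) (cf_Sm 0 hF) (prof_summable.mul_left (4 * C))
    simpa using cf_decay hF h m
  rw [tsum_mul_left] at this
  rw [c0]; linarith

lemma W_conj (s : ℕ) (F : ℝ × ℝ → ℂ) : W s (fun z => (starRingEnd ℂ) (F z)) = W s F := by
  unfold W
  rw [← (Equiv.neg (ℤ × ℤ)).tsum_eq]
  congr 1; funext m
  simp [cf_conj, wt_neg]

lemma W_re (s : ℕ) {F : ℝ × ℝ → ℂ} (hF : SmPer F) : W s (fun z => ((F z).re : ℂ)) ≤ W s F := by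
  have h : (fun z => ((F z).re : ℂ)) = fun z => (1/2 : ℂ) * (F z + (starRingEnd ℂ) (F z)) := by
    funext z; rw [Complex.add_conj]; push_cast; ring
  rw [h, W_const_mul]
  have := W_add s hF hF.conj
  rw [W_conj] at this
  simp; linarith

lemma conv_sum {a b : ℤ × ℤ → ℝ} (ha : Summable a) (hb : Summable b) (ha0 : ∀ m, 0 ≤ a m)
    (hb0 : ∀ m, 0 ≤ b m) :
    Summable (fun p : (ℤ × ℤ) × (ℤ × ℤ) => a p.2 * b (p.1 - p.2)) ∧
    ∑' p : (ℤ × ℤ) × (ℤ × ℤ), a p.2 * b (p.1 - p.2) = (∑' m, a m) * ∑' m, b m := by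
  let e : (ℤ × ℤ) × (ℤ × ℤ) ≃ (ℤ × ℤ) × (ℤ × ℤ) :=
    ⟨fun p => (p.2, p.1 - p.2), fun q => (q.1 + q.2, q.1), fun p => by simp, fun q => by simp⟩
  have h := ha.mul_of_nonneg hb ha0 hb0
  refine ⟨(e.summable_iff (f := fun q : (ℤ × ℤ) × (ℤ × ℤ) => a q.1 * b q.2)).2 h, ?_⟩
  rw [ha.tsum_mul_tsum hb h]
  exact e.tsum_eq (fun q : (ℤ × ℤ) × (ℤ × ℤ) => a q.1 * b q.2)

lemma cf_mul_le {F G : ℝ × ℝ → ℂ} (hF : SmPer F) (hG : SmPer G) (m : ℤ × ℤ) :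
    ‖cf (fun z => F z * G z) m‖ ≤ ∑' k, ‖cf F k‖ * ‖cf G (m - k)‖ := by
  have h := cf_tsum_mul (cf_Sm 0 hF).norm hG.cont m
  have e : (fun z => ∑' k, cf F k * ex k z * G z) = fun z => F z * G z := by
    funext z
    rw [tsum_mul_right]
    congr 1
    exact congrFun (fs_cf hF) z
  rw [e] at h
  rw [← h.tsum_eq]
  have hs := (conv_sum (cf_Sm 0 hF).norm (cf_Sm 0 hG).norm (fun _ => norm_nonneg _)
    (fun _ => norm_nonneg _)).1.prod_factor m
  refine (norm_tsum_le_tsum_norm ?_).trans (le_of_eq ?_)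
  · simpa using hs
  · simp

lemma W_mul (s : ℕ) {F G : ℝ × ℝ → ℂ} (hF : SmPer F) (hG : SmPer G) :
    W s (fun z => F z * G z) ≤ W s F * W s G := by
  have p := fun m => wt_pos m
  obtain ⟨h1, h2⟩ := conv_sum (cf_Sm s hF) (cf_Sm s hG) (fun m => by have := p m; positivity)
    (fun m => by have := p m; positivity)
  have h0 := (conv_sum (cf_Sm 0 hF).norm (cf_Sm 0 hG).norm (fun _ => norm_nonneg _)
    (fun _ => norm_nonneg _)).1
  rw [W, W, W, ← h2, h1.tsum_prod]
  refine Summable.tsum_le_tsum (fun m => ?_) (cf_Sm s (hF.mul hG)) h1.prod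
  refine (mul_le_mul_of_nonneg_left (cf_mul_le hF hG m) (pow_nonneg (p m).le _)).trans ?_
  rw [← tsum_mul_left]
  refine Summable.tsum_le_tsum (fun k => ?_) ((h0.prod_factor m).mul_left _) (h1.prod_factor m)
  have := pow_le_pow_left₀ (p m).le (wt_le_mul m k) s
  rw [mul_pow] at this
  have q : 0 ≤ ‖cf F k‖ * ‖cf G (m - k)‖ := by positivity
  calc _ ≤ wt k ^ s * wt (m - k) ^ s * (‖cf F k‖ * ‖cf G (m - k)‖) := mul_le_mul_of_nonneg_right this q
    _ = _ := by ring

/-- The constant `2` in front of `b ^ s` does not depend on `s`. This makes the coefficient of the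
top order norm in `W_mul_tame` independent of `s`. -/
lemma pow_add_tame (s : ℕ) : ∃ C : ℝ, 0 ≤ C ∧ ∀ a b : ℝ, 0 ≤ a → 0 ≤ b →
    (a + b) ^ s ≤ C * a ^ s + 2 * b ^ s := by
  obtain ⟨d, hd, hd2⟩ : ∃ d : ℝ, 0 < d ∧ (1 + d) ^ s ≤ 2 := by
    have : Tendsto (fun d : ℝ => (1 + d) ^ s) (𝓝[>] 0) (𝓝 ((1 + 0) ^ s)) :=
      ((by fun_prop : Continuous fun d : ℝ => (1 + d) ^ s).tendsto 0).mono_left nhdsWithin_le_nhds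
    have h2 := this.eventually (gt_mem_nhds (show ((1:ℝ) + 0) ^ s < 2 by norm_num))
    obtain ⟨d, h3, h4⟩ := (h2.and self_mem_nhdsWithin).exists
    exact ⟨d, h4, h3.le⟩
  refine ⟨(1 + 1 / d) ^ s, by positivity, fun a b ha hb => ?_⟩
  rcases le_total a (d * b) with h | h
  · calc (a + b) ^ s ≤ ((1 + d) * b) ^ s := by gcongr; linarith
      _ = (1 + d) ^ s * b ^ s := mul_pow _ _ _
      _ ≤ 2 * b ^ s := by gcongr
      _ ≤ _ := by linarith [show 0 ≤ (1 + 1 / d) ^ s * a ^ s by positivity]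
  · calc (a + b) ^ s ≤ ((1 + 1 / d) * a) ^ s := by
          gcongr
          have : b ≤ a / d := by rw [le_div_iff₀ hd]; linarith
          calc a + b ≤ a + a / d := by linarith
            _ = _ := by ring
      _ = (1 + 1/d) ^ s * a ^ s := mul_pow _ _ _
      _ ≤ _ := by linarith [show 0 ≤ 2 * b ^ s by positivity]

/-- Tame product estimate. -/
lemma W_mul_tame (s : ℕ) : ∃ C : ℝ, 0 ≤ C ∧ ∀ F G : ℝ × ℝ → ℂ, SmPer F → SmPer G →
    W s (fun z => F z * G z) ≤ C * (W s F * W 0 G) + 2 * (W 0 F * W s G) := by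
  obtain ⟨C, hC, hp⟩ := pow_add_tame s
  refine ⟨C, hC, fun F G hF hG => ?_⟩
  have p := fun m => wt_pos m
  have s1 : Summable fun m => ‖cf F m‖ := (cf_Sm 0 hF).norm
  have s2 : Summable fun m => ‖cf G m‖ := (cf_Sm 0 hG).norm
  obtain ⟨h1, h2⟩ := conv_sum (cf_Sm s hF) s2 (fun m => by have := p m; positivity)
    (fun m => norm_nonneg _)
  obtain ⟨h3, h4⟩ := conv_sum s1 (cf_Sm s hG) (fun m => norm_nonneg _)
    (fun m => by have := p m; positivity)
  have h0 := (conv_sum s1 s2 (fun _ => norm_nonneg _) (fun _ => norm_nonneg _)).1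
  have e0 : ∀ F, W 0 F = ∑' m, ‖cf F m‖ := fun F => by simp [W]
  rw [e0, e0, W, W, W, ← h2, ← h4, ← tsum_mul_left, ← tsum_mul_left,
    ← Summable.tsum_add (h1.mul_left C) (h3.mul_left 2), ((h1.mul_left C).add (h3.mul_left 2)).tsum_prod]
  refine Summable.tsum_le_tsum (fun m => ?_) (cf_Sm s (hF.mul hG)) ((h1.mul_left C).add (h3.mul_left 2)).prod
  refine (mul_le_mul_of_nonneg_left (cf_mul_le hF hG m) (pow_nonneg (p m).le _)).trans ?_
  rw [← tsum_mul_left]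
  refine Summable.tsum_le_tsum (fun k => ?_) ((h0.prod_factor m).mul_left _)
    (((h1.mul_left C).add (h3.mul_left 2)).prod_factor m)
  have := (pow_le_pow_left₀ (p m).le (wt_le_add m k) s).trans
    (hp (wt k) (wt (m - k)) (p k).le (p _).le)
  have q : 0 ≤ ‖cf F k‖ * ‖cf G (m - k)‖ := by positivity
  calc _ ≤ (C * wt k ^ s + 2 * wt (m - k) ^ s) * (‖cf F k‖ * ‖cf G (m - k)‖) :=
        mul_le_mul_of_nonneg_right this q
    _ = _ := by ring

end PshAux

/-! ### Composition with smooth functions -/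

namespace PshAux

section
variable {F G : ℝ × ℝ → ℂ}

lemma dx_re (hF : SmPer F) : dx (fun z => ((F z).re : ℂ)) = fun z => ((dx F z).re : ℂ) := by
  funext z
  have h := (Complex.ofRealCLM.hasFDerivAt.comp z
    (Complex.reCLM.hasFDerivAt.comp z (hF.diff z).hasFDerivAt))
  exact congrArg (fun L : ℝ × ℝ →L[ℝ] ℂ => L (1, 0)) h.fderiv
lemma dy_re (hF : SmPer F) : dy (fun z => ((F z).re : ℂ)) = fun z => ((dy F z).re : ℂ) := by
  funext z
  have h := (Complex.ofRealCLM.hasFDerivAt.comp z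
    (Complex.reCLM.hasFDerivAt.comp z (hF.diff z).hasFDerivAt))
  exact congrArg (fun L : ℝ × ℝ →L[ℝ] ℂ => L (0, 1)) h.fderiv

lemma NB.nonneg {s : ℕ} {C : ℝ} (h : NB s F C) : 0 ≤ C := (norm_nonneg _).trans (h.zero 0)

lemma NB.re {s : ℕ} : ∀ {F : ℝ × ℝ → ℂ} {C : ℝ}, SmPer F → NB s F C →
    NB s (fun z => ((F z).re : ℂ)) C := by
  induction s with
  | zero =>
    intro F C _ h z
    rw [Complex.norm_real]
    exact (Complex.abs_re_le_norm _).trans (h z)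
  | succ s ih =>
    intro F C hF h
    exact ⟨ih hF h.1, dx_re hF ▸ ih hF.dx h.2.1, dy_re hF ▸ ih hF.dy h.2.2⟩

lemma NB.add {s : ℕ} : ∀ {F G : ℝ × ℝ → ℂ} {C D : ℝ}, SmPer F → SmPer G → NB s F C → NB s G D →
    NB s (fun z => F z + G z) (C + D) := by
  induction s with
  | zero => exact fun _ _ h1 h2 z => (norm_add_le _ _).trans (add_le_add (h1 z) (h2 z))
  | succ s ih =>
    intro F G C D hF hG h1 h2
    exact ⟨ih hF hG h1.1 h2.1, dx_add hF hG ▸ ih hF.dx hG.dx h1.2.1 h2.2.1,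
      dy_add hF hG ▸ ih hF.dy hG.dy h1.2.2 h2.2.2⟩

lemma NB.const_zero (s : ℕ) : NB s (fun _ => 0) 0 := by
  have hx : dx (fun _ => 0) = fun _ => 0 := by funext z; simp [dx]
  have hy : dy (fun _ => 0) = fun _ => 0 := by funext z; simp [dy]
  induction s with
  | zero => intro z; simp
  | succ s ih => exact ⟨ih, by rw [hx]; exact ih, by rw [hy]; exact ih⟩

lemma NB.sum {s : ℕ} {ι : Type*} (t : Finset ι) {f : ι → ℝ × ℝ → ℂ} {C : ι → ℝ}
    (h : ∀ i, SmPer (f i)) (h2 : ∀ i, NB s (f i) (C i)) :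
    NB s (fun z => ∑ i ∈ t, f i z) (∑ i ∈ t, C i) := by
  induction t using Finset.induction_on with
  | empty => simpa using NB.const_zero s
  | insert i t hi ih =>
    simp only [Finset.sum_insert hi]
    exact (h2 i).add (h i) (SmPer.sum fun j _ => h j) ih

lemma NB.mul {s : ℕ} : ∀ {F G : ℝ × ℝ → ℂ} {C D : ℝ}, SmPer F → SmPer G → NB s F C → NB s G D →
    NB s (fun z => F z * G z) (2 ^ s * (C * D)) := by
  induction s with
  | zero =>
    intro F G C D _ _ h1 h2 z
    have : 0 ≤ C := h1.nonneg
    rw [norm_mul, pow_zero, one_mul]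
    exact mul_le_mul (h1 z) (h2 z) (norm_nonneg _) this
  | succ s ih =>
    intro F G C D hF hG h1 h2
    have p : 0 ≤ 2 ^ s * (C * D) := mul_nonneg (by positivity) (mul_nonneg h1.nonneg h2.nonneg)
    have e : (2:ℝ) ^ (s+1) * (C * D) = 2 ^ s * (C * D) + 2 ^ s * (C * D) := by ring
    rw [e]
    refine ⟨(ih hF hG h1.1 h2.1).mono (by linarith), ?_, ?_⟩
    · rw [dx_mul hF hG]
      exact (ih hF hG.dx h1.1 h2.2.1).add (hF.mul hG.dx) (hF.dx.mul hG) (ih hF.dx hG h1.2.1 h2.1)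
    · rw [dy_mul hF hG]
      exact (ih hF hG.dy h1.1 h2.2.2).add (hF.mul hG.dy) (hF.dy.mul hG) (ih hF.dy hG h1.2.2 h2.1)
end

section comp
variable {ι : Type} [Fintype ι]

/-- Composition of a smooth function on `ℝ^ι` with the real parts of a family of functions. -/
def gc (g : (ι → ℝ) → ℂ) (θ : ι → ℝ × ℝ → ℂ) (z : ℝ × ℝ) : ℂ := g fun k => (θ k z).re

/-- Partial derivative. -/
def pd (g : (ι → ℝ) → ℂ) (k : ι) (a : ι → ℝ) : ℂ := fderiv ℝ g a (Pi.single k 1)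

lemma pd_smooth {g : (ι → ℝ) → ℂ} (hg : ContDiff ℝ (⊤ : ℕ∞) g) (k : ι) :
    ContDiff ℝ (⊤ : ℕ∞) (pd g k) :=
  (hg.fderiv_right (m := (⊤ : ℕ∞)) (by simp)).clm_apply contDiff_const

lemma fderiv_eq_pd {g : (ι → ℝ) → ℂ} (a v : ι → ℝ) :
    fderiv ℝ g a v = ∑ k, pd g k a * (v k : ℂ) := by
  conv_lhs => rw [pi_eq_sum_univ' v]
  rw [map_sum]
  refine Finset.sum_congr rfl fun k _ => ?_
  rw [map_smul, pd, Complex.real_smul, mul_comm]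

lemma gc_smPer {g : (ι → ℝ) → ℂ} (hg : ContDiff ℝ (⊤ : ℕ∞) g) {θ : ι → ℝ × ℝ → ℂ}
    (hθ : ∀ k, SmPer (θ k)) : SmPer (gc g θ) :=
  ⟨hg.comp (contDiff_pi.2 fun k => Complex.reCLM.contDiff.comp (hθ k).smooth),
    fun x y => by simp [gc, (hθ _).px], fun x y => by simp [gc, (hθ _).py]⟩

lemma gc_fderiv {g : (ι → ℝ) → ℂ} (hg : ContDiff ℝ (⊤ : ℕ∞) g) {θ : ι → ℝ × ℝ → ℂ}
    (hθ : ∀ k, SmPer (θ k)) (z v : ℝ × ℝ) :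
    fderiv ℝ (gc g θ) z v = ∑ k, gc (pd g k) θ z * ((fderiv ℝ (θ k) z v).re : ℂ) := by
  have h1 : HasFDerivAt (fun z => fun k => (θ k z).re)
      (ContinuousLinearMap.pi fun k => Complex.reCLM.comp (fderiv ℝ (θ k) z)) z :=
    hasFDerivAt_pi.2 fun k => Complex.reCLM.hasFDerivAt.comp z ((hθ k).diff z).hasFDerivAt
  have h2 := ((hg.differentiable (by simp)) (fun k => (θ k z).re)).hasFDerivAt.comp z h1
  have h3 : fderiv ℝ (gc g θ) z = _ := h2.fderiv
  rw [h3, ContinuousLinearMap.comp_apply, fderiv_eq_pd]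
  rfl

lemma gc_dx {g : (ι → ℝ) → ℂ} (hg : ContDiff ℝ (⊤ : ℕ∞) g) {θ : ι → ℝ × ℝ → ℂ}
    (hθ : ∀ k, SmPer (θ k)) :
    dx (gc g θ) = fun z => ∑ k, gc (pd g k) θ z * ((dx (θ k) z).re : ℂ) :=
  funext fun z => gc_fderiv hg hθ z _
lemma gc_dy {g : (ι → ℝ) → ℂ} (hg : ContDiff ℝ (⊤ : ℕ∞) g) {θ : ι → ℝ × ℝ → ℂ}
    (hθ : ∀ k, SmPer (θ k)) :
    dy (gc g θ) = fun z => ∑ k, gc (pd g k) θ z * ((dy (θ k) z).re : ℂ) :=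
  funext fun z => gc_fderiv hg hθ z _

lemma NB_comp (s : ℕ) (R : ℝ) : ∀ (g : (ι → ℝ) → ℂ), ContDiff ℝ (⊤ : ℕ∞) g →
    ∃ C, ∀ θ : ι → ℝ × ℝ → ℂ, (∀ k, SmPer (θ k)) → (∀ k, NB s (θ k) R) → NB s (gc g θ) C := by
  induction s with
  | zero =>
    intro g hg
    obtain ⟨C, hC⟩ := (isCompact_univ_pi (fun _ : ι => isCompact_Icc (a := -R) (b := R))).exists_bound_of_continuousOn
      hg.continuous.continuousOn
    refine ⟨C, fun θ _ h z => hC _ fun k _ => ?_⟩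
    exact abs_le.1 ((Complex.abs_re_le_norm _).trans (h k z))
  | succ s ih =>
    intro g hg
    obtain ⟨C1, h1⟩ := ih g hg
    choose C2 h2 using fun k => ih (pd g k) (pd_smooth hg k)
    refine ⟨max C1 (∑ k, 2 ^ s * (C2 k * R)), fun θ hθ h => ⟨(h1 θ hθ fun k => (h k).1).mono (by simp), ?_, ?_⟩⟩
    · rw [gc_dx hg hθ]
      refine (NB.sum Finset.univ (fun k => (gc_smPer (pd_smooth hg k) hθ).mul (hθ k).dx.re) fun k =>
        (h2 k θ hθ fun k => (h k).1).mul (gc_smPer (pd_smooth hg k) hθ) (hθ k).dx.re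
          ((h k).2.1.re (hθ k).dx)).mono (by simp)
    · rw [gc_dy hg hθ]
      refine (NB.sum Finset.univ (fun k => (gc_smPer (pd_smooth hg k) hθ).mul (hθ k).dy.re) fun k =>
        (h2 k θ hθ fun k => (h k).1).mul (gc_smPer (pd_smooth hg k) hθ) (hθ k).dy.re
          ((h k).2.2.re (hθ k).dy)).mono (by simp)

/-- Composition estimate in the Wiener scale. -/
lemma W_comp (s : ℕ) (R : ℝ) : ∀ (g : (ι → ℝ) → ℂ), ContDiff ℝ (⊤ : ℕ∞) g →
    ∃ C, 0 ≤ C ∧ ∀ θ : ι → ℝ × ℝ → ℂ, (∀ k, SmPer (θ k)) → (∀ k, W (max s 4) (θ k) ≤ R) →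
      W s (gc g θ) ≤ C := by
  induction s with
  | zero =>
    intro g hg
    obtain ⟨C, hC⟩ := NB_comp 4 R g hg
    refine ⟨max (c0 * C) 0, by simp, fun θ hθ h => le_trans ?_ (le_max_left _ _)⟩
    refine W0_le (gc_smPer hg hθ) (hC θ hθ fun k => (NB_W 4 (hθ k)).mono ?_)
    simpa using h k
  | succ s ih =>
    intro g hg
    obtain ⟨C1, p1, h1⟩ := ih g hg
    choose C2 p2 h2 using fun k => ih (pd g k) (pd_smooth hg k)
    refine ⟨C1 + (∑ k, C2 k * |R|) + ∑ k, C2 k * |R|, by have := fun k => mul_nonneg (p2 k) (abs_nonneg R); have := Finset.sum_nonneg (s := Finset.univ) fun k _ => this k; linarith, fun θ hθ h => ?_⟩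
    have hm : ∀ k, W (max s 4) (θ k) ≤ R := fun k =>
      (W_mono (max_le_max (Nat.le_succ s) le_rfl) (hθ k)).trans (h k)
    have hd : ∀ k, W (s + 1) (θ k) ≤ |R| := fun k =>
      (W_mono (le_max_left _ _) (hθ k)).trans ((h k).trans (le_abs_self R))
    rw [W_succ s (gc_smPer hg hθ)]
    refine add_le_add (add_le_add (h1 θ hθ hm) ?_) ?_
    · rw [gc_dx hg hθ]
      refine (W_sum s _ fun k => (gc_smPer (pd_smooth hg k) hθ).mul (hθ k).dx.re).trans
        (Finset.sum_le_sum fun k _ => ?_)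
      refine (W_mul s (gc_smPer (pd_smooth hg k) hθ) (hθ k).dx.re).trans
        (mul_le_mul (h2 k θ hθ hm) ?_ (W_nonneg _ _) (p2 k))
      refine (W_re s (hθ k).dx).trans (le_trans ?_ (hd k))
      rw [W_succ s (hθ k)]; linarith [W_nonneg s (θ k), W_nonneg s (dy (θ k))]
    · rw [gc_dy hg hθ]
      refine (W_sum s _ fun k => (gc_smPer (pd_smooth hg k) hθ).mul (hθ k).dy.re).trans
        (Finset.sum_le_sum fun k _ => ?_)
      refine (W_mul s (gc_smPer (pd_smooth hg k) hθ) (hθ k).dy.re).trans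
        (mul_le_mul (h2 k θ hθ hm) ?_ (W_nonneg _ _) (p2 k))
      refine (W_re s (hθ k).dy).trans (le_trans ?_ (hd k))
      rw [W_succ s (hθ k)]; linarith [W_nonneg s (θ k), W_nonneg s (dx (θ k))]

end comp

/-- Smooth dependence on parameters of an integral over `[0, 1]`. -/
lemma contDiff_int01 {P : Type} [NormedAddCommGroup P] [NormedSpace ℝ P] {G : P × ℝ → ℂ}
    (hG : ContDiff ℝ (⊤ : ℕ∞) G) : ContDiff ℝ (⊤ : ℕ∞) (fun p => ∫ t in (0:ℝ)..1, G (p, t)) := by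
  let χ : ContDiffBump (0:ℝ) := ⟨1, 2, one_pos, one_lt_two⟩
  let f : ℝ → ℝ := (Ioc (0:ℝ) 1).indicator fun _ => 1
  have hf : LocallyIntegrable f volume :=
    ((integrable_indicator_iff measurableSet_Ioc).2 (by simp)).locallyIntegrable
  have key := contDiffOn_convolution_right_with_param_comp (n := (⊤ : ℕ∞)) (μ := (volume : Measure ℝ))
    (ContinuousLinearMap.lsmul ℝ ℝ : ℝ →L[ℝ] ℂ →L[ℝ] ℂ) (s := (univ : Set P))
    (v := fun _ => (0:ℝ)) contDiffOn_const (f := f) (g := fun p s => χ s • G (p, -s))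
    (k := closedBall 0 2) isOpen_univ (isCompact_closedBall _ _)
    (fun p x _ hx => by
      have : χ x = 0 := χ.zero_of_le_dist (by
        simp only [mem_closedBall, not_le] at hx; exact hx.le)
      simp [this]) hf
    (by
      refine ContDiff.contDiffOn ?_
      exact (χ.contDiff.comp contDiff_snd).smul
        (hG.comp (contDiff_fst.prodMk contDiff_snd.neg)))
  rw [contDiffOn_univ] at key
  convert key using 1
  funext p
  rw [convolution_def, intervalIntegral.integral_of_le zero_le_one, ← integral_indicator measurableSet_Ioc]
  congr 1; funext t
  by_cases ht : t ∈ Ioc (0:ℝ) 1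
  · have : χ (0 - t) = 1 := χ.one_of_mem_closedBall (by
      simp only [zero_sub, mem_closedBall, dist_zero_right, norm_neg, Real.norm_eq_abs]
      rw [abs_of_pos ht.1]; exact ht.2)
    rw [indicator_of_mem ht, this]
    simp [f, ht]
  · rw [indicator_of_notMem ht]
    simp [f, ht]

/-- Hadamard's lemma. -/
lemma hadamard {ι : Type} [Fintype ι] {g : (ι → ℝ) → ℂ} (hg : ContDiff ℝ (⊤ : ℕ∞) g) :
    ∃ h : ι → (ι ⊕ ι → ℝ) → ℂ, (∀ k, ContDiff ℝ (⊤ : ℕ∞) (h k)) ∧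
      ∀ a b : ι → ℝ, g a - g b = ∑ k, h k (Sum.elim a b) * ((a k - b k : ℝ) : ℂ) := by
  have sm : ∀ k, ContDiff ℝ (⊤ : ℕ∞) (fun q : (ι ⊕ ι → ℝ) × ℝ => pd g k
    (fun i => q.1 (Sum.inr i) + q.2 * (q.1 (Sum.inl i) - q.1 (Sum.inr i)))) := fun k => by
      refine (pd_smooth hg k).comp (contDiff_pi.2 fun i => ?_)
      have := fun i => (contDiff_apply ℝ ℝ (i : ι ⊕ ι) (n := ((⊤ : ℕ∞) : WithTop ℕ∞))).comp (contDiff_fst (E := ι ⊕ ι → ℝ) (F := ℝ) (𝕜 := ℝ))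
      exact (this (Sum.inr i)).add (contDiff_snd.mul ((this (Sum.inl i)).sub (this (Sum.inr i))))
  refine ⟨fun k q => ∫ t in (0:ℝ)..1, pd g k (fun i => q (Sum.inr i) + t * (q (Sum.inl i) - q (Sum.inr i))),
    fun k => contDiff_int01 (sm k), fun a b => ?_⟩
  simp only [Sum.elim_inl, Sum.elim_inr]
  have hd : ∀ t : ℝ, HasDerivAt (fun t : ℝ => g (fun i => b i + t * (a i - b i)))
      (∑ k, pd g k (fun i => b i + t * (a i - b i)) * ((a k - b k : ℝ) : ℂ)) t := by
    intro t
    have h1 : HasDerivAt (fun t : ℝ => (fun i => b i + t * (a i - b i))) (fun i => a i - b i) t := by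
      refine hasDerivAt_pi.2 fun i => ?_
      simpa using ((hasDerivAt_id t).mul_const (a i - b i)).const_add (b i)
    have h2 := ((hg.differentiable (by simp)) (fun i => b i + t * (a i - b i))).hasFDerivAt.comp_hasDerivAt t h1
    rw [fderiv_eq_pd] at h2
    exact h2
  have cont : ∀ k, Continuous fun t : ℝ => pd g k (fun i => b i + t * (a i - b i)) := fun k =>
    (pd_smooth hg k).continuous.comp (by fun_prop)
  have := intervalIntegral.integral_eq_sub_of_hasDerivAt (a := 0) (b := 1) (fun t _ => hd t)
    (Continuous.intervalIntegrable (continuous_finsetSum _ fun k _ => (cont k).mul continuous_const) _ _)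
  simp only [one_mul, zero_mul, add_zero, add_sub_cancel] at this
  have ii : ∀ k ∈ Finset.univ, IntervalIntegrable
      (fun t : ℝ => pd g k (fun i => b i + t * (a i - b i)) * ((a k - b k : ℝ) : ℂ)) volume 0 1 :=
    fun k _ => ((cont k).mul continuous_const).intervalIntegrable _ _
  rw [← this, intervalIntegral.integral_finsetSum ii]
  simp [intervalIntegral.integral_mul_const]

/-- Lipschitz estimate for composition. -/
lemma W_lip {ι : Type} [Fintype ι] (s : ℕ) (R : ℝ) (g : (ι → ℝ) → ℂ) (hg : ContDiff ℝ (⊤ : ℕ∞) g) :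
    ∃ C, 0 ≤ C ∧ ∀ θ φ : ι → ℝ × ℝ → ℂ, (∀ k, SmPer (θ k)) → (∀ k, SmPer (φ k)) →
      (∀ k, W (max s 4) (θ k) ≤ R) → (∀ k, W (max s 4) (φ k) ≤ R) →
      W s (fun z => gc g θ z - gc g φ z) ≤ C * ∑ k, W s (fun z => θ k z - φ k z) := by
  obtain ⟨h, hs, hh⟩ := hadamard hg
  choose C p hC using fun k => W_comp s R (h k) (hs k)
  refine ⟨∑ k, C k, Finset.sum_nonneg fun k _ => p k, fun θ φ hθ hφ h1 h2 => ?_⟩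
  have e : (fun z => gc g θ z - gc g φ z) = fun z => ∑ k, gc (h k) (Sum.elim θ φ) z *
      (((θ k z - φ k z).re : ℝ) : ℂ) := by
    funext z
    simp only [gc, hh, Complex.sub_re]
    refine Finset.sum_congr rfl fun k _ => ?_
    congr 2
    funext i; rcases i with i | i <;> rfl
  have hs2 : ∀ i, SmPer (Sum.elim θ φ i) := by rintro (i | i); exacts [hθ i, hφ i]
  have hb : ∀ i, W (max s 4) (Sum.elim θ φ i) ≤ R := by rintro (i | i); exacts [h1 i, h2 i]
  rw [e]
  refine (W_sum s _ fun k => (gc_smPer (hs k) hs2).mul ((hθ k).sub (hφ k)).re).trans ?_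
  rw [Finset.sum_mul]
  refine Finset.sum_le_sum fun k _ => (W_mul s (gc_smPer (hs k) hs2) ((hθ k).sub (hφ k)).re).trans ?_
  refine mul_le_mul (hC k _ hs2 hb) ?_ (W_nonneg _ _) (p k)
  exact (W_re s ((hθ k).sub (hφ k))).trans
    (Finset.single_le_sum (f := fun k => W s (fun z => θ k z - φ k z)) (fun k _ => W_nonneg _ _) (Finset.mem_univ k))

end PshAux

/-! ### The constant coefficient Cauchy-Riemann equation on the torus -/

namespace PshAux

/-- A smooth `2π`-periodic function which is the identity on `[-1,1]`. -/
lemma exists_sper : ∃ s : ℝ → ℝ, ContDiff ℝ (⊤ : ℕ∞) s ∧ (∀ x, s (x + 2 * Real.pi) = s x) ∧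
    ∀ x, |x| ≤ 1 → s x = x := by
  have h1 : Real.sin 1 < 1 := by
    have := Real.sin_lt (x := 1) one_pos; exact this
  have h0 : 0 < Real.sin 1 := Real.sin_pos_of_pos_of_lt_pi one_pos (by linarith [Real.pi_gt_three])
  let b : ContDiffBump (0:ℝ) := ⟨Real.sin 1, (1 + Real.sin 1) / 2, h0, by linarith⟩
  have hb : ContDiff ℝ (⊤ : ℕ∞) (fun t => b t * Real.arcsin t) := by
    rw [contDiff_iff_contDiffAt]
    intro t
    by_cases ht : |t| < 1
    · rw [abs_lt] at ht
      exact b.contDiffAt.mul (Real.contDiffAt_arcsin (by linarith [ht.1]) (by linarith [ht.2]))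
    · have hz : (fun t => b t * Real.arcsin t) =ᶠ[𝓝 t] fun _ => 0 := by
        have : {t : ℝ | (1 + Real.sin 1) / 2 < |t|} ∈ 𝓝 t :=
          (isOpen_lt continuous_const continuous_abs).mem_nhds (by
            simp only [mem_ofPred_eq]; linarith [not_lt.1 ht])
        filter_upwards [this] with y hy
        have : b y = 0 := b.zero_of_le_dist (by simpa [Real.dist_eq] using (le_of_lt hy))
        simp [this]
      exact contDiffAt_const.congr_of_eventuallyEq hz
  refine ⟨fun x => b (Real.sin x) * Real.arcsin (Real.sin x), hb.comp Real.contDiff_sin,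
    fun x => by simp [Real.sin_add_two_pi], fun x hx => ?_⟩
  have hpi := Real.pi_gt_three
  rw [abs_le] at hx
  have h2 : b (Real.sin x) = 1 := b.one_of_mem_closedBall (by
    simp only [mem_closedBall, Real.dist_eq, sub_zero]
    rw [abs_le]
    constructor
    · show -Real.sin 1 ≤ _
      rw [← Real.sin_neg]; exact Real.sin_le_sin_of_le_of_le_pi_div_two (by linarith) (by linarith) hx.1
    · exact Real.sin_le_sin_of_le_of_le_pi_div_two (by linarith) (by linarith) hx.2)
  simp only [h2, one_mul]
  exact Real.arcsin_sin (by linarith) (by linarith)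

/-- A fixed smooth `2π`-periodic function equal to the identity on `[-1, 1]`. -/
def sper : ℝ → ℝ := exists_sper.choose
lemma sper_smooth : ContDiff ℝ (⊤ : ℕ∞) sper := exists_sper.choose_spec.1
lemma sper_per (x) : sper (x + 2 * Real.pi) = sper x := exists_sper.choose_spec.2.1 x
lemma sper_id {x} (h : |x| ≤ 1) : sper x = x := exists_sper.choose_spec.2.2 x h

/-- Periodic substitute for the coordinate `x`, exact for `|x| ≤ 1`. -/
def sx (z : ℝ × ℝ) : ℂ := (sper z.1 : ℂ)
/-- Periodic substitute for the coordinate `y`, exact for `|y| ≤ 1`. -/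
def sy (z : ℝ × ℝ) : ℂ := (sper z.2 : ℂ)
lemma sx_smPer : SmPer sx := ⟨Complex.ofRealCLM.contDiff.comp (sper_smooth.comp contDiff_fst),
  fun x y => by simp [sx, sper_per], fun x y => by simp [sx]⟩
lemma sy_smPer : SmPer sy := ⟨Complex.ofRealCLM.contDiff.comp (sper_smooth.comp contDiff_snd),
  fun x y => by simp [sy], fun x y => by simp [sy, sper_per]⟩

lemma sx_fderiv {z : ℝ × ℝ} (h : |z.1| < 1) :
    fderiv ℝ sx z = Complex.ofRealCLM.comp (ContinuousLinearMap.fst ℝ ℝ ℝ) := by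
  have : sx =ᶠ[𝓝 z] fun z => ((z.1 : ℝ) : ℂ) := by
    have : {z : ℝ × ℝ | |z.1| < 1} ∈ 𝓝 z :=
      (isOpen_lt (continuous_abs.comp continuous_fst) continuous_const).mem_nhds h
    filter_upwards [this] with w hw
    rw [sx, sper_id (le_of_lt hw)]
  rw [this.fderiv_eq]
  exact (Complex.ofRealCLM.comp (ContinuousLinearMap.fst ℝ ℝ ℝ)).fderiv
lemma sy_fderiv {z : ℝ × ℝ} (h : |z.2| < 1) :
    fderiv ℝ sy z = Complex.ofRealCLM.comp (ContinuousLinearMap.snd ℝ ℝ ℝ) := by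
  have : sy =ᶠ[𝓝 z] fun z => ((z.2 : ℝ) : ℂ) := by
    have : {z : ℝ × ℝ | |z.2| < 1} ∈ 𝓝 z :=
      (isOpen_lt (continuous_abs.comp continuous_snd) continuous_const).mem_nhds h
    filter_upwards [this] with w hw
    rw [sy, sper_id (le_of_lt hw)]
  rw [this.fderiv_eq]
  exact (Complex.ofRealCLM.comp (ContinuousLinearMap.snd ℝ ℝ ℝ)).fderiv

/-- Data of the perturbed Cauchy-Riemann equation
`ω_x + J₀ ω_y = a(r Re ω) ω_y` with `ω(0) = 0`, `ω_x(0) ≈ v`. The matrix `jm` of `J₀` squares to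
`-1`, `v` is the prescribed direction, and the perturbation `a` vanishes at the origin. -/
structure Dat (ι : Type) [Fintype ι] where
  jm : ι → ι → ℝ
  hj : ∀ k i, ∑ l, jm k l * jm l i = if k = i then -1 else 0
  v : ι → ℝ
  a : ι → ι → (ι → ℝ) → ℂ
  ha : ∀ k l, ContDiff ℝ (⊤ : ℕ∞) (a k l)
  ha0 : ∀ k l, a k l 0 = 0

namespace Dat
variable {ι : Type} [Fintype ι] (D : Dat ι)

/-- Fourier coefficients of the solution of `f_x + J₀ f_y = H - H₀`. -/
def fcoef (H : ι → ℝ × ℝ → ℂ) (k : ι) (m : ℤ × ℤ) : ℂ :=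
  -Complex.I * (m.1 * cf (H k) m - m.2 * ∑ l, (D.jm k l : ℂ) * cf (H l) m) /
    ((m.1 : ℂ)^2 + (m.2 : ℂ)^2)

/-- The mean zero periodic solution of `f_x + J₀ f_y = H - H₀`, where `H₀` is the mean of `H`. -/
def f (H : ι → ℝ × ℝ → ℂ) (k : ι) : ℝ × ℝ → ℂ := fs (D.fcoef H k)

/-- The entrywise `ℓ¹` norm of the matrix `J₀`. -/
def Jn : ℝ := ∑ k, ∑ l, |D.jm k l|
lemma Jn_nonneg : 0 ≤ D.Jn := Finset.sum_nonneg fun _ _ => Finset.sum_nonneg fun _ _ => abs_nonneg _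
lemma jm_row (k : ι) : ∑ l, |D.jm k l| ≤ D.Jn :=
  Finset.single_le_sum (f := fun k => ∑ l, |D.jm k l|)
    (fun _ _ => Finset.sum_nonneg fun _ _ => abs_nonneg _) (Finset.mem_univ k)

lemma int_sq_ge (a : ℤ) : |(a:ℝ)| ≤ (a:ℝ)^2 := by
  have : |a| ≤ a^2 := by
    rcases eq_or_ne a 0 with h | h
    · simp [h]
    · rw [← sq_abs]; nlinarith [Int.one_le_abs h]
  exact_mod_cast this

lemma fcoef_le (H : ι → ℝ × ℝ → ℂ) (k : ι) (m : ℤ × ℤ) :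
    wt m * ‖D.fcoef H k m‖ ≤ 3 * (‖cf (H k) m‖ + ∑ l, |D.jm k l| * ‖cf (H l) m‖) := by
  set P := ∑ l, |D.jm k l| * ‖cf (H l) m‖
  have hP : 0 ≤ P := Finset.sum_nonneg fun l _ => by positivity
  rcases eq_or_ne m 0 with rfl | hm
  · simp [fcoef]; positivity
  have hn : 0 < (m.1:ℝ)^2 + (m.2:ℝ)^2 := by
    rcases m with ⟨a, b⟩
    by_contra h
    have h' : (a:ℝ)^2 + (b:ℝ)^2 ≤ 0 := not_lt.1 h
    have ha : (a:ℝ) = 0 := by nlinarith [sq_nonneg (a:ℝ), sq_nonneg (b:ℝ)]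
    have hb : (b:ℝ) = 0 := by nlinarith [sq_nonneg (a:ℝ), sq_nonneg (b:ℝ)]
    exact hm (by ext <;> simp <;> [exact_mod_cast ha; exact_mod_cast hb])
  have hden : ‖((m.1 : ℂ)^2 + (m.2 : ℂ)^2)‖ = (m.1:ℝ)^2 + (m.2:ℝ)^2 := by
    have : ((m.1 : ℂ)^2 + (m.2 : ℂ)^2) = (((m.1:ℝ)^2 + (m.2:ℝ)^2 : ℝ) : ℂ) := by push_cast; rfl
    rw [this, Complex.norm_real, Real.norm_of_nonneg hn.le]
  have hsum : ‖∑ l, (D.jm k l : ℂ) * cf (H l) m‖ ≤ P := by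
    refine (norm_sum_le _ _).trans (Finset.sum_le_sum fun l _ => ?_)
    rw [norm_mul, Complex.norm_real, Real.norm_eq_abs]
  have hnum : ‖-Complex.I * (m.1 * cf (H k) m - m.2 * ∑ l, (D.jm k l : ℂ) * cf (H l) m)‖
      ≤ |(m.1:ℝ)| * ‖cf (H k) m‖ + |(m.2:ℝ)| * P := by
    rw [norm_mul, norm_neg, Complex.norm_I, one_mul]
    refine (norm_sub_le _ _).trans (add_le_add ?_ ?_)
    · rw [norm_mul, Complex.norm_intCast]
    · rw [norm_mul, Complex.norm_intCast]; gcongr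
  rw [fcoef, norm_div, hden, mul_div_assoc', div_le_iff₀ hn]
  refine (mul_le_mul_of_nonneg_left hnum (wt_pos m).le).trans ?_
  have e1 := int_sq_ge m.1
  have e2 := int_sq_ge m.2
  have a1 := abs_nonneg (m.1:ℝ); have a2 := abs_nonneg (m.2:ℝ)
  have s1 := sq_abs (m.1:ℝ); have s2 := sq_abs (m.2:ℝ)
  have w1 : wt m * |(m.1:ℝ)| ≤ 3 * ((m.1:ℝ)^2 + (m.2:ℝ)^2) := by
    unfold wt; nlinarith [sq_nonneg (|(m.1:ℝ)| - |(m.2:ℝ)|), sq_nonneg (m.2:ℝ)]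
  have w2 : wt m * |(m.2:ℝ)| ≤ 3 * ((m.1:ℝ)^2 + (m.2:ℝ)^2) := by
    unfold wt; nlinarith [sq_nonneg (|(m.1:ℝ)| - |(m.2:ℝ)|), sq_nonneg (m.1:ℝ)]
  have h1 := mul_le_mul_of_nonneg_right w1 (norm_nonneg (cf (H k) m))
  have h2 := mul_le_mul_of_nonneg_right w2 hP
  linarith

variable {H H' : ι → ℝ × ℝ → ℂ}

lemma fcoef_Sm (hH : ∀ k, SmPer (H k)) (k : ι) (s : ℕ) : Sm s (D.fcoef H k) := by
  have : Summable fun m => wt m ^ s * (3 * (‖cf (H k) m‖ + ∑ l, |D.jm k l| * ‖cf (H l) m‖)) := by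
    have h1 := (cf_Sm s (hH k)).add (summable_sum (s := Finset.univ) fun l _ => (cf_Sm s (hH l)).mul_left |D.jm k l|)
    refine (h1.mul_left 3).congr fun m => ?_
    rw [mul_left_comm, mul_add (wt m ^ s), Finset.mul_sum]
    congr 2
    refine Finset.sum_congr rfl fun l _ => by ring
  refine Summable.of_nonneg_of_le (fun m => by have := wt_pos m; positivity) (fun m => ?_) this
  refine mul_le_mul_of_nonneg_left (le_trans ?_ (D.fcoef_le H k m)) (pow_nonneg (wt_pos m).le _)
  exact le_mul_of_one_le_left (norm_nonneg _) (wt_ge m)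

lemma f_smPer (hH : ∀ k, SmPer (H k)) (k : ι) : SmPer (D.f H k) := fs_smPer (D.fcoef_Sm hH k)

lemma cf_f (hH : ∀ k, SmPer (H k)) (k : ι) (m) : cf (D.f H k) m = D.fcoef H k m :=
  cf_fs (D.fcoef_Sm hH k 0).norm m

/-- The constant in the estimate `W_f`. -/
def K1 : ℝ := 3 * (1 + D.Jn)
lemma K1_pos : 0 < D.K1 := by unfold K1; linarith [D.Jn_nonneg]

/-- The solution operator `H ↦ f` gains one derivative. -/
lemma W_f (hH : ∀ k, SmPer (H k)) (s : ℕ) {X : ℝ} (hX : ∀ k, W s (H k) ≤ X) (k : ι) :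
    W (s+1) (D.f H k) ≤ D.K1 * X := by
  have hX0 : 0 ≤ X := (W_nonneg _ _).trans (hX k)
  have h1 := (summable_sum (s := Finset.univ) fun l _ => (cf_Sm s (hH l)).mul_left |D.jm k l|)
  have h2 := (((cf_Sm s (hH k)).add h1).mul_left 3)
  have : W (s+1) (D.f H k) ≤ 3 * (W s (H k) + ∑ l, |D.jm k l| * W s (H l)) := by
    simp only [W]
    simp_rw [← tsum_mul_left]
    rw [← Summable.tsum_finsetSum fun l _ => (cf_Sm s (hH l)).mul_left |D.jm k l|]
    rw [← (cf_Sm s (hH k)).tsum_add h1, ← tsum_mul_left]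
    refine Summable.tsum_le_tsum (fun m => ?_) (cf_Sm _ (D.f_smPer hH k)) h2
    rw [D.cf_f hH, pow_succ, mul_assoc]
    refine (mul_le_mul_of_nonneg_left (D.fcoef_le H k m) (pow_nonneg (wt_pos m).le _)).trans (le_of_eq ?_)
    rw [mul_left_comm, mul_add (wt m ^ s), Finset.mul_sum]
    congr 2
    refine Finset.sum_congr rfl fun l _ => by ring
  refine this.trans ?_
  have h3 : ∑ l, |D.jm k l| * W s (H l) ≤ D.Jn * X := by
    refine (Finset.sum_le_sum fun l _ => mul_le_mul_of_nonneg_left (hX l) (abs_nonneg _)).trans ?_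
    rw [← Finset.sum_mul]
    exact mul_le_mul_of_nonneg_right (D.jm_row k) hX0
  unfold K1; linarith [hX k]

lemma f_sub (hH : ∀ k, SmPer (H k)) (hH' : ∀ k, SmPer (H' k)) (k : ι) (z) :
    D.f (fun l z => H l z - H' l z) k z = D.f H k z - D.f H' k z := by
  unfold f fs
  rw [← Summable.tsum_sub (fs_summable (D.fcoef_Sm hH k 0).norm z) (fs_summable (D.fcoef_Sm hH' k 0).norm z)]
  congr 1; funext m
  simp only [fcoef, cf_sub (hH _).cont (hH' _).cont, mul_sub, Finset.sum_sub_distrib]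
  ring

/-- The solved equation `f_x + J₀ f_y = H - H₀`. -/
lemma f_eq (hH : ∀ k, SmPer (H k)) (k : ι) (z) :
    dx (D.f H k) z + ∑ l, (D.jm k l : ℂ) * dy (D.f H l) z = H k z - cf (H k) 0 := by
  have hs := fun l => D.f_smPer hH l
  have hL : SmPer (fun z => dx (D.f H k) z + ∑ l, (D.jm k l : ℂ) * dy (D.f H l) z) :=
    (hs k).dx.add (SmPer.sum fun l _ => (hs l).dy.const_mul _)
  have hR : SmPer (fun z => H k z - cf (H k) 0) := (hH k).sub (SmPer.const _)
  have := uniq2 (hL.sub hR) (fun m => ?_) z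
  · exact sub_eq_zero.1 this
  rw [cf_sub hL.cont hR.cont, cf_add (hs k).dx.cont (SmPer.sum fun l _ => (hs l).dy.const_mul _).cont,
    cf_sub (hH k).cont continuous_const]
  have e1 : cf (fun z => ∑ l, (D.jm k l : ℂ) * dy (D.f H l) z) m
      = ∑ l, (D.jm k l : ℂ) * cf (dy (D.f H l)) m := by
    have : ∀ t : Finset ι, cf (fun z => ∑ l ∈ t, (D.jm k l : ℂ) * dy (D.f H l) z) m
      = ∑ l ∈ t, (D.jm k l : ℂ) * cf (dy (D.f H l)) m := by
      intro t
      induction t using Finset.induction_on with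
      | empty => simp [cf]
      | insert i t hi ih =>
        simp only [Finset.sum_insert hi]
        rw [cf_add ((hs i).dy.const_mul _).cont (SmPer.sum fun l _ => (hs l).dy.const_mul _).cont, ih,
          cf_const_mul]
    exact this _
  have e2 : cf (fun _ => cf (H k) 0) m = cf (H k) 0 * cf (fun _ => 1) m := by
    rw [← cf_const_mul]; simp
  rw [e1, e2, cf_one, cf_dx (hs k), D.cf_f hH]
  simp_rw [cf_dy (hs _), D.cf_f hH]
  rcases eq_or_ne m 0 with rfl | hm
  · simp
  have hn : ((m.1 : ℂ)^2 + (m.2 : ℂ)^2) ≠ 0 := by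
    intro h0
    have h' : (m.1:ℝ)^2 + (m.2:ℝ)^2 = 0 := by exact_mod_cast h0
    have ha : (m.1:ℝ) = 0 := by nlinarith [sq_nonneg (m.1:ℝ), sq_nonneg (m.2:ℝ)]
    have hb : (m.2:ℝ) = 0 := by nlinarith [sq_nonneg (m.1:ℝ), sq_nonneg (m.2:ℝ)]
    exact hm (Prod.ext (by exact_mod_cast ha) (by exact_mod_cast hb))
  simp only [hm, if_false, mul_zero, sub_zero]
  have hJJ : ∑ l, (D.jm k l : ℂ) * ∑ i, (D.jm l i : ℂ) * cf (H i) m = - cf (H k) m := by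
    simp_rw [Finset.mul_sum, ← mul_assoc]
    rw [Finset.sum_comm]
    simp_rw [← Finset.sum_mul]
    have : ∀ i, ∑ l, (D.jm k l : ℂ) * (D.jm l i : ℂ) = if k = i then -1 else 0 := by
      intro i; have := D.hj k i
      have h2 := congrArg (fun x : ℝ => (x : ℂ)) this
      push_cast at h2
      rw [h2]
      split_ifs <;> simp
    simp [this]
  set Sx : ℂ := ∑ l, (D.jm k l : ℂ) * cf (H l) m with hSx
  have e3 : ∑ l, (D.jm k l : ℂ) * (Complex.I * m.2 * D.fcoef H l m)
      = m.2 * (m.1 * Sx + m.2 * cf (H k) m) / ((m.1 : ℂ)^2 + (m.2 : ℂ)^2) := by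
    have : ∀ l, (D.jm k l : ℂ) * (Complex.I * m.2 * D.fcoef H l m) =
        (m.2 / ((m.1 : ℂ)^2 + (m.2 : ℂ)^2)) * (m.1 * ((D.jm k l : ℂ) * cf (H l) m)
          - m.2 * ((D.jm k l : ℂ) * ∑ i, (D.jm l i : ℂ) * cf (H i) m)) := by
      intro l
      rw [fcoef]
      field_simp
      ring_nf
      rw [Complex.I_sq]; ring
    simp_rw [this]
    rw [← Finset.mul_sum, Finset.sum_sub_distrib, ← Finset.mul_sum, ← Finset.mul_sum, hJJ]
    ring
  rw [e3, fcoef, ← hSx]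
  field_simp
  ring_nf
  rw [Complex.I_sq]; ring

end Dat
end PshAux

/-! ### Estimates for the fixed point map -/

namespace PshAux
namespace Dat
variable {ι : Type} [Fintype ι] (D : Dat ι)

/-- The vector `J₀ v`. -/
def jv (k : ι) : ℝ := ∑ l, D.jm k l * D.v l

/-- The part of `ω` depending (linearly) on the right-hand side `H`. -/
def oml (H : ι → ℝ × ℝ → ℂ) (k : ι) (z : ℝ × ℝ) : ℂ :=
  cf (H k) 0 * sx z + (D.f H k z - D.f H k 0)

/-- The solution `ω` of `ω_x + J₀ ω_y = H` near the origin, with `ω(0) = 0`. It is periodic because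
the coordinates are replaced by `sx` and `sy`. -/
def om (H : ι → ℝ × ℝ → ℂ) (k : ι) (z : ℝ × ℝ) : ℂ :=
  ((D.v k : ℂ) * sx z + (D.jv k : ℂ) * sy z) + D.oml H k z

/-- A periodic function agreeing with `ω_y` near the origin. -/
def Y (H : ι → ℝ × ℝ → ℂ) (k : ι) (z : ℝ × ℝ) : ℂ := (D.jv k : ℂ) + dy (D.f H k) z

/-- The map `H ↦ a(r Re ω) ω_y` whose fixed points give the discs. -/
def Phi (r : ℝ) (H : ι → ℝ × ℝ → ℂ) (k : ι) (z : ℝ × ℝ) : ℂ :=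
  ∑ l, gc (D.a k l) (fun i z => (r : ℂ) * D.om H i z) z * D.Y H l z

variable {H H' : ι → ℝ × ℝ → ℂ}

lemma oml_smPer (hH : ∀ k, SmPer (H k)) (k) : SmPer (D.oml H k) :=
  (sx_smPer.const_mul _).add ((D.f_smPer hH k).sub (SmPer.const _))
lemma om_smPer (hH : ∀ k, SmPer (H k)) (k) : SmPer (D.om H k) :=
  ((sx_smPer.const_mul _).add (sy_smPer.const_mul _)).add (D.oml_smPer hH k)
lemma Y_smPer (hH : ∀ k, SmPer (H k)) (k) : SmPer (D.Y H k) :=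
  (SmPer.const _).add (D.f_smPer hH k).dy
lemma ga_smPer (r : ℝ) (hH : ∀ k, SmPer (H k)) (k l) :
    SmPer (gc (D.a k l) (fun i z => (r : ℂ) * D.om H i z)) :=
  gc_smPer (D.ha k l) fun i => (D.om_smPer hH i).const_mul _
lemma Phi_smPer (r : ℝ) (hH : ∀ k, SmPer (H k)) (k) : SmPer (D.Phi r H k) :=
  SmPer.sum fun l _ => (D.ga_smPer r hH k l).mul (D.Y_smPer hH l)

lemma W_const (s : ℕ) (c : ℂ) : W s (fun _ => c) = ‖c‖ * W s (fun _ => 1) := by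
  rw [← W_const_mul]; simp

lemma W_dy (s : ℕ) {F : ℝ × ℝ → ℂ} (hF : SmPer F) : W s (dy F) ≤ W (s+1) F := by
  rw [W_succ s hF]; linarith [W_nonneg s F, W_nonneg s (dx F)]

/-- The constant in the bound `W_oml` of the `H`-dependent part of `ω`. -/
def Bl (s : ℕ) : ℝ := W (s+1) sx + D.K1 + D.K1 * W (s+1) (fun _ => 1)
lemma Bl_nonneg (s) : 0 ≤ D.Bl s := by
  have := D.K1_pos; have := W_nonneg (s+1) sx; have := W_nonneg (s+1) (fun _ => 1)
  unfold Bl; positivity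

lemma W_oml (hH : ∀ k, SmPer (H k)) (s : ℕ) {X : ℝ} (hX : ∀ k, W s (H k) ≤ X) (k : ι) :
    W (s+1) (D.oml H k) ≤ D.Bl s * X := by
  have hf := D.W_f hH s hX k
  have h1 := W_add (s+1) (sx_smPer.const_mul (cf (H k) 0)) ((D.f_smPer hH k).sub (SmPer.const (D.f H k 0)))
  have h2 := W_sub (s+1) (D.f_smPer hH k) (SmPer.const (D.f H k 0))
  rw [W_const_mul] at h1
  rw [W_const] at h2
  have h3 : ‖cf (H k) 0‖ ≤ X := (cf_norm_le (norm_le_W' s (hH k)) 0).trans (hX k)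
  have h4 : ‖D.f H k 0‖ ≤ D.K1 * X := (norm_le_W' (s+1) (D.f_smPer hH k) 0).trans hf
  have h5 := mul_le_mul_of_nonneg_right h3 (W_nonneg (s+1) sx)
  have h6 := mul_le_mul_of_nonneg_right h4 (W_nonneg (s+1) (fun _ => 1))
  have : W (s+1) (D.oml H k) ≤ X * W (s+1) sx + (D.K1 * X + D.K1 * X * W (s+1) (fun _ => 1)) := by
    refine h1.trans ?_
    linarith
  unfold Bl; linarith

/-- Bound for the part of `ω` that does not depend on `H`. -/
def Bo (s : ℕ) : ℝ := ∑ k, (|D.v k| * W (s+1) sx + |D.jv k| * W (s+1) sy)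
lemma Bo_nonneg (s) : 0 ≤ D.Bo s := Finset.sum_nonneg fun k _ => by
  have := W_nonneg (s+1) sx; have := W_nonneg (s+1) sy; positivity

lemma W_om (hH : ∀ k, SmPer (H k)) (s : ℕ) {X : ℝ} (hX : ∀ k, W s (H k) ≤ X) (k : ι) :
    W (s+1) (D.om H k) ≤ D.Bo s + D.Bl s * X := by
  have h1 := W_add (s+1) ((sx_smPer.const_mul (D.v k)).add (sy_smPer.const_mul (D.jv k))) (D.oml_smPer hH k)
  have h2 := W_add (s+1) (sx_smPer.const_mul (D.v k)) (sy_smPer.const_mul (D.jv k))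
  simp only [W_const_mul, Complex.norm_real, Real.norm_eq_abs] at h2
  have h3 := Finset.single_le_sum (f := fun k => |D.v k| * W (s+1) sx + |D.jv k| * W (s+1) sy)
    (fun k _ => by have := W_nonneg (s+1) sx; have := W_nonneg (s+1) sy; positivity) (Finset.mem_univ k)
  have h4 := D.W_oml hH s hX k
  have : W (s+1) (D.om H k) ≤ _ := h1
  have h5 : (|D.v k| * W (s+1) sx + |D.jv k| * W (s+1) sy) ≤ D.Bo s := h3
  linarith

lemma om_sub (hH : ∀ k, SmPer (H k)) (hH' : ∀ k, SmPer (H' k)) (k : ι) (z) :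
    D.om H k z - D.om H' k z = D.oml (fun l z => H l z - H' l z) k z := by
  simp only [om, oml, D.f_sub hH hH', cf_sub (hH _).cont (hH' _).cont]; ring

/-- Bound for the part of `Y` that does not depend on `H`. -/
def By (s : ℕ) : ℝ := ∑ k, |D.jv k| * W s (fun _ => 1)
lemma By_nonneg (s) : 0 ≤ D.By s := Finset.sum_nonneg fun k _ => by
  have := W_nonneg s (fun _ => 1); positivity

lemma W_Y (hH : ∀ k, SmPer (H k)) (s : ℕ) {X : ℝ} (hX : ∀ k, W s (H k) ≤ X) (k : ι) :
    W s (D.Y H k) ≤ D.By s + D.K1 * X := by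
  have h1 := W_add s (SmPer.const (D.jv k : ℂ)) (D.f_smPer hH k).dy
  rw [W_const, Complex.norm_real, Real.norm_eq_abs] at h1
  have h2 := (W_dy s (D.f_smPer hH k)).trans (D.W_f hH s hX k)
  have h3 : |D.jv k| * W s (fun _ => 1) ≤ D.By s :=
    Finset.single_le_sum (f := fun k => |D.jv k| * W s (fun _ => 1))
    (fun k _ => by have := W_nonneg s (fun _ => 1); positivity) (Finset.mem_univ k)
  have : W s (D.Y H k) ≤ _ := h1
  linarith

lemma W_Y_sub (hH : ∀ k, SmPer (H k)) (hH' : ∀ k, SmPer (H' k)) (s : ℕ) {X : ℝ}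
    (hX : ∀ k, W s (fun z => H k z - H' k z) ≤ X) (k : ι) :
    W s (fun z => D.Y H k z - D.Y H' k z) ≤ D.K1 * X := by
  have hs : ∀ k, SmPer (fun z => H k z - H' k z) := fun k => (hH k).sub (hH' k)
  have e : (fun z => D.Y H k z - D.Y H' k z) = dy (D.f (fun l z => H l z - H' l z) k) := by
    funext z
    have e2 : D.f (fun l z => H l z - H' l z) k = fun z => D.f H k z - D.f H' k z :=
      funext fun z => D.f_sub hH hH' k z
    rw [e2]
    simp only [Y, dy]
    rw [fderiv_fun_sub ((D.f_smPer hH k).diff _) ((D.f_smPer hH' k).diff _)]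
    simp
  rw [e]
  exact (W_dy s (D.f_smPer hs k)).trans (D.W_f hs s hX k)

/-- Lipschitz dependence of `a(r Re θ)` on `θ`, with a constant proportional to `r`. -/
lemma a_lip (s : ℕ) (R : ℝ) : ∃ C, 0 ≤ C ∧ ∀ r : ℝ, 0 ≤ r → r ≤ 1 →
    ∀ θ φ : ι → ℝ × ℝ → ℂ, (∀ k, SmPer (θ k)) → (∀ k, SmPer (φ k)) →
      (∀ k, W (max s 4) (θ k) ≤ R) → (∀ k, W (max s 4) (φ k) ≤ R) →
      ∀ X, (∀ i, W s (fun z => θ i z - φ i z) ≤ X) → ∀ k l,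
      W s (fun z => gc (D.a k l) (fun i z => (r:ℂ) * θ i z) z - gc (D.a k l) (fun i z => (r:ℂ) * φ i z) z)
        ≤ r * C * X := by
  choose C p hC using fun k l => W_lip s R (D.a k l) (D.ha k l)
  refine ⟨(∑ k, ∑ l, C k l) * Fintype.card ι, mul_nonneg (Finset.sum_nonneg fun k _ =>
    Finset.sum_nonneg fun l _ => p k l) (Nat.cast_nonneg _), fun r r0 r1 θ φ hθ hφ h1 h2 X hX k l => ?_⟩
  have hsc : ∀ ψ : ι → ℝ × ℝ → ℂ, (∀ k, W (max s 4) (ψ k) ≤ R) → ∀ k,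
      W (max s 4) (fun z => (r:ℂ) * ψ k z) ≤ R := by
    intro ψ h k
    rw [W_const_mul, Complex.norm_real, Real.norm_of_nonneg r0]
    exact (mul_le_of_le_one_left (W_nonneg _ _) r1).trans (h k)
  have h3 := hC k l (fun i z => (r:ℂ) * θ i z) (fun i z => (r:ℂ) * φ i z)
    (fun i => (hθ i).const_mul _) (fun i => (hφ i).const_mul _) (hsc θ h1) (hsc φ h2)
  have hX0 : 0 ≤ X := (W_nonneg _ _).trans (hX k)
  have h4 : ∑ i, W s (fun z => (r:ℂ) * θ i z - (r:ℂ) * φ i z) ≤ Fintype.card ι * (r * X) := by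
    have : ∀ i ∈ Finset.univ, W s (fun z => (r:ℂ) * θ i z - (r:ℂ) * φ i z) ≤ r * X := by
      intro i _
      simp_rw [← mul_sub]
      rw [W_const_mul, Complex.norm_real, Real.norm_of_nonneg r0]
      exact mul_le_mul_of_nonneg_left (hX i) r0
    simpa using Finset.sum_le_sum this
  have h5 : C k l ≤ ∑ k, ∑ l, C k l :=
    (Finset.single_le_sum (f := fun l => C k l) (fun l _ => p k l) (Finset.mem_univ l)).trans
    (Finset.single_le_sum (f := fun k => ∑ l, C k l)
      (fun k _ => Finset.sum_nonneg fun l _ => p k l) (Finset.mem_univ k))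
  refine h3.trans ((mul_le_mul h5 h4 (Finset.sum_nonneg fun _ _ => W_nonneg _ _)
    ((p k l).trans h5)).trans (le_of_eq (by ring)))

/-- Since `a` vanishes at the origin, `a(r Re θ)` is of size `r`. -/
lemma a_small (s : ℕ) (R : ℝ) (hR : 0 ≤ R) : ∃ C, 0 ≤ C ∧ ∀ r : ℝ, 0 ≤ r → r ≤ 1 →
    ∀ θ : ι → ℝ × ℝ → ℂ, (∀ k, SmPer (θ k)) → (∀ k, W (max s 4) (θ k) ≤ R) → ∀ k l,
      W s (gc (D.a k l) (fun i z => (r:ℂ) * θ i z)) ≤ r * C := by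
  obtain ⟨C, hC, h⟩ := D.a_lip s R
  refine ⟨C * R, by positivity, fun r r0 r1 θ hθ h1 k l => ?_⟩
  have := h r r0 r1 θ (fun _ _ => 0) hθ (fun _ => SmPer.const _) h1
    (fun k => by rw [W_zero]; exact hR) R (fun i => by
      simp only [sub_zero]; exact (W_mono (le_max_left _ _) (hθ i)).trans (h1 i)) k l
  have e : gc (D.a k l) (fun i z => (r:ℂ) * (0:ℂ)) = fun _ => 0 := by
    funext z; simp only [gc, mul_zero, Complex.zero_re]; exact D.ha0 k l
  simp only [e, sub_zero] at this
  linarith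

/-- `W₄` bound for `ω` when `W₃ H ≤ 1`. -/
lemma W4_om (hH : ∀ k, SmPer (H k)) (h3 : ∀ k, W 3 (H k) ≤ 1) (k) :
    W 4 (D.om H k) ≤ D.Bo 3 + D.Bl 3 := by simpa using D.W_om hH 3 h3 k

lemma R4_nonneg : 0 ≤ D.Bo 3 + D.Bl 3 := add_nonneg (D.Bo_nonneg 3) (D.Bl_nonneg 3)

lemma sum_card_le {t : ι → ℝ} {c : ℝ} (h : ∀ i, t i ≤ c) : ∑ i, t i ≤ Fintype.card ι * c := by
  simpa using Finset.sum_le_sum (s := Finset.univ) fun i _ => h i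

/-- For small `r` the map `Phi r` sends the unit ball of `W 3` into a small ball. -/
lemma Phi_self : ∃ C, 0 ≤ C ∧ ∀ r : ℝ, 0 ≤ r → r ≤ 1 → ∀ H : ι → ℝ × ℝ → ℂ, (∀ k, SmPer (H k)) →
    (∀ k, W 3 (H k) ≤ 1) → ∀ k, W 3 (D.Phi r H k) ≤ r * C := by
  obtain ⟨C, hC, h⟩ := D.a_small 3 _ D.R4_nonneg
  have hK := D.K1_pos
  have hB := D.By_nonneg 3
  refine ⟨Fintype.card ι * (C * (D.By 3 + D.K1 * 1)), by positivity, fun r r0 r1 H hH h3 k => ?_⟩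
  have h1 := W_sum 3 Finset.univ (fun l => (D.ga_smPer r hH k l).mul (D.Y_smPer hH l))
  refine (show W 3 (D.Phi r H k) ≤ _ from h1).trans ((sum_card_le (c := r * (C * (D.By 3 + D.K1 * 1)))
    fun l => ?_).trans (le_of_eq (by ring)))
  refine (W_mul 3 (D.ga_smPer r hH k l) (D.Y_smPer hH l)).trans ?_
  rw [← mul_assoc]
  exact mul_le_mul (h r r0 r1 _ (D.om_smPer hH) (D.W4_om hH h3) k l) (D.W_Y hH 3 h3 l) (W_nonneg _ _)
    (by positivity)

/-- For small `r` the map `Phi r` is a contraction for the norm `W 0`, on the unit ball of `W 3`. -/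
lemma Phi_contr : ∃ C, 0 ≤ C ∧ ∀ r : ℝ, 0 ≤ r → r ≤ 1 → ∀ H H' : ι → ℝ × ℝ → ℂ,
    (∀ k, SmPer (H k)) → (∀ k, SmPer (H' k)) →
    (∀ k, W 3 (H k) ≤ 1) → (∀ k, W 3 (H' k) ≤ 1) →
    ∀ X, (∀ k, W 0 (fun z => H k z - H' k z) ≤ X) →
    ∀ k, W 0 (fun z => D.Phi r H k z - D.Phi r H' k z) ≤ r * C * X := by
  obtain ⟨C, hC, h⟩ := D.a_small 0 _ D.R4_nonneg
  obtain ⟨C', hC', h'⟩ := D.a_lip 0 (D.Bo 3 + D.Bl 3)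
  have hK := D.K1_pos
  have hB := D.By_nonneg 0
  have hBl := D.Bl_nonneg 0
  refine ⟨Fintype.card ι * (C' * D.Bl 0 * (D.By 0 + D.K1 * 1) + C * D.K1), by positivity,
    fun r r0 r1 H H' hH hH' h3 h3' X hX k => ?_⟩
  have hX0 : 0 ≤ X := (W_nonneg _ _).trans (hX k)
  have hs : ∀ k, SmPer (fun z => H k z - H' k z) := fun k => (hH k).sub (hH' k)
  have e : (fun z => D.Phi r H k z - D.Phi r H' k z) = fun z => ∑ l,
      ((gc (D.a k l) (fun i z => (r:ℂ) * D.om H i z) z - gc (D.a k l) (fun i z => (r:ℂ) * D.om H' i z) z)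
        * D.Y H l z + gc (D.a k l) (fun i z => (r:ℂ) * D.om H' i z) z * (D.Y H l z - D.Y H' l z)) := by
    funext z; simp only [Phi]; rw [← Finset.sum_sub_distrib]
    exact Finset.sum_congr rfl fun l _ => by ring
  have g1 := fun l => (D.ga_smPer r hH k l).sub (D.ga_smPer r hH' k l)
  have g2 := fun l => (D.ga_smPer r hH' k l)
  have y1 := fun l => D.Y_smPer hH l
  have y2 := fun l => (D.Y_smPer hH l).sub (D.Y_smPer hH' l)
  rw [e]
  refine (W_sum 0 Finset.univ (fun l => ((g1 l).mul (y1 l)).add ((g2 l).mul (y2 l)))).trans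
    ((sum_card_le (c := r * (C' * D.Bl 0 * (D.By 0 + D.K1 * 1) + C * D.K1) * X)
    fun l => ?_).trans (le_of_eq (by ring)))
  refine (W_add 0 ((g1 l).mul (y1 l)) ((g2 l).mul (y2 l))).trans ?_
  have hom : ∀ i, W 0 (fun z => D.om H i z - D.om H' i z) ≤ D.Bl 0 * X := by
    intro i
    have : (fun z => D.om H i z - D.om H' i z) = D.oml (fun l z => H l z - H' l z) i :=
      funext fun z => D.om_sub hH hH' i z
    rw [this]
    exact (W_mono (Nat.zero_le 1) (D.oml_smPer hs i)).trans (D.W_oml hs 0 hX i)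
  have b1 := h' r r0 r1 _ _ (D.om_smPer hH) (D.om_smPer hH') (D.W4_om hH h3) (D.W4_om hH' h3') _ hom k l
  have b2 := h r r0 r1 _ (D.om_smPer hH') (D.W4_om hH' h3') k l
  have b3 := D.W_Y hH 0 (X := 1) (fun k => (W_mono (by norm_num) (hH k)).trans (h3 k)) l
  have b4 := D.W_Y_sub hH hH' 0 hX l
  have c1 := (W_mul 0 (g1 l) (y1 l)).trans (mul_le_mul b1 b3 (W_nonneg _ _) (by positivity))
  have c2 := (W_mul 0 (g2 l) (y2 l)).trans (mul_le_mul b2 b4 (W_nonneg _ _) (by positivity))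
  linarith

/-- Tame estimate for `Phi r`: the coefficient `r * C0` of the top order norm does not depend on
`s`, so the smallness of `r` needed to absorb this term is the same for all `s`. -/
lemma Phi_tame : ∃ C0, 0 ≤ C0 ∧ ∀ s : ℕ, 3 ≤ s → ∀ B : ℝ, 0 ≤ B → ∃ C, 0 ≤ C ∧
    ∀ r : ℝ, 0 ≤ r → r ≤ 1 → ∀ H : ι → ℝ × ℝ → ℂ, (∀ k, SmPer (H k)) →
    (∀ k, W 3 (H k) ≤ 1) → (∀ k, W s (H k) ≤ B) → ∀ X, (∀ k, W (s+1) (H k) ≤ X) →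
    ∀ k, W (s+1) (D.Phi r H k) ≤ C + r * C0 * X := by
  obtain ⟨C, hC, h⟩ := D.a_small 0 _ D.R4_nonneg
  have hK := D.K1_pos
  have hBy := D.By_nonneg
  refine ⟨Fintype.card ι * (2 * C * D.K1), by positivity, fun s hs B hB => ?_⟩
  obtain ⟨Ct, hCt, ht⟩ := W_mul_tame (s+1)
  have hR : 0 ≤ D.Bo s + D.Bl s * B :=
    add_nonneg (D.Bo_nonneg s) (mul_nonneg (D.Bl_nonneg s) hB)
  obtain ⟨C', hC', h'⟩ := D.a_small (s+1) _ hR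
  have b0 := hBy 0
  have b1 := hBy (s+1)
  refine ⟨Fintype.card ι * (Ct * (C' * (D.By 0 + D.K1 * 1)) + 2 * (C * D.By (s+1))), by positivity,
    fun r r0 r1 H hH h3 hsB X hX k => ?_⟩
  have hX0 : 0 ≤ X := (W_nonneg _ _).trans (hX k)
  have h1 := W_sum (s+1) Finset.univ (fun l => (D.ga_smPer r hH k l).mul (D.Y_smPer hH l))
  refine (show W (s+1) (D.Phi r H k) ≤ _ from h1).trans ((sum_card_le
    (c := (Ct * (C' * (D.By 0 + D.K1 * 1)) + 2 * (C * D.By (s+1))) + 2 * (r * C * (D.K1 * X)))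
    fun l => ?_).trans (le_of_eq (by ring)))
  refine (ht _ _ (D.ga_smPer r hH k l) (D.Y_smPer hH l)).trans ?_
  have a1 := h r r0 r1 _ (D.om_smPer hH) (D.W4_om hH h3) k l
  have a2 := h' r r0 r1 _ (D.om_smPer hH) (fun i => by
    rw [max_eq_left (by omega)]; exact D.W_om hH s hsB i) k l
  have a3 := D.W_Y hH 0 (X := 1) (fun k => (W_mono (by norm_num) (hH k)).trans (h3 k)) l
  have a4 := D.W_Y hH (s+1) hX l
  have c1 := mul_le_mul a2 a3 (W_nonneg _ _) (by positivity)
  have c2 := mul_le_mul a1 a4 (W_nonneg _ _) (by positivity)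
  have d1 := mul_le_mul_of_nonneg_left c1 hCt
  have e1 : r * C' ≤ C' := mul_le_of_le_one_left hC' r1
  have e2 : r * C ≤ C := mul_le_of_le_one_left hC r1
  have d2 : Ct * (r * C' * (D.By 0 + D.K1 * 1)) ≤ Ct * (C' * (D.By 0 + D.K1 * 1)) := by gcongr
  have d3 : r * C * D.By (s+1) ≤ C * D.By (s+1) := by gcongr
  linarith

end Dat
end PshAux

/-! ### Solution of the perturbed Cauchy-Riemann equation -/

namespace PshAux
namespace Dat
variable {ι : Type} [Fintype ι] (D : Dat ι)

/-- Picard iterates of `Phi`. -/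
def Hj (r : ℝ) : ℕ → ι → ℝ × ℝ → ℂ
  | 0 => fun _ _ => 0
  | j+1 => D.Phi r (Hj r j)

lemma Hj_smPer (r : ℝ) (j : ℕ) : ∀ k, SmPer (D.Hj r j k) := by
  induction j with
  | zero => exact fun k => SmPer.const _
  | succ j ih => exact fun k => D.Phi_smPer r ih k

lemma cf_norm_le_W {F : ℝ × ℝ → ℂ} (hF : SmPer F) (m) : ‖cf F m‖ ≤ W 0 F :=
  cf_norm_le (norm_le_W hF) m

/-- The map `Phi r` has a smooth fixed point for small `r`. The Picard iterates are bounded in all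
the norms `W s` and converge geometrically in `W 0`. -/
theorem exists_fixed (τ : ℝ) (hτ : 0 < τ) (hτ1 : τ ≤ 1) : ∃ r0, 0 < r0 ∧ ∀ r, 0 < r → r ≤ r0 →
    ∃ H : ι → ℝ × ℝ → ℂ, (∀ k, SmPer (H k)) ∧ (∀ k, W 3 (H k) ≤ τ) ∧
      ∀ k z, D.Phi r H k z = H k z := by
  obtain ⟨Cs, hCs, hself⟩ := D.Phi_self
  obtain ⟨Cc, hCc, hcontr⟩ := D.Phi_contr
  obtain ⟨C0, hC0, htame⟩ := D.Phi_tame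
  -- This choice gives `r Cs ≤ τ` (invariance of the ball), and `r Cc, r C0 ≤ 1/2`.
  refine ⟨τ / (2 * (Cs + Cc + C0 + 1)), by positivity, fun r r0 hr => ?_⟩
  rw [le_div_iff₀ (by positivity)] at hr
  have p1 := mul_nonneg r0.le hCs
  have p2 := mul_nonneg r0.le hCc
  have p3 := mul_nonneg r0.le hC0
  have r1 : r ≤ 1 := by nlinarith
  have e1 : r * Cs ≤ τ := by nlinarith
  have e2 : r * Cc ≤ 1/2 := by nlinarith
  have e3 : r * C0 ≤ 1/2 := by nlinarith
  have hS := D.Hj_smPer r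
  have h3 : ∀ j k, W 3 (D.Hj r j k) ≤ τ := by
    intro j
    induction j with
    | zero => intro k; simp only [Hj, W_zero]; exact hτ.le
    | succ j ih =>
      intro k
      exact (hself r r0.le r1 _ (hS j) (fun k => (ih k).trans hτ1) k).trans e1
  have h31 : ∀ j k, W 3 (D.Hj r j k) ≤ 1 := fun j k => (h3 j k).trans hτ1
  -- Induction on `s`: the tame estimate reads `h_{j+1} ≤ C + h_j / 2`, and `2 C` is preserved by it.
  have hall : ∀ s, ∃ B, 0 ≤ B ∧ ∀ j k, W (s+3) (D.Hj r j k) ≤ B := by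
    intro s
    induction s with
    | zero => exact ⟨1, zero_le_one, h31⟩
    | succ s ih =>
      obtain ⟨B, hB, hb⟩ := ih
      obtain ⟨C, hC, h⟩ := htame (s+3) (by omega) B hB
      refine ⟨2 * C, by positivity, fun j => ?_⟩
      induction j with
      | zero => intro k; simp only [Hj, W_zero]; positivity
      | succ j ih2 =>
        intro k
        have := h r r0.le r1 _ (hS j) (h31 j) (hb j) (2 * C) (fun k => by
          have := ih2 k; rwa [show s + 1 + 3 = s + 3 + 1 by omega] at this) k
        rw [show s + 1 + 3 = s + 3 + 1 by omega]
        refine (show W (s+3+1) (D.Hj r (j+1) k) ≤ _ from this).trans ?_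
        nlinarith
  have hd : ∀ j k, W 0 (fun z => D.Hj r (j+1) k z - D.Hj r j k z) ≤ (1/2)^j := by
    intro j
    induction j with
    | zero =>
      intro k
      have : (fun z => D.Hj r (0+1) k z - D.Hj r 0 k z) = D.Hj r 1 k := by
        funext z; simp [Hj]
      rw [this, pow_zero]
      exact (W_mono (by norm_num) (hS 1 k)).trans (h31 1 k)
    | succ j ih =>
      intro k
      have := hcontr r r0.le r1 _ _ (hS (j+1)) (hS j) (h31 (j+1)) (h31 j) _ ih k
      refine (show W 0 (fun z => D.Hj r (j+1+1) k z - D.Hj r (j+1) k z) ≤ _ from this).trans ?_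
      rw [pow_succ, mul_comm ((1/2:ℝ)^j)]
      exact mul_le_mul_of_nonneg_right e2 (by positivity)
  have hdi : ∀ j i k, W 0 (fun z => D.Hj r (j+i) k z - D.Hj r j k z) ≤ 2 * (1/2)^j - 2 * (1/2)^(j+i) := by
    intro j i k
    induction i with
    | zero => simp [W_zero]
    | succ i ih =>
      have h1 := W_add 0 ((hS (j+i+1) k).sub (hS (j+i) k)) ((hS (j+i) k).sub (hS j k))
      have h2 := hd (j+i) k
      have e : (fun z => D.Hj r (j+(i+1)) k z - D.Hj r j k z) = fun z =>
          (D.Hj r (j+i+1) k z - D.Hj r (j+i) k z) + (D.Hj r (j+i) k z - D.Hj r j k z) := by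
        funext z; rw [← add_assoc]; ring
      rw [e]
      have e5 : (1/2:ℝ)^(j+(i+1)) = (1/2)^(j+i) * (1/2) := by rw [← add_assoc, pow_succ]
      rw [e5]; linarith
  have hc : ∀ k m, ∃ c, Tendsto (fun j => cf (D.Hj r j k) m) atTop (𝓝 c) := by
    intro k m
    refine cauchySeq_tendsto_of_complete (cauchySeq_of_le_geometric (1/2) 1 (by norm_num) fun j => ?_)
    rw [dist_comm, dist_eq_norm, ← cf_sub (hS _ k).cont (hS _ k).cont, one_mul]
    exact (cf_norm_le_W ((hS _ k).sub (hS _ k)) m).trans (hd j k)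
  choose c hc using hc
  have hsum : ∀ k s B, (∀ j, W s (D.Hj r j k) ≤ B) → ∀ T : Finset (ℤ × ℤ),
      ∑ m ∈ T, wt m ^ s * ‖c k m‖ ≤ B := by
    intro k s B hB T
    have : Tendsto (fun j => ∑ m ∈ T, wt m ^ s * ‖cf (D.Hj r j k) m‖) atTop
        (𝓝 (∑ m ∈ T, wt m ^ s * ‖c k m‖)) :=
      tendsto_finsetSum _ fun m _ => ((hc k m).norm.const_mul _)
    refine le_of_tendsto' this fun j => le_trans ?_ (hB j)
    exact (cf_Sm s (hS j k)).sum_le_tsum T fun m _ => by have := wt_pos m; positivity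
  have hSm : ∀ k s, Sm s (c k) := by
    intro k s
    obtain ⟨B, hB, hb⟩ := hall s
    refine Sm.mono (t := s+3) ?_ (by omega)
    exact summable_of_sum_le (fun m => by have := wt_pos m; positivity) (hsum k _ B fun j => hb j k)
  have hH : ∀ k, SmPer (fs (c k)) := fun k => fs_smPer (hSm k)
  have hcf : ∀ k m, cf (fs (c k)) m = c k m := fun k m => cf_fs (hSm k 0).norm m
  have hH3 : ∀ k, W 3 (fs (c k)) ≤ τ := by
    intro k
    unfold W
    simp_rw [hcf]
    exact (hSm k 3).tsum_le_of_sum_le (hsum k 3 τ fun j => h3 j k)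
  -- A Fatou-type argument on finite partial sums turns coefficientwise convergence into `W 0`
  -- convergence.
  have hlim : ∀ j k, W 0 (fun z => fs (c k) z - D.Hj r j k z) ≤ 2 * (1/2)^j := by
    intro j k
    have hs := cf_Sm 0 ((hH k).sub (hS j k))
    refine hs.tsum_le_of_sum_le fun T => ?_
    have : Tendsto (fun i => ∑ m ∈ T, wt m ^ 0 * ‖cf (fun z => D.Hj r (i + j) k z - D.Hj r j k z) m‖) atTop
        (𝓝 (∑ m ∈ T, wt m ^ 0 * ‖cf (fun z => fs (c k) z - D.Hj r j k z) m‖)) := by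
      refine tendsto_finsetSum _ fun m _ => Tendsto.const_mul _ (Tendsto.norm ?_)
      simp_rw [cf_sub (hS _ k).cont (hS j k).cont]
      rw [cf_sub (hH k).cont (hS j k).cont, hcf]
      exact ((tendsto_add_atTop_iff_nat j).2 (hc k m)).sub_const _
    refine le_of_tendsto' this fun i => ?_
    have h1 := hdi j i k
    rw [add_comm j i] at h1
    refine ((cf_Sm 0 ((hS (i+j) k).sub (hS j k))).sum_le_tsum T
      fun m _ => by have := wt_pos m; positivity).trans (h1.trans ?_)
    have : (0:ℝ) ≤ (1/2)^(i+j) := by positivity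
    linarith
  refine ⟨fun k => fs (c k), hH, hH3, fun k z => ?_⟩
  have hz : ∀ j : ℕ, ‖D.Phi r (fun k => fs (c k)) k z - fs (c k) z‖ ≤ 2 * (1/2)^j := by
    intro j
    have h1 := hcontr r r0.le r1 _ _ hH (hS j) (fun k => (hH3 k).trans hτ1) (h31 j) _ (hlim j) k
    have h2 := hlim (j+1) k
    have n1 := (norm_le_W ((D.Phi_smPer r hH k).sub (D.Phi_smPer r (hS j) k)) z).trans h1
    have n2 := (norm_le_W ((hH k).sub (hS (j+1) k)) z).trans h2
    have e : D.Phi r (fun k => fs (c k)) k z - fs (c k) z =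
      (D.Phi r (fun k => fs (c k)) k z - D.Phi r (D.Hj r j) k z) - (fs (c k) z - D.Hj r (j+1) k z) := by
      simp only [Hj]; ring
    rw [e]
    refine (norm_sub_le _ _).trans ?_
    have q : (0:ℝ) ≤ (1/2)^j := by positivity
    have : r * Cc * (2 * (1/2)^j) ≤ 1/2 * (2 * (1/2)^j) := by gcongr
    rw [pow_succ] at n2
    linarith
  have hl : Tendsto (fun j : ℕ => 2 * (1/2:ℝ)^j) atTop (𝓝 0) := by
    simpa using (tendsto_pow_atTop_nhds_zero_of_lt_one (by norm_num : (0:ℝ) ≤ 1/2) (by norm_num)).const_mul 2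
  have := ge_of_tendsto' hl hz
  exact sub_eq_zero.1 (norm_le_zero_iff.1 this)

variable {H : ι → ℝ × ℝ → ℂ}

lemma om_fderiv (hH : ∀ k, SmPer (H k)) (k : ι) {z : ℝ × ℝ} (h1 : |z.1| < 1) (h2 : |z.2| < 1) :
    dx (D.om H k) z = D.v k + cf (H k) 0 + dx (D.f H k) z ∧
    dy (D.om H k) z = D.Y H k z := by
  have e : HasFDerivAt (D.om H k) _ z := (((sx_smPer.diff z).hasFDerivAt.const_mul (D.v k : ℂ)).add
    ((sy_smPer.diff z).hasFDerivAt.const_mul (D.jv k : ℂ))).add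
    (((sx_smPer.diff z).hasFDerivAt.const_mul (cf (H k) 0)).add
      (((D.f_smPer hH k).diff z).hasFDerivAt.sub_const (D.f H k 0)))
  rw [sx_fderiv h1, sy_fderiv h2] at e
  simp only [dx, dy, e.fderiv, Y]
  constructor <;> simp
  ring

/-- Local solvability of the perturbed Cauchy-Riemann equation. -/
theorem solve (τ : ℝ) (hτ : 0 < τ) : ∃ B r0, 0 < r0 ∧ 0 < B ∧ ∀ r, 0 < r → r ≤ r0 →
    ∃ ω : ι → ℝ × ℝ → ℂ, (∀ k, SmPer (ω k)) ∧ (∀ k, ω k 0 = 0) ∧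
      (∀ z : ℝ × ℝ, |z.1| < 1 → |z.2| < 1 → ∀ k, dx (ω k) z + ∑ l, (D.jm k l : ℂ) * dy (ω l) z =
        ∑ l, D.a k l (fun i => r * (ω i z).re) * dy (ω l) z) ∧
      (∀ k, ‖dx (ω k) 0 - D.v k‖ ≤ τ) ∧ ∀ k z, ‖ω k z‖ ≤ B := by
  have hK := D.K1_pos
  obtain ⟨r0, hr0, h⟩ := D.exists_fixed (min 1 (τ / (1 + D.K1))) (lt_min one_pos (by positivity))
    (min_le_left _ _)
  have hR := D.R4_nonneg
  refine ⟨D.Bo 3 + D.Bl 3 + 1, r0, hr0, by linarith, fun r r1 r2 => ?_⟩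
  obtain ⟨H, hH, h3, hfix⟩ := h r r1 r2
  have h31 := fun k => (h3 k).trans (min_le_left _ _)
  refine ⟨D.om H, D.om_smPer hH, fun k => ?_, fun z h1 h2 k => ?_, fun k => ?_, fun k z => ?_⟩
  · have e1 : sx 0 = 0 := by simp [sx, sper_id (x := 0) (by simp)]
    have e2 : sy 0 = 0 := by simp [sy, sper_id (x := 0) (by simp)]
    simp [om, oml, e1, e2]
  · have e1 := hfix k z
    have e2 : ∑ l, D.a k l (fun i => r * (D.om H i z).re) * dy (D.om H l) z = D.Phi r H k z := by
      unfold Phi gc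
      simp_rw [(D.om_fderiv hH _ h1 h2).2]
      simp
    rw [e2, e1, (D.om_fderiv hH k h1 h2).1]
    simp_rw [(D.om_fderiv hH _ h1 h2).2, Y, mul_add]
    rw [Finset.sum_add_distrib]
    have e3 := D.f_eq hH k z
    have e4 : ∑ l, (D.jm k l : ℂ) * (D.jv l : ℂ) = - D.v k := by
      have : ∑ l, D.jm k l * D.jv l = - D.v k := by
        unfold jv
        simp_rw [Finset.mul_sum, ← mul_assoc]
        rw [Finset.sum_comm]
        simp_rw [← Finset.sum_mul, D.hj]
        simp
      exact_mod_cast congrArg (fun x : ℝ => (x:ℂ)) this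
    rw [e4]
    linear_combination e3
  · rw [(D.om_fderiv hH k (z := 0) (by simp) (by simp)).1]
    have e : ((D.v k : ℂ) + cf (H k) 0 + dx (D.f H k) 0 - D.v k) = cf (H k) 0 + dx (D.f H k) 0 := by ring
    rw [e]
    have hW : ∀ k, W 0 (H k) ≤ τ / (1 + D.K1) := fun k =>
      (W_mono (by norm_num) (hH k)).trans ((h3 k).trans (min_le_right _ _))
    have n1 := (cf_norm_le_W (hH k) 0).trans (hW k)
    have n2 := norm_le_W (D.f_smPer hH k).dx 0
    have n3 := D.W_f hH 0 hW k
    rw [W_succ 0 (D.f_smPer hH k)] at n3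
    refine (norm_add_le _ _).trans ?_
    have n4 := W_nonneg 0 (D.f H k)
    have n5 := W_nonneg 0 (dy (D.f H k))
    have : τ / (1 + D.K1) + D.K1 * (τ / (1 + D.K1)) = τ := by field_simp
    linarith
  · have := norm_le_W' 4 (D.om_smPer hH k) z
    linarith [D.W4_om hH h31 k]
end Dat
end PshAux

/-! ### Existence of `J`-holomorphic discs -/

namespace PshAux

lemma sb_apply {n : ℕ} (i j : Fin (2*n)) : sb n i j = if j = i then 1 else 0 := by
  simp [sb]

lemma sum_sb {n : ℕ} (w : ESp n) : ∑ l, w l • sb n l = w := by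
  ext k
  simp [sb_apply]

lemma lin_expand {n : ℕ} (L : ESp n →L[ℝ] ESp n) (w : ESp n) (k) :
    L w k = ∑ l, w l * L (sb n l) k := by
  conv_lhs => rw [← sum_sb w, map_sum]
  simp

lemma norm_le_sum_abs {n : ℕ} (w : ESp n) : ‖w‖ ≤ ∑ k, |w k| := by
  conv_lhs => rw [← sum_sb w]
  refine (norm_sum_le _ _).trans (Finset.sum_le_sum fun k _ => ?_)
  rw [norm_smul]; simp [sb]

lemma fderiv_coord {n : ℕ} {lam : ℂ → ESp n} {z : ℂ} (h : DifferentiableAt ℝ lam z) (w : ℂ) (k) :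
    fderiv ℝ lam z w k = fderiv ℝ (fun z => lam z k) z w := by
  have := ((EuclideanSpace.proj (𝕜 := ℝ) k).hasFDerivAt (x := lam z)).comp z h.hasFDerivAt
  have e := this.fderiv
  have : (⇑(EuclideanSpace.proj (𝕜 := ℝ) k) ∘ lam) = fun z => lam z k := by funext z; simp
  rw [this] at e
  rw [e]; simp

/-- Existence of `J`-holomorphic discs through `p` with direction close to `e`. -/
theorem exists_disc {n : ℕ} {M : Set (ESp n)} (S : ACStruct n M) {Ω : Set (ESp n)}
    (hΩ : IsOpen Ω) (hΩM : Ω ⊆ M) {p : ESp n} (hp : p ∈ Ω) (e : ESp n) {τ : ℝ} (hτ : 0 < τ) :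
    ∃ r > 0, ∃ lam : ℂ → ESp n, IsJHoloDisc S lam ∧ MapsTo lam unitDisc Ω ∧ lam 0 = p ∧
      ‖fderiv ℝ lam 0 1 - r • e‖ ≤ r * τ := by
  obtain ⟨ρ, hρ, hball⟩ := Metric.nhds_basis_closedBall.mem_iff.1 (hΩ.mem_nhds hp)
  let b : ContDiffBump p := ⟨ρ/2, ρ, by positivity, by linarith⟩
  let sh : (Fin (2*n) → ℝ) → ESp n := fun η => p + WithLp.toLp 2 η
  have hsh : ContDiff ℝ (⊤ : ℕ∞) sh :=
    contDiff_const.add (PiLp.continuousLinearEquiv 2 ℝ (fun _ : Fin (2*n) => ℝ)).symm.contDiff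
  let ar : Fin (2*n) → Fin (2*n) → (Fin (2*n) → ℝ) → ℝ := fun k l η =>
    b (sh η) * (S.J p (sb n l) k - S.J (sh η) (sb n l) k)
  have har : ∀ k l, ContDiff ℝ (⊤ : ℕ∞) (ar k l) := by
    intro k l
    rw [contDiff_iff_contDiffAt]
    intro η
    by_cases hη : sh η ∈ Ω
    · have hJ : ContDiffAt ℝ (⊤ : ℕ∞) S.J (sh η) :=
        ((S.smooth.mono hΩM).contDiffAt (hΩ.mem_nhds hη))
      have hJ2 : ContDiffAt ℝ (⊤ : ℕ∞) (fun η => S.J (sh η) (sb n l) k) η := by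
        have h1 : ContDiffAt ℝ (⊤ : ℕ∞) (fun η => S.J (sh η) (sb n l)) η :=
          (hJ.comp η hsh.contDiffAt).clm_apply contDiffAt_const
        exact (EuclideanSpace.proj (𝕜 := ℝ) k).contDiff.contDiffAt.comp η h1
      exact (b.contDiff.contDiffAt.comp η hsh.contDiffAt).mul (contDiffAt_const.sub hJ2)
    · have hn : sh η ∉ closedBall p ρ := fun h => hη (hball h)
      have : (ar k l) =ᶠ[𝓝 η] fun _ => 0 := by
        have h1 : (closedBall p ρ)ᶜ ∈ 𝓝 (sh η) := isClosed_closedBall.isOpen_compl.mem_nhds hn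
        filter_upwards [hsh.continuous.continuousAt h1] with y hy
        have hy' : sh y ∉ closedBall p ρ := hy
        have : b (sh y) = 0 := b.zero_of_le_dist (by
          rw [mem_closedBall, not_le] at hy'; exact hy'.le)
        simp [ar, this]
      exact contDiffAt_const.congr_of_eventuallyEq this
  let D : Dat (Fin (2*n)) :=
    { jm := fun k l => S.J p (sb n l) k
      hj := by
        intro k i
        have h1 := lin_expand (S.J p) (S.J p (sb n i)) k
        rw [S.sq p (hΩM hp)] at h1
        have h2 : ∑ l, S.J p (sb n l) k * S.J p (sb n i) l = -(sb n i k) := by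
          rw [← PiLp.neg_apply, h1]; exact Finset.sum_congr rfl fun l _ => mul_comm _ _
        rw [h2, sb_apply]; split_ifs <;> simp
      v := fun k => e k
      a := fun k l η => (ar k l η : ℂ)
      ha := fun k l => Complex.ofRealCLM.contDiff.comp (har k l)
      ha0 := fun k l => by simp [ar, sh] }
  set N : ℝ := ((2*n : ℕ) : ℝ) with hN
  have hN0 : 0 ≤ N := Nat.cast_nonneg _
  obtain ⟨B, r0, hr0, hB, h⟩ := D.solve (τ / (N + 1)) (by positivity)
  obtain ⟨ω, hω, hω0, heq, hdx, hωB⟩ := h (min r0 (ρ / (4 * (N + 1) * B)))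
    (lt_min hr0 (by positivity)) (min_le_left _ _)
  set r := min r0 (ρ / (4 * (N + 1) * B)) with hr
  have hr1 : 0 < r := lt_min hr0 (by positivity)
  have hr2 : r * (4 * (N + 1) * B) ≤ ρ := by
    rw [← le_div_iff₀ (by positivity)]; exact min_le_right _ _
  let g : Fin (2*n) → ℂ → ℝ := fun k z => (ω k (z.re, z.im)).re
  let lam : ℂ → ESp n := fun z => p + WithLp.toLp 2 (fun k => r * g k z)
  have hgk : ∀ k z, HasFDerivAt (g k) (Complex.reCLM.comp ((fderiv ℝ (ω k) (z.re, z.im)).comp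
      (Complex.reCLM.prod Complex.imCLM))) z := by
    intro k z
    have h1 : HasFDerivAt (fun z : ℂ => (z.re, z.im)) (Complex.reCLM.prod Complex.imCLM) z :=
      (Complex.reCLM.prod Complex.imCLM).hasFDerivAt
    have h2 := ((hω k).diff (z.re, z.im)).hasFDerivAt.comp z h1
    exact Complex.reCLM.hasFDerivAt.comp z h2
  have hgsm : ∀ k, ContDiff ℝ (⊤ : ℕ∞) (g k) := fun k =>
    Complex.reCLM.contDiff.comp ((hω k).smooth.comp (Complex.reCLM.prod Complex.imCLM).contDiff)
  have hlam : ContDiff ℝ (⊤ : ℕ∞) lam := hsh.comp (contDiff_pi.2 fun k => contDiff_const.mul (hgsm k))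
  have hd : Differentiable ℝ lam := hlam.differentiable (by simp)
  have hfd : ∀ z w k, fderiv ℝ lam z w k = r * (fderiv ℝ (ω k) (z.re, z.im) (w.re, w.im)).re := by
    intro z w k
    rw [fderiv_coord (hd z)]
    have : HasFDerivAt (fun z => lam z k) _ z := ((hgk k z).const_mul r).const_add (p k)
    rw [this.fderiv]; simp
  have hx : ∀ z k, fderiv ℝ lam z 1 k = r * (dx (ω k) (z.re, z.im)).re := fun z k => by
    rw [hfd]; simp [dx]
  have hy : ∀ z k, fderiv ℝ lam z Complex.I k = r * (dy (ω k) (z.re, z.im)).re := fun z k => by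
    rw [hfd]; simp [dy]
  have hdist : ∀ z, dist (lam z) p ≤ ρ / 2 := by
    intro z
    rw [dist_eq_norm]
    have e1 : lam z - p = WithLp.toLp 2 (fun k => r * g k z) := by simp [lam]
    rw [e1]
    refine (norm_le_sum_abs _).trans ?_
    have : ∀ k ∈ Finset.univ, |(WithLp.toLp 2 (fun k => r * g k z) : ESp n) k| ≤ r * B := by
      intro k _
      simp only [abs_mul, abs_of_pos hr1]
      exact mul_le_mul_of_nonneg_left ((Complex.abs_re_le_norm _).trans (hωB k _)) hr1.le
    have h5 := Finset.sum_le_sum this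
    simp only [Finset.sum_const, Finset.card_univ, Fintype.card_fin, nsmul_eq_mul] at h5
    rw [← hN] at h5
    refine h5.trans ?_
    nlinarith [mul_pos hr1 hB, mul_nonneg hN0 (mul_pos hr1 hB).le]
  have hmaps : ∀ z, lam z ∈ Ω := fun z => hball (by
    rw [mem_closedBall]; linarith [hdist z])
  refine ⟨r, hr1, lam, ⟨fun z _ => hlam.contDiffAt, fun z _ => hΩM (hmaps z), fun z hz => ?_⟩,
    fun z _ => hmaps z, ?_, ?_⟩
  · have hz' : ‖z‖ < 1 := by simpa [unitDisc] using hz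
    have q1 := (Complex.abs_re_le_norm z).trans_lt hz'
    have q2 := (Complex.abs_im_le_norm z).trans_lt hz'
    have key : fderiv ℝ lam z 1 = - S.J (lam z) (fderiv ℝ lam z Complex.I) := by
      ext k
      have h1 := congrArg Complex.re (heq (z.re, z.im) q1 q2 k)
      have hsz : sh (fun i => r * (ω i (z.re, z.im)).re) = lam z := rfl
      have hb1 : b (lam z) = 1 := b.one_of_mem_closedBall (hdist z)
      simp only [D, ar, hsz, hb1, one_mul, Complex.add_re, Complex.re_sum, Complex.re_ofReal_mul] at h1
      rw [PiLp.neg_apply, lin_expand (S.J (lam z)), hx]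
      simp_rw [hy]
      simp_rw [sub_mul] at h1
      rw [Finset.sum_sub_distrib] at h1
      have h2 : (dx (ω k) (z.re, z.im)).re =
        - ∑ l, S.J (lam z) (sb n l) k * (dy (ω l) (z.re, z.im)).re := by linarith
      rw [h2, mul_neg, Finset.mul_sum]
      congr 1
      exact Finset.sum_congr rfl fun l _ => by ring
    rw [key, map_neg, S.sq _ (hΩM (hmaps z)), neg_neg]
  · ext k; simp [lam, g, show ((0:ℝ),(0:ℝ)) = 0 from rfl, hω0]
  · refine (norm_le_sum_abs _).trans ?_
    have : ∀ k ∈ Finset.univ, |(fderiv ℝ lam 0 1 - r • e) k| ≤ r * (τ / (N + 1)) := by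
      intro k _
      have : (fderiv ℝ lam 0 1 - r • e) k = r * (dx (ω k) 0 - D.v k).re := by
        rw [PiLp.sub_apply, hx]
        simp [D, mul_sub, show ((0:ℝ),(0:ℝ)) = 0 from rfl]
      rw [this, abs_mul, abs_of_pos hr1]
      exact mul_le_mul_of_nonneg_left ((Complex.abs_re_le_norm _).trans (hdx k)) hr1.le
    have h5 := Finset.sum_le_sum this
    simp only [Finset.sum_const, Finset.card_univ, Fintype.card_fin, nsmul_eq_mul] at h5
    rw [← hN] at h5
    refine h5.trans ?_
    have : N * (r * (τ / (N+1))) = r * τ * (N / (N+1)) := by ring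
    rw [this]
    exact mul_le_of_le_one_right (by positivity) ((div_le_one (by positivity)).2 (by linarith))

end PshAux

/-! ### Second order expansion of circular means -/

namespace PshAux

/-- Second directional derivative at the origin. -/
def dd {F : Type*} [NormedAddCommGroup F] [NormedSpace ℝ F] (f : ℂ → F) (w : ℂ) : F :=
  fderiv ℝ (fun z => fderiv ℝ f z w) 0 w

lemma dd_eq {F : Type*} [NormedAddCommGroup F] [NormedSpace ℝ F] {f : ℂ → F}
    (h : ContDiffAt ℝ 2 f 0) (w : ℂ) : dd f w = fderiv ℝ (fderiv ℝ f) 0 w w := by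
  have h1 : DifferentiableAt ℝ (fderiv ℝ f) 0 :=
    (h.fderiv_right (m := 1) (by norm_num)).differentiableAt (by norm_num)
  unfold dd
  rw [fderiv_clm_apply h1 (differentiableAt_const _)]
  simp

lemma taylor2 {F : ℂ → ℝ} (h : ContDiffAt ℝ 2 F 0) {η : ℝ} (hη : 0 < η) :
    ∃ δ > 0, (∀ z, ‖z‖ < δ → DifferentiableAt ℝ F z) ∧ ∀ z, ‖z‖ < δ →
      |F z - F 0 - fderiv ℝ F 0 z - (1/2) * fderiv ℝ (fderiv ℝ F) 0 z z| ≤ η * ‖z‖^2 := by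
  have h1 : DifferentiableAt ℝ (fderiv ℝ F) 0 :=
    (h.fderiv_right (m := 1) (by norm_num)).differentiableAt (by norm_num)
  have hsym : IsSymmSndFDerivAt ℝ F 0 := h.isSymmSndFDerivAt (by simp)
  have hdiff : ∀ᶠ z in 𝓝 (0:ℂ), DifferentiableAt ℝ F z :=
    (h.eventually (by simp)).mono fun z hz => hz.differentiableAt (by norm_num)
  have ho := h1.hasFDerivAt.isLittleO.def hη
  obtain ⟨δ, hδ, hball⟩ := Metric.eventually_nhds_iff.1 (hdiff.and ho)
  refine ⟨δ, hδ, fun z hz => (hball (by simpa using hz)).1, fun z hz => ?_⟩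
  set Q := fderiv ℝ (fderiv ℝ F) 0
  set R : ℂ → ℝ := fun z => F z - F 0 - fderiv ℝ F 0 z - (1/2) * Q z z with hR
  have hQ : ∀ z, HasFDerivAt (fun z => Q z z) (Q z + Q.flip z) z := by
    intro z
    have := (Q.hasFDerivAt (x := z)).clm_apply (hasFDerivAt_id z)
    refine this.congr_fderiv ?_
    ext w; simp
  have hRd : ∀ w, ‖w‖ < δ → HasFDerivAt R (fderiv ℝ F w - fderiv ℝ F 0 - Q w) w := by
    intro w hw
    have hF := (hball (by simpa using hw)).1.hasFDerivAt
    have := ((hF.sub_const (F 0)).sub (fderiv ℝ F 0).hasFDerivAt).sub ((hQ w).const_mul (1/2))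
    refine this.congr_fderiv ?_
    have hfl : Q.flip w = Q w := by
      ext; exact hsym.eq _ _
    rw [hfl, ← two_smul ℝ (Q w), smul_smul]; norm_num
  have hb : ∀ w ∈ closedBall (0:ℂ) ‖z‖, ‖fderiv ℝ F w - fderiv ℝ F 0 - Q w‖ ≤ η * ‖z‖ := by
    intro w hw
    have hw' : ‖w‖ ≤ ‖z‖ := by simpa using hw
    have := (hball (show dist w 0 < δ by simpa using hw'.trans_lt hz)).2
    rw [sub_zero] at this
    exact this.trans (mul_le_mul_of_nonneg_left hw' hη.le)
  have := (convex_closedBall (0:ℂ) ‖z‖).norm_image_sub_le_of_norm_hasFDerivWithin_le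
    (f := R) (C := η * ‖z‖) (x := 0) (y := z)
    (fun w hw => (hRd w ((by simpa using hw : ‖w‖ ≤ ‖z‖).trans_lt hz)).hasFDerivWithinAt)
    hb (by simp) (by simp)
  have hR0 : R 0 = 0 := by simp [hR]
  rw [hR0, sub_zero, sub_zero, Real.norm_eq_abs] at this
  calc _ = |R z| := rfl
    _ ≤ _ := this
    _ = _ := by ring

lemma circ_pt (ϱ t : ℝ) : (0:ℂ) + ϱ * Complex.exp (t * Complex.I) =
    (ϱ * Real.cos t) • (1:ℂ) + (ϱ * Real.sin t) • Complex.I := by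
  rw [Complex.exp_mul_I, ← Complex.ofReal_cos, ← Complex.ofReal_sin]
  simp only [Complex.real_smul]; push_cast; ring

lemma norm_circ {ϱ : ℝ} (h : 0 ≤ ϱ) (t : ℝ) : ‖(0:ℂ) + ϱ * Complex.exp (t * Complex.I)‖ = ϱ := by
  rw [zero_add, norm_mul, Complex.norm_exp_ofReal_mul_I, Complex.norm_real, Real.norm_of_nonneg h, mul_one]

lemma circ_cont (ϱ : ℝ) : Continuous fun t : ℝ => (0:ℂ) + ϱ * Complex.exp (t * Complex.I) := by
  fun_prop

/-- The average over the circle of an (affine) linear plus quadratic form. -/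
lemma circ_quad (ϱ a b c d e f : ℝ) :
    ∫ t in (0:ℝ)..(2 * Real.pi), (a + (b * Real.cos t + c * Real.sin t) +
      ϱ^2 * (d * Real.cos t ^ 2 + e * (Real.sin t * Real.cos t) + f * Real.sin t ^ 2))
      = 2 * Real.pi * (a + ϱ^2 * (d + f) / 2) := by
  have i1 : IntervalIntegrable (fun t => b * Real.cos t) volume 0 (2 * Real.pi) :=
    (by fun_prop : Continuous _).intervalIntegrable _ _
  rw [intervalIntegral.integral_add, intervalIntegral.integral_add, intervalIntegral.integral_add,
    intervalIntegral.integral_const_mul, intervalIntegral.integral_const_mul,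
    intervalIntegral.integral_const_mul, intervalIntegral.integral_add, intervalIntegral.integral_add,
    intervalIntegral.integral_const_mul, intervalIntegral.integral_const_mul,
    intervalIntegral.integral_const_mul, integral_cos, integral_sin, integral_cos_sq,
    integral_sin_sq, integral_sin_mul_cos₁, intervalIntegral.integral_const]
  · simp; ring
  all_goals exact (by fun_prop : Continuous _).intervalIntegrable _ _

/-- Second order expansion of circular means. -/
theorem circAvg_tendsto {F : ℂ → ℝ} (h : ContDiffAt ℝ 2 F 0) :
    Tendsto (fun ϱ => (circAvg F 0 ϱ - F 0) / ϱ^2) (𝓝[>] 0) (𝓝 ((dd F 1 + dd F Complex.I) / 4)) := by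
  rw [dd_eq h, dd_eq h, Metric.tendsto_nhds]
  intro η hη
  obtain ⟨δ, hδ, hd, hT⟩ := taylor2 h (half_pos hη)
  set Q := fderiv ℝ (fderiv ℝ F) 0
  set D := fderiv ℝ F 0
  have hpi := Real.pi_pos
  filter_upwards [Ioo_mem_nhdsGT hδ] with ϱ hϱ
  have hϱ0 := hϱ.1
  set z : ℝ → ℂ := fun t => 0 + ϱ * Complex.exp (t * Complex.I) with hz
  have hnz : ∀ t, ‖z t‖ = ϱ := norm_circ hϱ0.le
  set q : ℝ → ℝ := fun t => F 0 + D (z t) + (1/2) * Q (z t) (z t) with hq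
  have hqe : ∀ t, q t = F 0 + ((ϱ * D 1) * Real.cos t + (ϱ * D Complex.I) * Real.sin t) +
      ϱ^2 * ((Q 1 1 / 2) * Real.cos t ^ 2 + ((Q 1 Complex.I + Q Complex.I 1)/2) * (Real.sin t * Real.cos t)
        + (Q Complex.I Complex.I / 2) * Real.sin t ^ 2) := by
    intro t
    simp only [hq, hz, circ_pt, map_add, map_smul, add_apply,
      smul_apply, smul_eq_mul]
    ring
  have hqi : ∫ t in (0:ℝ)..(2 * Real.pi), q t = 2 * Real.pi * (F 0 + ϱ^2 * ((Q 1 1 + Q Complex.I Complex.I) / 4)) := by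
    simp_rw [hqe]
    rw [circ_quad]; ring
  have hqc : Continuous q := by
    rw [show q = _ from funext hqe]; fun_prop
  have hFc : Continuous fun t => F (z t) := by
    rw [continuous_iff_continuousAt]
    intro t
    exact ContinuousAt.comp (f := z) (hd (z t) (by rw [hnz]; exact hϱ.2)).continuousAt
      (circ_cont ϱ).continuousAt
  have hbd : |(∫ t in (0:ℝ)..(2 * Real.pi), (F (z t) - q t))| ≤ η/2 * ϱ^2 * |2 * Real.pi - 0| := by
    rw [← Real.norm_eq_abs]
    refine intervalIntegral.norm_integral_le_of_norm_le_const fun t _ => ?_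
    have := hT (z t) (by rw [hnz]; exact hϱ.2)
    rw [hnz] at this
    rw [Real.norm_eq_abs]
    convert this using 2
    simp only [hq]; ring
  rw [intervalIntegral.integral_sub (hFc.intervalIntegrable _ _) (hqc.intervalIntegrable _ _), hqi,
    sub_zero, abs_of_pos (by positivity : (0:ℝ) < 2 * Real.pi)] at hbd
  have e : (circAvg F 0 ϱ - F 0) / ϱ^2 - (Q 1 1 + Q Complex.I Complex.I) / 4 =
      ((∫ t in (0:ℝ)..(2 * Real.pi), F (z t)) -
        2 * Real.pi * (F 0 + ϱ^2 * ((Q 1 1 + Q Complex.I Complex.I) / 4))) / (2 * Real.pi * ϱ^2) := by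
    unfold circAvg
    field_simp
    ring
  rw [Real.dist_eq, e, abs_div, abs_of_pos (by positivity : (0:ℝ) < 2 * Real.pi * ϱ^2),
    div_lt_iff₀ (by positivity)]
  refine hbd.trans_lt ?_
  have : 0 < η * ϱ^2 * Real.pi := by positivity
  linarith

end PshAux

/-! ### Second derivatives along discs and paraboloids -/

namespace PshAux

lemma two_le_top : (2 : WithTop ℕ∞) ≤ ((⊤ : ℕ∞) : WithTop ℕ∞) :=
  WithTop.coe_le_coe.2 (le_top : (2:ℕ∞) ≤ ⊤)

section Calc
variable {F : Type*} [NormedAddCommGroup F] [NormedSpace ℝ F]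

lemma diff_fderiv {f : ℂ → F} (h : ContDiffAt ℝ 2 f 0) : DifferentiableAt ℝ (fderiv ℝ f) 0 :=
  (h.fderiv_right (m := 1) (by norm_num)).differentiableAt (by norm_num)

lemma diff_fderiv_apply {f : ℂ → F} (h : ContDiffAt ℝ 2 f 0) (w : ℂ) :
    DifferentiableAt ℝ (fun z => fderiv ℝ f z w) 0 :=
  (diff_fderiv h).clm_apply (differentiableAt_const _)

lemma diff_near {f : ℂ → F} (h : ContDiffAt ℝ 2 f 0) : ∀ᶠ z in 𝓝 (0:ℂ), DifferentiableAt ℝ f z :=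
  (h.eventually (by simp)).mono fun _ hz => hz.differentiableAt (by norm_num)

lemma dd_sub {f g : ℂ → F} (hf : ContDiffAt ℝ 2 f 0) (hg : ContDiffAt ℝ 2 g 0) (w : ℂ) :
    dd (fun z => f z - g z) w = dd f w - dd g w := by
  unfold dd
  have : (fun z => fderiv ℝ (fun z => f z - g z) z w) =ᶠ[𝓝 0]
      fun z => fderiv ℝ f z w - fderiv ℝ g z w := by
    filter_upwards [diff_near hf, diff_near hg] with z h1 h2
    rw [fderiv_fun_sub h1 h2]; simp
  rw [this.fderiv_eq, fderiv_fun_sub (diff_fderiv_apply hf w) (diff_fderiv_apply hg w)]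
  simp

/-- The paraboloid-type parametrisation `y + x e + y e' + |z|² c`. -/
def qd (y e e' c : F) (z : ℂ) : F := y + (z.re • e + z.im • e' + (z.re^2 + z.im^2) • c)

lemma qd_hasFDeriv (y e e' c : F) (z : ℂ) : HasFDerivAt (qd y e e' c)
    (Complex.reCLM.smulRight e + Complex.imCLM.smulRight e' +
      ((2 * z.re) • Complex.reCLM + (2 * z.im) • Complex.imCLM).smulRight c) z := by
  have h1 : HasFDerivAt (fun z : ℂ => z.re) Complex.reCLM z := Complex.reCLM.hasFDerivAt
  have h2 : HasFDerivAt (fun z : ℂ => z.im) Complex.imCLM z := Complex.imCLM.hasFDerivAt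
  have h3 : HasFDerivAt (fun z : ℂ => z.re^2 + z.im^2)
      ((2 * z.re) • Complex.reCLM + (2 * z.im) • Complex.imCLM) z := by
    refine ((h1.pow 2).add (h2.pow 2)).congr_fderiv ?_
    simp
  exact (((h1.smul_const e).add (h2.smul_const e')).add (h3.smul_const c)).const_add y

lemma qd_smooth (y e e' c : F) : ContDiff ℝ (⊤ : ℕ∞) (qd y e e' c) := by
  have h1 : ContDiff ℝ (⊤ : ℕ∞) (fun z : ℂ => z.re) := Complex.reCLM.contDiff
  have h2 : ContDiff ℝ (⊤ : ℕ∞) (fun z : ℂ => z.im) := Complex.imCLM.contDiff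
  unfold qd
  exact contDiff_const.add (((h1.smul contDiff_const).add (h2.smul contDiff_const)).add
    (((h1.pow 2).add (h2.pow 2)).smul contDiff_const))

lemma qd_fderiv (y e e' c : F) (z w : ℂ) : fderiv ℝ (qd y e e' c) z w =
    w.re • e + w.im • e' + (2 * (z.re * w.re + z.im * w.im)) • c := by
  rw [(qd_hasFDeriv y e e' c z).fderiv]
  simp; ring_nf

lemma dd_qd (y e e' c : F) (w : ℂ) : dd (qd y e e' c) w = (2 * (w.re^2 + w.im^2)) • c := by
  unfold dd
  have : (fun z => fderiv ℝ (qd y e e' c) z w) = fun z => 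
      (w.re • e + w.im • e') + (2 * (z.re * w.re + z.im * w.im)) • c := by
    funext z; exact qd_fderiv y e e' c z w
  rw [this]
  have h1 : HasFDerivAt (fun z : ℂ => z.re) Complex.reCLM 0 := Complex.reCLM.hasFDerivAt
  have h2 : HasFDerivAt (fun z : ℂ => z.im) Complex.imCLM 0 := Complex.imCLM.hasFDerivAt
  have h3 : HasFDerivAt (fun z : ℂ => (w.re • e + w.im • e') + (2 * (z.re * w.re + z.im * w.im)) • c) _ 0 :=
    ((((h1.mul_const w.re).add (h2.mul_const w.im)).const_mul 2).smul_const c).const_add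
    (w.re • e + w.im • e')
  rw [h3.fderiv]
  simp; ring_nf

lemma dd_comp {V : F → ℝ} (hV : ContDiff ℝ (⊤ : ℕ∞) V) {X : ℂ → F} (hX : ContDiff ℝ (⊤ : ℕ∞) X) (w : ℂ) :
    dd (fun z => V (X z)) w = fderiv ℝ (fderiv ℝ V) (X 0) (fderiv ℝ X 0 w) (fderiv ℝ X 0 w)
      + fderiv ℝ V (X 0) (dd X w) := by
  unfold dd
  have hVd : Differentiable ℝ V := hV.differentiable (by simp)
  have hXd : Differentiable ℝ X := hX.differentiable (by simp)
  have hV2 : Differentiable ℝ (fderiv ℝ V) := (hV.fderiv_right (m := 1) (by rw [one_add_one_eq_two]; exact two_le_top)).differentiable (by simp)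
  have : (fun z => fderiv ℝ (fun z => V (X z)) z w) = fun z => fderiv ℝ V (X z) (fderiv ℝ X z w) := by
    funext z
    have := (hVd (X z)).hasFDerivAt.comp z (hXd z).hasFDerivAt
    rw [show (fun z => V (X z)) = V ∘ X from rfl, this.fderiv]; simp
  rw [this]
  have h1 : HasFDerivAt (fun z => fderiv ℝ V (X z)) _ 0 := (hV2 (X 0)).hasFDerivAt.comp 0 (hXd 0).hasFDerivAt
  have h2 := (diff_fderiv_apply (hX.contDiffAt.of_le two_le_top) w).hasFDerivAt
  have := h1.clm_apply h2
  rw [this.fderiv]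
  simp [add_comm]

end Calc

lemma dd_normSq {E : Type*} [NormedAddCommGroup E] [InnerProductSpace ℝ E] {g : ℂ → E}
    (hg : ContDiffAt ℝ 2 g 0) (w : ℂ) :
    dd (fun z => ‖g z‖^2) w = 2 * ‖fderiv ℝ g 0 w‖^2 + 2 * inner ℝ (g 0) (dd g w) := by
  unfold dd
  have : (fun z => fderiv ℝ (fun z => ‖g z‖^2) z w) =ᶠ[𝓝 0]
      fun z => 2 * inner ℝ (g z) (fderiv ℝ g z w) := by
    filter_upwards [diff_near hg] with z h1
    rw [h1.hasFDerivAt.norm_sq.fderiv]; simp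
  rw [this.fderiv_eq]
  have h1 := (hg.differentiableAt (by norm_num)).hasFDerivAt
  have h2 := (diff_fderiv_apply hg w).hasFDerivAt
  have := ((h1.inner ℝ h2).const_mul 2).fderiv
  rw [this]
  simp
  ring

variable {n : ℕ} {M : Set (ESp n)}

/-- The bilinear form with `Δλ = cB (λ_x, λ_x)` along `J`-holomorphic discs. -/
def cB (S : ACStruct n M) (p a b : ESp n) : ESp n :=
  fderiv ℝ S.J p (S.J p a) b + S.J p (fderiv ℝ S.J p a b)

/-- The Laplacian at the centre of a `J`-holomorphic disc is determined by `λ_x(0)`, by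
differentiating the Cauchy-Riemann equation. -/
lemma dd_disc (S : ACStruct n M) {lam : ℂ → ESp n} (h : IsJHoloDisc S lam)
    (hJ : ContDiffAt ℝ (⊤ : ℕ∞) S.J (lam 0)) :
    dd lam 1 + dd lam Complex.I = cB S (lam 0) (fderiv ℝ lam 0 1) (fderiv ℝ lam 0 1) := by
  have h0 : (0:ℂ) ∈ unitDisc := by simp [unitDisc]
  have hl2 : ContDiffAt ℝ 2 lam 0 := (h.smooth 0 h0).of_le two_le_top
  have hl := (hl2.differentiableAt (by norm_num)).hasFDerivAt
  have hJd := (hJ.differentiableAt (by simp)).hasFDerivAt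
  have hev : (fun z => fderiv ℝ lam z Complex.I) =ᶠ[𝓝 0] fun z => S.J (lam z) (fderiv ℝ lam z 1) := by
    filter_upwards [isOpen_ball.mem_nhds h0] with z hz using h.CR z hz
  have hx := (diff_fderiv_apply hl2 1).hasFDerivAt
  have hJl : HasFDerivAt (fun z => S.J (lam z)) _ 0 := hJd.comp 0 hl
  have hp := hJl.clm_apply hx
  have hsym : IsSymmSndFDerivAt ℝ lam 0 := hl2.isSymmSndFDerivAt (by simp)
  have hmix : ∀ v w, fderiv ℝ (fun z => fderiv ℝ lam z v) 0 w = fderiv ℝ (fderiv ℝ lam) 0 w v := by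
    intro v w
    rw [fderiv_clm_apply (diff_fderiv hl2) (differentiableAt_const _)]; simp
  have e1 : ∀ w, fderiv ℝ (fun z => fderiv ℝ lam z Complex.I) 0 w =
      S.J (lam 0) (fderiv ℝ (fun z => fderiv ℝ lam z 1) 0 w) +
      fderiv ℝ S.J (lam 0) (fderiv ℝ lam 0 w) (fderiv ℝ lam 0 1) := by
    intro w
    rw [hev.fderiv_eq, hp.fderiv]; simp
  have e2 : fderiv ℝ (fun z => fderiv ℝ lam z 1) 0 Complex.I =
      fderiv ℝ (fun z => fderiv ℝ lam z Complex.I) 0 1 := by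
    rw [hmix, hmix]; exact hsym.eq _ _
  unfold dd cB
  rw [e1 Complex.I, e2, e1 1, map_add, S.sq _ (h.maps h0), h.CR 0 h0]
  abel

end PshAux

/-! ### Circular means of sup-convolutions -/

namespace PshAux
variable {n : ℕ} {M : Set (ESp n)}

lemma usc_circle_measurable {f : ℂ → ℝ} (hf : UpperSemicontinuousOn f unitDisc) {s : ℝ} (hs : 0 ≤ s)
    (hs1 : s < 1) : Measurable fun t : ℝ => f (0 + s * Complex.exp (t * Complex.I)) := by
  have hmem : ∀ t : ℝ, (0:ℂ) + s * Complex.exp (t * Complex.I) ∈ unitDisc := by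
    intro t; rw [unitDisc, mem_ball_zero_iff, norm_circ hs]; exact hs1
  have : UpperSemicontinuous fun t : ℝ => f (0 + s * Complex.exp (t * Complex.I)) := by
    intro t y hy
    have h1 := hf _ (hmem t) y hy
    have h2 : Tendsto (fun t : ℝ => (0:ℂ) + s * Complex.exp (t * Complex.I)) (𝓝 t)
        (𝓝[unitDisc] (0 + s * Complex.exp (t * Complex.I))) :=
      tendsto_nhdsWithin_iff.2 ⟨(circ_cont s).continuousAt, Eventually.of_forall hmem⟩
    exact h2.eventually h1
  exact this.measurable

lemma intervalIntegrable_of_bdd {f : ℝ → ℝ} (hf : Measurable f) {C a b : ℝ} (h : ∀ t, |f t| ≤ C) :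
    IntervalIntegrable f volume a b := by
  have h1 : IntervalIntegrable (fun _ : ℝ => C) volume a b := intervalIntegrable_const
  exact h1.mono_fun hf.aestronglyMeasurable (Eventually.of_forall fun t => by
    rw [Real.norm_eq_abs]; exact (h t).trans (le_abs_self C))

/-- Numerical part of the estimate of the Laplacian of `|X - λ|²` in `visc`. -/
lemma visc_arith {Λ q δ r : ℝ} (hΛ : 1 ≤ Λ) :
    2 * (r * δ)^2 + 2 * (r * (Λ * (q + 2 * δ)))^2 + 2 * (q * (r^2 * (Λ * (q + 4 * δ))))
      ≤ 24 * Λ^2 * (q^2 + δ^2) * r^2 := by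
  have s1 : (q + 2 * δ)^2 ≤ 8 * (q^2 + δ^2) := by
    have := sq_nonneg (q - 2 * δ); have := sq_nonneg q; nlinarith
  have s2 : q * (q + 4 * δ) ≤ 3 * (q^2 + δ^2) := by
    have := sq_nonneg (q - δ); have := sq_nonneg δ; nlinarith
  have s3 : Λ ≤ Λ^2 := by nlinarith
  have s4 : (1:ℝ) ≤ Λ^2 := by nlinarith
  have k1 : 2 * (r * δ)^2 ≤ r^2 * (2 * Λ^2 * (q^2 + δ^2)) := by
    have : 1 * δ^2 ≤ Λ^2 * (q^2 + δ^2) := by gcongr; have := sq_nonneg q; linarith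
    have := mul_le_mul_of_nonneg_left this (by positivity : 0 ≤ 2 * r^2)
    linarith
  have k2 : 2 * (r * (Λ * (q + 2 * δ)))^2 ≤ r^2 * (16 * Λ^2 * (q^2 + δ^2)) := by
    have := mul_le_mul_of_nonneg_left s1 (by positivity : 0 ≤ 2 * r^2 * Λ^2)
    linarith
  have k3 : 2 * (q * (r^2 * (Λ * (q + 4 * δ)))) ≤ r^2 * (6 * Λ^2 * (q^2 + δ^2)) := by
    have a1 := mul_le_mul_of_nonneg_left s2 (by positivity : 0 ≤ 2 * r^2 * Λ)
    have a2 : Λ * (r^2 * (6 * (q^2 + δ^2))) ≤ Λ^2 * (r^2 * (6 * (q^2 + δ^2))) := by gcongr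
    linarith
  linarith

set_option maxHeartbeats 1000000 in
/-- Viscosity-type differential inequality for a sup-convolution `v` of `u`, at a point `y` whose
maximiser is `p`, along the frozen paraboloid with the data of the point `x`. -/
theorem visc (hM : IsOpen M) (S : ACStruct n M) {Ω U : Set (ESp n)} (hΩM : Ω ⊆ M)
    (hU : IsOpen U) (hUΩ : U ⊆ Ω) {u : ESp n → ℝ} (hu : JPsh S Ω u) {C : ℝ}
    (hC : ∀ x ∈ Ω, |u x| ≤ C) {v : ESp n → ℝ} (hvc : Continuous v) {ε : ℝ} (hε : 0 < ε)
    (hv : ∀ q, ∀ z ∈ U, u z - ‖q - z‖^2 / (2 * ε) ≤ v q) {x y p e : ESp n} (hp : p ∈ U)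
    (hvy : v y = u p - ‖y - p‖^2 / (2 * ε)) {Λ δ : ℝ} (hΛ : 1 ≤ Λ) (hδ : 0 < δ) (hδ1 : δ ≤ 1)
    (hxy : ‖x - y‖ ≤ δ) (he : ‖e‖ ≤ 1)
    (h1 : ∀ w, ‖S.J p w‖ ≤ Λ * ‖w‖) (h2 : ‖S.J x e - S.J p e‖ ≤ Λ * ‖x - p‖)
    (h3 : ∀ a b, ‖cB S p a b‖ ≤ Λ * ‖a‖ * ‖b‖)
    (h4 : ‖cB S x e e - cB S p e e‖ ≤ Λ * ‖x - p‖) {η : ℝ} (hη : 0 < η) :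
    ∀ᶠ ϱ in 𝓝[>] (0:ℝ), -(3 * Λ^2 / ε) * (‖y - p‖^2 + δ^2) - η ≤
      (circAvg (fun z => v (qd y e (S.J x e) ((1/4 : ℝ) • cB S x e e) z)) 0 ϱ - v y) / ϱ^2 := by
  obtain ⟨r, hr, lam, hlam, hmaps, hlam0, hdir⟩ := exists_disc S hU (hUΩ.trans hΩM) hp e hδ
  have h0 : (0:ℂ) ∈ unitDisc := by simp [unitDisc]
  set c := (1/4 : ℝ) • cB S x e e with hc
  set Xr : ℂ → ESp n := qd y (r • e) (r • S.J x e) (r^2 • c) with hXr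
  have hXs : ∀ z, qd y e (S.J x e) c (r * z) = Xr z := by
    intro z
    simp only [hXr, qd, smul_smul, Complex.re_ofReal_mul, Complex.im_ofReal_mul]
    congr 3
    · congr 1; ring
    · congr 1; ring
    · congr 1; ring
  have hl2 : ContDiffAt ℝ 2 lam 0 := (hlam.smooth 0 h0).of_le two_le_top
  have hX2 : ContDiffAt ℝ 2 Xr 0 := (qd_smooth _ _ _ _).contDiffAt.of_le two_le_top
  set g : ℂ → ESp n := fun z => Xr z - lam z with hg
  have hg2 : ContDiffAt ℝ 2 g 0 := hX2.sub hl2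
  set m : ℂ → ℝ := fun z => ‖g z‖^2 with hm
  have hm2 : ContDiffAt ℝ 2 m 0 := hg2.norm_sq ℝ
  set ξ := fderiv ℝ lam 0 1 with hξ
  have hg0 : g 0 = y - p := by simp [hg, hXr, qd, hlam0]
  have hm0 : m 0 = ‖y - p‖^2 := by simp only [hm, hg0]
  have hgf : ∀ w, fderiv ℝ g 0 w = fderiv ℝ Xr 0 w - fderiv ℝ lam 0 w := by
    intro w
    rw [hg, fderiv_fun_sub (hX2.differentiableAt (by norm_num)) (hl2.differentiableAt (by norm_num))]
    simp
  have hgx : ‖fderiv ℝ g 0 1‖ ≤ r * δ := by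
    rw [hgf, hXr, qd_fderiv, norm_sub_rev]; simpa using hdir
  have hd : ‖x - p‖ ≤ ‖y - p‖ + δ := by
    have : x - p = (y - p) + (x - y) := by abel
    rw [this]; exact (norm_add_le _ _).trans (by linarith)
  set q := ‖y - p‖ with hq
  have hq0 : 0 ≤ q := norm_nonneg _
  have hgy : ‖fderiv ℝ g 0 Complex.I‖ ≤ r * (Λ * (q + 2 * δ)) := by
    rw [hgf, hXr, qd_fderiv, hlam.CR 0 h0, hlam0]
    have e1 : (Complex.I.re • r • e + Complex.I.im • r • (S.J x) e +
        (2 * ((0:ℂ).re * Complex.I.re + (0:ℂ).im * Complex.I.im)) • r ^ 2 • c - (S.J p) (fderiv ℝ lam 0 1))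
        = r • (S.J x e - S.J p e) - S.J p (ξ - r • e) := by
      simp [map_sub, smul_sub, hξ]
    rw [e1]
    refine (norm_sub_le _ _).trans ?_
    rw [norm_smul, Real.norm_of_nonneg hr.le]
    have t1 := mul_le_mul_of_nonneg_left (h2.trans (mul_le_mul_of_nonneg_left hd (by linarith))) hr.le
    have t2 := (h1 (ξ - r • e)).trans (mul_le_mul_of_nonneg_left hdir (by linarith))
    linarith
  have hJp : ContDiffAt ℝ (⊤ : ℕ∞) S.J p := S.smooth.contDiffAt (hM.mem_nhds (hΩM (hUΩ hp)))
  have hddl := dd_disc S hlam (by rw [hlam0]; exact hJp)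
  rw [hlam0, ← hξ] at hddl
  -- The Laplacian of `X - λ` at the origin: the coefficient `cB x e e / 4` of the paraboloid is chosen
  -- so that `ΔX = r² cB x e e`, while `Δλ = cB p ξ ξ` with `ξ = λ_x(0)` close to `r e`.
  have hddg : ‖dd g 1 + dd g Complex.I‖ ≤ r^2 * (Λ * (q + 4 * δ)) := by
    rw [hg, dd_sub hX2 hl2, dd_sub hX2 hl2, hXr, dd_qd, dd_qd]
    set ζ := ξ - r • e with hζ
    have hcadd1 : ∀ a b d, cB S p (a + b) d = cB S p a d + cB S p b d := by
      intro a b d; simp [cB, map_add]; abel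
    have hcadd2 : ∀ a b d, cB S p d (a + b) = cB S p d a + cB S p d b := by
      intro a b d; simp [cB, map_add]; abel
    have hcs : cB S p (r • e) (r • e) = r^2 • cB S p e e := by
      simp only [cB, map_smul, smul_apply, smul_smul, smul_add]; ring_nf
    have hξe : ξ = ζ + r • e := by simp [hζ]
    have hcξ : cB S p ξ ξ = cB S p ζ ξ + cB S p (r • e) ζ + r^2 • cB S p e e := by
      conv_lhs => rw [hξe, hcadd1, ← hξe]
      rw [add_assoc, ← hcs, ← hcadd2, ← hξe]
    have e1 : (2 * ((1:ℂ).re ^ 2 + (1:ℂ).im ^ 2)) • r ^ 2 • c - dd lam 1 +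
        ((2 * (Complex.I.re ^ 2 + Complex.I.im ^ 2)) • r ^ 2 • c - dd lam Complex.I)
        = r^2 • (cB S x e e - cB S p e e) - (cB S p ζ ξ + cB S p (r • e) ζ) := by
      have : dd lam Complex.I = cB S p ξ ξ - dd lam 1 := by rw [← hddl]; abel
      rw [this, hcξ, hc]
      simp only [Complex.one_re, Complex.one_im, Complex.I_re, Complex.I_im]
      module
    rw [e1]
    have hre : ‖r • e‖ ≤ r := by
      rw [norm_smul, Real.norm_of_nonneg hr.le]; exact mul_le_of_le_one_right hr.le he
    have hξn : ‖ξ‖ ≤ 2 * r := by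
      rw [hξe]; refine (norm_add_le _ _).trans ?_
      have : r * δ ≤ r := mul_le_of_le_one_right hr.le hδ1
      linarith
    have t0 : ‖r^2 • (cB S x e e - cB S p e e)‖ ≤ r^2 * (Λ * (q + δ)) := by
      rw [norm_smul, Real.norm_of_nonneg (by positivity)]
      exact mul_le_mul_of_nonneg_left (h4.trans (mul_le_mul_of_nonneg_left hd (by linarith))) (by positivity)
    have t1 : ‖cB S p ζ ξ‖ ≤ Λ * (r * δ) * (2 * r) := (h3 _ _).trans (by gcongr)
    have t2 : ‖cB S p (r • e) ζ‖ ≤ Λ * r * (r * δ) := (h3 _ _).trans (by gcongr)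
    refine (norm_sub_le _ _).trans ?_
    have t3 := norm_add_le (cB S p ζ ξ) (cB S p (r • e) ζ)
    linarith
  have hLm : dd m 1 + dd m Complex.I ≤ 24 * Λ^2 * (q^2 + δ^2) * r^2 := by
    rw [hm, dd_normSq hg2, dd_normSq hg2, hg0]
    have e1 : 2 * ‖fderiv ℝ g 0 1‖^2 + 2 * inner ℝ (y - p) (dd g 1) +
      (2 * ‖fderiv ℝ g 0 Complex.I‖^2 + 2 * inner ℝ (y - p) (dd g Complex.I)) =
      2 * ‖fderiv ℝ g 0 1‖^2 + 2 * ‖fderiv ℝ g 0 Complex.I‖^2 +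
        2 * inner ℝ (y - p) (dd g 1 + dd g Complex.I) := by rw [inner_add_right]; ring
    rw [e1]
    have t1 : ‖fderiv ℝ g 0 1‖^2 ≤ (r * δ)^2 := by gcongr
    have t2 : ‖fderiv ℝ g 0 Complex.I‖^2 ≤ (r * (Λ * (q + 2 * δ)))^2 := by gcongr
    have t3 : inner ℝ (y - p) (dd g 1 + dd g Complex.I) ≤ q * (r^2 * (Λ * (q + 4 * δ))) :=
      (real_inner_le_norm _ _).trans (by gcongr)
    have := visc_arith (q := q) (δ := δ) (r := r) hΛ
    linarith
  have hlim := circAvg_tendsto hm2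
  have hev := hlim.eventually (gt_mem_nhds (show (dd m 1 + dd m Complex.I) / 4 <
    (dd m 1 + dd m Complex.I) / 4 + 2 * ε * r^2 * η by
      have : 0 < 2 * ε * r^2 * η := by positivity
      linarith))
  have hscale : Tendsto (fun ϱ : ℝ => ϱ / r) (𝓝[>] 0) (𝓝[>] 0) := by
    refine tendsto_nhdsWithin_iff.2 ⟨?_, ?_⟩
    · have : Tendsto (fun ϱ : ℝ => ϱ / r) (𝓝 0) (𝓝 (0 / r)) := tendsto_id.div_const r
      rw [zero_div] at this; exact this.mono_left nhdsWithin_le_nhds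
    · filter_upwards [self_mem_nhdsWithin] with ϱ hϱ using div_pos hϱ hr
  filter_upwards [hscale.eventually hev, hscale.eventually (Ioo_mem_nhdsGT one_pos), self_mem_nhdsWithin]
    with ϱ hϱ1 hϱ2 hϱ0
  have hϱ0 : 0 < ϱ := hϱ0
  set s := ϱ / r with hs
  have hϱs : ϱ = r * s := by rw [hs]; field_simp
  have hs0 : 0 < s := hϱ2.1
  have hs1 : s < 1 := hϱ2.2
  have hpi := Real.pi_pos
  have hmemD : ∀ t : ℝ, (0:ℂ) + s * Complex.exp (t * Complex.I) ∈ unitDisc := by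
    intro t; rw [unitDisc, mem_ball_zero_iff, norm_circ hs0.le]; exact hs1
  have hsub := hu.2 lam hlam (fun z hz => hUΩ (hmaps hz))
  have hmean := hsub.submean 0 s hs0 (by
    intro z hz
    rw [mem_closedBall_zero_iff] at hz
    rw [unitDisc, mem_ball_zero_iff]; linarith)
  simp only [hlam0] at hmean
  have hmc : Continuous fun t : ℝ => m (0 + s * Complex.exp (t * Complex.I)) := by
    have : Continuous fun t : ℝ => lam (0 + s * Complex.exp (t * Complex.I)) := by
      rw [continuous_iff_continuousAt]; intro t
      exact ContinuousAt.comp (f := fun t : ℝ => (0:ℂ) + s * Complex.exp (t * Complex.I))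
        (hlam.smooth _ (hmemD t)).continuousAt (circ_cont s).continuousAt
    exact ((((qd_smooth _ _ _ _).continuous.comp (circ_cont s)).sub this).norm.pow 2)
  have hvX : Continuous fun t : ℝ => v (Xr (0 + s * Complex.exp (t * Complex.I))) :=
    hvc.comp ((qd_smooth _ _ _ _).continuous.comp (circ_cont s))
  -- Averaging `u(λ) ≤ v(X) + |X - λ|² / 2ε` over the circle.
  have hmono : circAvg (fun z => u (lam z)) 0 s ≤ circAvg (fun z => v (Xr z)) 0 s + circAvg m 0 s / (2 * ε) := by
    have : circAvg (fun z => v (Xr z)) 0 s + circAvg m 0 s / (2 * ε) =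
        (2 * Real.pi)⁻¹ * ∫ t in (0:ℝ)..(2 * Real.pi), (v (Xr (0 + s * Complex.exp (t * Complex.I))) +
          m (0 + s * Complex.exp (t * Complex.I)) / (2 * ε)) := by
      rw [intervalIntegral.integral_add (hvX.intervalIntegrable _ _)
        ((hmc.div_const _).intervalIntegrable _ _), intervalIntegral.integral_div]
      unfold circAvg; ring
    rw [this]
    unfold circAvg
    refine mul_le_mul_of_nonneg_left ?_ (by positivity)
    refine intervalIntegral.integral_mono (by positivity) ?_ ?_ fun t => ?_
    · exact intervalIntegrable_of_bdd (usc_circle_measurable hsub.usc hs0.le hs1)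
        fun t => hC _ (hUΩ (hmaps (hmemD t)))
    · exact (hvX.add (hmc.div_const _)).intervalIntegrable _ _
    · have := hv (Xr (0 + s * Complex.exp (t * Complex.I))) _ (hmaps (hmemD t))
      simp only [hm, hg]; linarith
  have hcirc : circAvg (fun z => v (qd y e (S.J x e) c z)) 0 ϱ = circAvg (fun z => v (Xr z)) 0 s := by
    unfold circAvg
    congr 2
    funext t
    show v (qd y e (S.J x e) c (0 + ϱ * Complex.exp (t * Complex.I))) =
      v (Xr (0 + s * Complex.exp (t * Complex.I)))
    rw [← hXs, hϱs]; congr 2; push_cast; ring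
  rw [hcirc]
  have hm1 := hm0
  -- The sub-mean value inequality for `u ∘ λ` at `p`, combined with `v y = u p - |y - p|² / 2ε`.
  have hmain : v y ≤ circAvg (fun z => v (Xr z)) 0 s + (circAvg m 0 s - m 0) / (2 * ε) := by
    rw [hvy, hm0, sub_div]; linarith
  rw [div_lt_iff₀ (by positivity)] at hϱ1
  rw [le_div_iff₀ (by positivity)]
  have k1 : (circAvg m 0 s - m 0) / (2 * ε) ≤
      ((6 * Λ^2 * (q^2 + δ^2) * r^2 + 2 * ε * r^2 * η) * s^2) / (2 * ε) := by
    gcongr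
    refine hϱ1.le.trans ?_
    gcongr
    linarith
  have k2 : ((6 * Λ^2 * (q^2 + δ^2) * r^2 + 2 * ε * r^2 * η) * s^2) / (2 * ε) =
      (3 * Λ^2 / ε * (q^2 + δ^2) + η) * ϱ^2 := by
    rw [hϱs]; field_simp; ring
  linarith

end PshAux

/-! ### Sup-convolutions -/

namespace PshAux
variable {n : ℕ} {M : Set (ESp n)}

/-- Sup-convolution of `u` over the set `K`. -/
def scv (u : ESp n → ℝ) (K : Set (ESp n)) (ε : ℝ) (y : ESp n) : ℝ :=
  sSup ((fun z => u z - ‖y - z‖^2 / (2 * ε)) '' K)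

section scv
variable {u : ESp n → ℝ} {K : Set (ESp n)} {C : ℝ}

lemma scv_att (hK : IsCompact K) (hne : K.Nonempty) (hu : UpperSemicontinuousOn u K) {ε : ℝ} 
    (y : ESp n) : ∃ p ∈ K, scv u K ε y = u p - ‖y - p‖^2 / (2 * ε) ∧
      ∀ z ∈ K, u z - ‖y - z‖^2 / (2 * ε) ≤ u p - ‖y - p‖^2 / (2 * ε) := by
  have h1 : UpperSemicontinuousOn (fun z => u z - ‖y - z‖^2 / (2 * ε)) K := by
    have h2 : ContinuousOn (fun z => - (‖y - z‖^2 / (2 * ε))) K := by fun_prop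
    have := hu.add h2.upperSemicontinuousOn
    simpa [sub_eq_add_neg] using this
  obtain ⟨p, hp, hmax⟩ := h1.exists_isMaxOn hne hK
  refine ⟨p, hp, ?_, fun z hz => hmax hz⟩
  refine IsGreatest.csSup_eq ⟨mem_image_of_mem _ hp, ?_⟩
  rintro _ ⟨z, hz, rfl⟩
  exact hmax hz

lemma scv_ge (hK : IsCompact K) (hu : UpperSemicontinuousOn u K) {ε : ℝ} (y : ESp n) {z : ESp n}
    (hz : z ∈ K) : u z - ‖y - z‖^2 / (2 * ε) ≤ scv u K ε y := by
  obtain ⟨p, -, h1, h2⟩ := scv_att hK ⟨z, hz⟩ hu (ε := ε) y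
  rw [h1]; exact h2 z hz

lemma scv_cont (hK : IsCompact K) (hne : K.Nonempty) (hu : UpperSemicontinuousOn u K) {ε : ℝ}
    (hε : 0 < ε) : Continuous (scv u K ε) := by
  obtain ⟨R, hR⟩ := hK.isBounded.exists_norm_le
  have key : ∀ y y', scv u K ε y - scv u K ε y' ≤ ‖y - y'‖ * (‖y‖ + ‖y'‖ + 2 * R) / (2 * ε) := by
    intro y y'
    obtain ⟨p, hp, h1, -⟩ := scv_att hK hne hu (ε := ε) y
    have h2 := scv_ge hK hu (ε := ε) y' hp
    have h3 : ‖y' - p‖^2 - ‖y - p‖^2 ≤ ‖y - y'‖ * (‖y‖ + ‖y'‖ + 2 * R) := by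
      have a1 : ‖y' - p‖ - ‖y - p‖ ≤ ‖y - y'‖ := by
        have := norm_sub_norm_le (y' - p) (y - p)
        rw [sub_sub_sub_cancel_right, norm_sub_rev y' y] at this; exact this
      have a2 : ‖y' - p‖ + ‖y - p‖ ≤ ‖y‖ + ‖y'‖ + 2 * R := by
        have := norm_sub_le y' p; have := norm_sub_le y p; have := hR p hp; linarith
      calc ‖y' - p‖^2 - ‖y - p‖^2 = (‖y' - p‖ - ‖y - p‖) * (‖y' - p‖ + ‖y - p‖) := by ring
        _ ≤ ‖y - y'‖ * (‖y' - p‖ + ‖y - p‖) := by gcongr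
        _ ≤ _ := by gcongr
    rw [h1]
    have h4 : (‖y' - p‖^2 - ‖y - p‖^2) / (2 * ε) ≤ ‖y - y'‖ * (‖y‖ + ‖y'‖ + 2 * R) / (2 * ε) := by
      gcongr
    rw [sub_div] at h4
    linarith
  rw [continuous_iff_continuousAt]
  intro y
  rw [ContinuousAt, tendsto_iff_dist_tendsto_zero]
  have hlim : Tendsto (fun y' => ‖y - y'‖ * (‖y‖ + ‖y'‖ + 2 * R) / (2 * ε)) (𝓝 y) (𝓝 0) := by
    have : Continuous fun y' => ‖y - y'‖ * (‖y‖ + ‖y'‖ + 2 * R) / (2 * ε) := by fun_prop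
    have := this.tendsto y
    simpa using this
  refine squeeze_zero (fun _ => dist_nonneg) (fun y' => ?_) hlim
  rw [Real.dist_eq, abs_le]
  have k1 := key y y'
  have k2 := key y' y
  rw [norm_sub_rev, add_comm ‖y'‖ ‖y‖] at k2
  exact ⟨by linarith, k2⟩

lemma scv_le (hK : IsCompact K) (hne : K.Nonempty) (hu : UpperSemicontinuousOn u K)
    (hC : ∀ x ∈ K, |u x| ≤ C) {ε : ℝ} (hε : 0 < ε) (y : ESp n) : scv u K ε y ≤ C := by
  obtain ⟨p, hp, h1, -⟩ := scv_att hK hne hu (ε := ε) y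
  have := (abs_le.1 (hC p hp)).2
  have : 0 ≤ ‖y - p‖^2 / (2 * ε) := by positivity
  linarith

lemma le_scv (hK : IsCompact K) (hu : UpperSemicontinuousOn u K) {ε : ℝ} {y : ESp n} (hy : y ∈ K) :
    u y ≤ scv u K ε y := by
  have := scv_ge hK hu (ε := ε) y hy
  simpa using this

/-- Maximisers lie within distance `O(√ε)`. -/
lemma scv_dist (hK : IsCompact K) (hu : UpperSemicontinuousOn u K) (hC : ∀ x ∈ K, |u x| ≤ C)
    {ε : ℝ} (hε : 0 < ε) {y p : ESp n} (hy : y ∈ K) (hp : p ∈ K)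
    (h : scv u K ε y = u p - ‖y - p‖^2 / (2 * ε)) : ‖y - p‖^2 ≤ 4 * C * ε := by
  have h1 := le_scv hK hu (ε := ε) hy
  have h2 := abs_le.1 (hC p hp)
  have h3 := abs_le.1 (hC y hy)
  have h4 : ‖y - p‖^2 / (2 * ε) ≤ 2 * C := by linarith
  rw [div_le_iff₀ (by positivity)] at h4
  linarith

/-- The penalisation at a maximiser is controlled by the gap between two sup-convolutions; this gap
tends to zero with `ε`. -/
lemma scv_gap (hK : IsCompact K) (hu : UpperSemicontinuousOn u K)
    {ε : ℝ} (hε : 0 < ε) {y p : ESp n} (hp : p ∈ K)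
    (h : scv u K ε y = u p - ‖y - p‖^2 / (2 * ε)) :
    ‖y - p‖^2 / ε ≤ 4 * (scv u K (2 * ε) y - scv u K ε y) := by
  have h1 := scv_ge hK hu (ε := 2 * ε) y hp
  rw [h]
  have : ‖y - p‖^2 / (2 * (2 * ε)) = ‖y - p‖^2 / ε / 4 := by field_simp; ring
  have : ‖y - p‖^2 / (2 * ε) = ‖y - p‖^2 / ε / 2 := by field_simp
  linarith

lemma scv_mono (hK : IsCompact K) (hne : K.Nonempty) (hu : UpperSemicontinuousOn u K)
    {ε : ℝ} (hε : 0 < ε) (y : ESp n) : scv u K ε y ≤ scv u K (2 * ε) y := by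
  obtain ⟨p, hp, h1, -⟩ := scv_att hK hne hu (ε := ε) y
  have := scv_gap hK hu hε hp h1
  have : 0 ≤ ‖y - p‖^2 / ε := by positivity
  linarith

/-- Sup-convolutions of a bounded upper semicontinuous function converge to it pointwise. -/
lemma scv_tendsto (hK : IsCompact K) (hu : UpperSemicontinuousOn u K) (hC : ∀ x ∈ K, |u x| ≤ C)
    {y : ESp n} (hy : y ∈ K) : Tendsto (fun ε => scv u K ε y) (𝓝[>] 0) (𝓝 (u y)) := by
  have hne : K.Nonempty := ⟨y, hy⟩
  rw [tendsto_order]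
  constructor
  · intro a ha
    exact Eventually.of_forall fun ε => ha.trans_le (le_scv hK hu hy)
  · intro a ha
    have h1 := hu y hy a ha
    rw [eventually_nhdsWithin_iff, Metric.eventually_nhds_iff] at h1
    obtain ⟨r, hr, h1⟩ := h1
    have h2 : Tendsto (fun ε : ℝ => 4 * C * ε) (𝓝[>] 0) (𝓝 0) := by
      have : Continuous fun ε : ℝ => 4 * C * ε := by fun_prop
      have := this.tendsto 0
      rw [mul_zero] at this
      exact this.mono_left nhdsWithin_le_nhds
    filter_upwards [h2.eventually (gt_mem_nhds (show (0:ℝ) < r^2 by positivity)), self_mem_nhdsWithin]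
      with ε hε hε0
    have hε0 : 0 < ε := hε0
    obtain ⟨p, hp, h3, -⟩ := scv_att hK hne hu (ε := ε) y
    have h4 := scv_dist hK hu hC hε0 hy hp h3
    have h5 : ‖y - p‖ < r := lt_of_pow_lt_pow_left₀ 2 hr.le (h4.trans_lt hε)
    have h6 := h1 (by rw [dist_comm, dist_eq_norm]; exact h5) hp
    have : 0 ≤ ‖y - p‖^2 / (2 * ε) := by positivity
    rw [h3]; linarith

end scv

lemma unif_C1 {F : Type*} [NormedAddCommGroup F] [NormedSpace ℝ F] (hM : IsOpen M) {f : ESp n → F}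
    (hf : ContDiffOn ℝ (⊤ : ℕ∞) f M) {K : Set (ESp n)} (hK : IsCompact K) (hKM : K ⊆ M) :
    ∃ Λ, (∀ x ∈ K, ‖f x‖ ≤ Λ ∧ ‖fderiv ℝ f x‖ ≤ Λ) ∧
      ∀ x p r, ball x r ⊆ K → ‖x - p‖ < r → ‖f x - f p‖ ≤ Λ * ‖x - p‖ := by
  obtain ⟨a, ha⟩ := hK.exists_bound_of_continuousOn (hf.continuousOn.mono hKM)
  have hd : ContinuousOn (fderiv ℝ f) M := hf.continuousOn_fderiv_of_isOpen hM (by simp)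
  obtain ⟨b, hb⟩ := hK.exists_bound_of_continuousOn (hd.mono hKM)
  refine ⟨max a b, fun x hx => ⟨(ha x hx).trans (le_max_left _ _), (hb x hx).trans (le_max_right _ _)⟩, ?_⟩
  intro x p r hxr hp
  have hr : 0 < r := (norm_nonneg _).trans_lt hp
  refine Convex.norm_image_sub_le_of_norm_fderiv_le (𝕜 := ℝ) (s := ball x r) (fun z hz => ?_) (fun z hz => ?_) (convex_ball x r) ?_ ?_
  · exact (hf.contDiffAt (hM.mem_nhds (hKM (hxr hz)))).differentiableAt (by simp)
  · exact (hb z (hxr hz)).trans (le_max_right _ _)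
  · rw [mem_ball, dist_comm, dist_eq_norm]; exact hp
  · exact mem_ball_self hr

lemma fderivJ_smooth (hM : IsOpen M) (S : ACStruct n M) : ContDiffOn ℝ (⊤ : ℕ∞) (fderiv ℝ S.J) M :=
  S.smooth.fderiv_of_isOpen hM (by simp)

lemma cB_smooth (hM : IsOpen M) (S : ACStruct n M) (a b : ESp n) :
    ContDiffOn ℝ (⊤ : ℕ∞) (fun p => cB S p a b) M := by
  have h1 := fderivJ_smooth hM S
  have h2 := S.smooth
  unfold cB
  exact ((h1.clm_apply (h2.clm_apply contDiffOn_const)).clm_apply contDiffOn_const).add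
    (h2.clm_apply ((h1.clm_apply contDiffOn_const).clm_apply contDiffOn_const))

lemma norm_sb (i : Fin (2 * n)) : ‖sb n i‖ = 1 := by simp [sb]

/-- Uniform bounds and Lipschitz bounds for `J` and `cB` on a compact set, in the form needed
in `visc`. -/
lemma unif_Lam (hM : IsOpen M) (S : ACStruct n M) {K : Set (ESp n)} (hK : IsCompact K) (hKM : K ⊆ M) :
    ∃ Λ : ℝ, 1 ≤ Λ ∧ (∀ p ∈ K, (∀ w, ‖S.J p w‖ ≤ Λ * ‖w‖) ∧ ∀ a b, ‖cB S p a b‖ ≤ Λ * ‖a‖ * ‖b‖) ∧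
      ∀ x p r, ball x r ⊆ K → ‖x - p‖ < r → ∀ i,
        ‖S.J x (sb n i) - S.J p (sb n i)‖ ≤ Λ * ‖x - p‖ ∧
        ‖cB S x (sb n i) (sb n i) - cB S p (sb n i) (sb n i)‖ ≤ Λ * ‖x - p‖ := by
  obtain ⟨a, ha, ha'⟩ := unif_C1 hM S.smooth hK hKM
  choose b hb hb' using fun i => unif_C1 hM (cB_smooth hM S (sb n i) (sb n i)) hK hKM
  have hsum : ∀ i, b i ≤ ∑ i, |b i| := fun i => (le_abs_self _).trans
    (Finset.single_le_sum (f := fun i => |b i|) (fun _ _ => abs_nonneg _) (Finset.mem_univ i))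
  have hB : 0 ≤ ∑ i, |b i| := Finset.sum_nonneg fun _ _ => abs_nonneg _
  set B := ∑ i, |b i|
  refine ⟨1 + |a| + 2 * a^2 + B, ?_, ?_, ?_⟩
  · have := abs_nonneg a; have := sq_nonneg a; linarith
  · intro p hp
    obtain ⟨h1, h2⟩ := ha p hp
    have h0 : 0 ≤ a := (norm_nonneg _).trans h1
    have := le_abs_self a; have := sq_nonneg a
    constructor
    · intro w
      refine ((S.J p).le_opNorm w).trans ?_
      gcongr; linarith
    · intro v w
      have hD : ∀ s t, ‖fderiv ℝ S.J p s t‖ ≤ a * ‖s‖ * ‖t‖ := fun s t =>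
        ((fderiv ℝ S.J p s).le_opNorm t).trans (by
          gcongr; exact ((fderiv ℝ S.J p).le_opNorm s).trans (by gcongr))
      have hJ : ∀ s, ‖S.J p s‖ ≤ a * ‖s‖ := fun s => ((S.J p).le_opNorm s).trans (by gcongr)
      have t1 : ‖fderiv ℝ S.J p (S.J p v) w‖ ≤ a * (a * ‖v‖) * ‖w‖ := (hD _ _).trans (by gcongr; exact hJ v)
      have t2 : ‖S.J p (fderiv ℝ S.J p v w)‖ ≤ a * (a * ‖v‖ * ‖w‖) := (hJ _).trans (by gcongr; exact hD _ _)
      unfold cB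
      refine (norm_add_le _ _).trans ?_
      have : a * (a * ‖v‖) * ‖w‖ + a * (a * ‖v‖ * ‖w‖) = 2 * a^2 * ‖v‖ * ‖w‖ := by ring
      refine (add_le_add t1 t2).trans ?_
      rw [this]; gcongr; linarith [abs_nonneg a]
  · intro x p r hx hp i
    have := le_abs_self a; have := sq_nonneg a; have := abs_nonneg a; have := hsum i
    constructor
    · have e1 : S.J x (sb n i) - S.J p (sb n i) = (S.J x - S.J p) (sb n i) := rfl
      rw [e1]
      refine ((S.J x - S.J p).le_opNorm _).trans ?_
      rw [norm_sb, mul_one]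
      refine (ha' x p r hx hp).trans ?_
      gcongr; linarith
    · refine (hb' i x p r hx hp).trans ?_
      gcongr; linarith

end PshAux

/-! ### Mollification -/

namespace PshAux
variable {n : ℕ} {M : Set (ESp n)}

/-- Mollification of `v` by `ρ`. -/
def moll (ρ v : ESp n → ℝ) (x : ESp n) : ℝ := ∫ t, ρ t * v (x - t)

/-- A nonnegative continuous kernel of mass one, supported in the closed `δ`-ball. -/
structure IsMoll (ρ : ESp n → ℝ) (δ : ℝ) : Prop where
  cont : Continuous ρ
  nonneg : ∀ t, 0 ≤ ρ t
  supp : ∀ t, ρ t ≠ 0 → ‖t‖ ≤ δ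
  mass : ∫ t, ρ t = 1

section moll
variable {ρ : ESp n → ℝ} {δ : ℝ}

lemma IsMoll.cs (h : IsMoll ρ δ) : HasCompactSupport ρ :=
  HasCompactSupport.of_support_subset_isCompact (isCompact_closedBall (0 : ESp n) δ)
    (fun t ht => by rw [mem_closedBall_zero_iff]; exact h.supp t ht)

lemma IsMoll.integrable (h : IsMoll ρ δ) {f : ESp n → ℝ} (hf : Continuous f) :
    Integrable (fun t => ρ t * f t) :=
  (h.cont.mul hf).integrable_of_hasCompactSupport h.cs.mul_right

lemma IsMoll.integrable_sub (h : IsMoll ρ δ) {f : ESp n → ℝ} (hf : Continuous f) (x : ESp n) :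
    Integrable (fun t => ρ t * f (x - t)) := h.integrable (f := fun t => f (x - t)) (by fun_prop)

lemma IsMoll.const (h : IsMoll ρ δ) (a : ℝ) : ∫ t, ρ t * a = a := by
  rw [integral_mul_const, h.mass, one_mul]

lemma IsMoll.mono (h : IsMoll ρ δ) {f g : ESp n → ℝ} (hf : Continuous f) (hg : Continuous g) {x : ESp n}
    (hfg : ∀ y, ‖x - y‖ ≤ δ → f y ≤ g y) : moll ρ f x ≤ moll ρ g x := by
  refine integral_mono (h.integrable_sub hf x) (h.integrable_sub hg x) fun t => ?_
  by_cases ht : ρ t = 0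
  · simp [ht]
  · exact mul_le_mul_of_nonneg_left (hfg _ (by simpa using h.supp t ht)) (h.nonneg t)

lemma IsMoll.moll_const (h : IsMoll ρ δ) (a : ℝ) (x : ESp n) : moll ρ (fun _ => a) x = a := h.const a

lemma circ_swap (h : IsMoll ρ δ) {v : ESp n → ℝ} (hv : Continuous v) (x e e' c : ESp n) (ϱ : ℝ) :
    circAvg (fun z => moll ρ v (qd x e e' c z)) 0 ϱ =
      ∫ t, ρ t * circAvg (fun z => v (qd (x - t) e e' c z)) 0 ϱ := by
  unfold circAvg moll
  have hq : ∀ t z, qd x e e' c z - t = qd (x - t) e e' c z := by intro t z; simp only [qd]; abel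
  simp only [hq]
  have hcont : Continuous fun p : ℝ × ESp n =>
      ρ p.2 * v (qd (x - p.2) e e' c (0 + ϱ * Complex.exp (p.1 * Complex.I))) := by
    have := h.cont
    unfold qd
    fun_prop
  rw [intervalIntegral_integral_swap]
  · rw [← integral_const_mul]
    congr 1; funext t
    rw [intervalIntegral.integral_const_mul]; ring
  · have hsub : Function.support (fun p : ℝ × ESp n =>
      ρ p.2 * v (qd (x - p.2) e e' c (0 + ϱ * Complex.exp (p.1 * Complex.I)))) ⊆ univ ×ˢ closedBall 0 δ := by
      intro p hp
      refine ⟨mem_univ _, ?_⟩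
      rw [mem_closedBall_zero_iff]
      exact h.supp _ (left_ne_zero_of_mul hp)
    rw [← Measure.restrict_univ (μ := (volume : Measure (ESp n))), Measure.prod_restrict]
    have h1 : IntegrableOn (fun p : ℝ × ESp n =>
      ρ p.2 * v (qd (x - p.2) e e' c (0 + ϱ * Complex.exp (p.1 * Complex.I))))
        (uIcc 0 (2 * Real.pi) ×ˢ closedBall 0 δ) (volume.prod volume) :=
      hcont.continuousOn.integrableOn_compact (isCompact_uIcc.prod (isCompact_closedBall _ _))
    refine IntegrableOn.of_forall_sdiff_eq_zero (s := uIoc 0 (2 * Real.pi) ×ˢ closedBall 0 δ)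
      (h1.mono_set (prod_mono uIoc_subset_uIcc le_rfl)) (measurableSet_uIoc.prod MeasurableSet.univ) ?_
    rintro p ⟨hp1, hp2⟩
    by_contra hne
    exact hp2 ⟨hp1.1, (hsub hne).2⟩

lemma circAvg_cont {v : ESp n → ℝ} (hv : Continuous v) (e e' c : ESp n) (ϱ : ℝ) :
    Continuous fun y => circAvg (fun z => v (qd y e e' c z)) 0 ϱ := by
  unfold circAvg
  refine continuous_const.mul (intervalIntegral.continuous_parametric_intervalIntegral_of_continuous' ?_ _ _)
  unfold qd Function.uncurry
  fun_prop

/-- Mollification preserves pointwise asymptotic lower bounds on circular means, by a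
Fatou-type argument. -/
theorem moll_visc (h : IsMoll ρ δ) {v H : ESp n → ℝ} (hv : Continuous v) (hH : Continuous H)
    (hV : ContDiff ℝ (⊤ : ℕ∞) (moll ρ v)) {x e e' c : ESp n}
    (h1 : ∀ y, ‖x - y‖ ≤ δ → ∀ η > 0, ∀ᶠ ϱ in 𝓝[>] (0:ℝ),
      - H y - η ≤ (circAvg (fun z => v (qd y e e' c z)) 0 ϱ - v y) / ϱ^2)
    {B : ℝ} (h2 : ∀ y, ‖x - y‖ ≤ δ → ∀ ϱ, 0 < ϱ → ϱ ≤ 1 →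
      - B ≤ (circAvg (fun z => v (qd y e e' c z)) 0 ϱ - v y) / ϱ^2) :
    - moll ρ H x ≤ (dd (fun z => moll ρ v (qd x e e' c z)) 1 +
      dd (fun z => moll ρ v (qd x e e' c z)) Complex.I) / 4 := by
  refine le_of_forall_pos_le_add fun η hη => ?_
  set f : ℝ → ESp n → ℝ := fun ϱ y => (circAvg (fun z => v (qd y e e' c z)) 0 ϱ - v y) / ϱ^2 with hf
  have hfc : ∀ ϱ, Continuous (f ϱ) := fun ϱ => ((circAvg_cont hv e e' c ϱ).sub hv).div_const _
  have hlim := circAvg_tendsto (F := fun z => moll ρ v (qd x e e' c z))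
    ((hV.comp (qd_smooth x e e' c)).contDiffAt.of_le two_le_top)
  have hq0 : qd x e e' c 0 = x := by simp [qd]
  have heq : ∀ ϱ, (circAvg (fun z => moll ρ v (qd x e e' c z)) 0 ϱ - moll ρ v x) / ϱ^2 =
      moll ρ (f ϱ) x := by
    intro ϱ
    rw [circ_swap h hv]
    unfold moll
    rw [← integral_sub (h.integrable_sub (circAvg_cont hv e e' c ϱ) x) (h.integrable_sub hv x),
      ← integral_div]
    congr 1; funext t; simp only [hf]; ring
  simp only [hq0, heq] at hlim
  -- Truncating the difference at `0` makes it bounded, so that dominated convergence applies.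
  set mn : ℝ → ESp n → ℝ := fun ϱ y => min (f ϱ y + H y + η) 0 with hmn
  have hmc : ∀ ϱ, Continuous (mn ϱ) := fun ϱ => (((hfc ϱ).add hH).add continuous_const).min continuous_const
  have hlim0 : Tendsto (fun ϱ => moll ρ (mn ϱ) x) (𝓝[>] 0) (𝓝 0) := by
    have : Tendsto (fun ϱ => ∫ t, ρ t * mn ϱ (x - t)) (𝓝[>] 0) (𝓝 (∫ t : ESp n, (0:ℝ))) := by
      refine tendsto_integral_filter_of_dominated_convergence
        (fun t => ρ t * (|B| + |H (x - t)| + η)) ?_ ?_ ?_ ?_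
      · exact Eventually.of_forall fun ϱ => (h.integrable_sub (hmc ϱ) x).aestronglyMeasurable
      · filter_upwards [Ioo_mem_nhdsGT one_pos] with ϱ hϱ
        refine Eventually.of_forall fun t => ?_
        rw [norm_mul, Real.norm_of_nonneg (h.nonneg t)]
        by_cases ht : ρ t = 0
        · simp [ht]
        refine mul_le_mul_of_nonneg_left ?_ (h.nonneg t)
        have := h2 (x - t) (by simpa using h.supp t ht) ϱ hϱ.1 hϱ.2.le
        rw [Real.norm_eq_abs, abs_of_nonpos (min_le_right _ _), neg_le, le_min_iff]
        have a1 := neg_abs_le (H (x - t)); have a2 := le_abs_self B; have a3 := abs_nonneg B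
        have a4 := abs_nonneg (H (x - t))
        constructor
        · have : -B ≤ f ϱ (x - t) := this
          linarith
        · linarith
      · exact h.integrable (f := fun t => |B| + |H (x - t)| + η) (by fun_prop)
      · refine Eventually.of_forall fun t => ?_
        refine tendsto_const_nhds.congr' ?_
        by_cases ht : ρ t = 0
        · simp [ht]
        filter_upwards [h1 (x - t) (by simpa using h.supp t ht) η hη] with ϱ hϱ
        have : mn ϱ (x - t) = 0 := by
          simp only [hmn]; rw [min_eq_right]
          have : - H (x - t) - η ≤ f ϱ (x - t) := hϱ
          linarith
        rw [this, mul_zero]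
    simpa [moll] using this
  have hle : ∀ ϱ, moll ρ (mn ϱ) x ≤ moll ρ (f ϱ) x + (moll ρ H x + η) := by
    intro ϱ
    have e1 : moll ρ (f ϱ) x + (moll ρ H x + η) = ∫ t, ρ t * (f ϱ (x - t) + H (x - t) + η) := by
      have : ∀ t, ρ t * (f ϱ (x - t) + H (x - t) + η) =
        (ρ t * f ϱ (x - t) + ρ t * H (x - t)) + ρ t * η := by intro t; ring
      simp_rw [this]
      have hi : Integrable fun t => ρ t * f ϱ (x - t) + ρ t * H (x - t) :=
        (h.integrable_sub (hfc ϱ) x).add (h.integrable_sub hH x)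
      rw [integral_add hi (h.integrable continuous_const),
        integral_add (h.integrable_sub (hfc ϱ) x) (h.integrable_sub hH x), h.const]
      unfold moll; ring
    rw [e1]
    exact h.mono (hmc ϱ) (g := fun y => f ϱ y + H y + η) (((hfc ϱ).add hH).add continuous_const)
      fun y _ => min_le_left _ _
  have := le_of_tendsto_of_tendsto' hlim0 (hlim.add_const (moll ρ H x + η)) hle
  linarith

end moll

/-- Crude lower bound on the second difference quotients of a sup-convolution. -/
lemma scv_crude {v : ESp n → ℝ} (hvc : Continuous v) {ε : ℝ} (hε : 0 < ε) {y p e e' c : ESp n} {a : ℝ}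
    (hv : ∀ q, a - ‖q - p‖^2 / (2 * ε) ≤ v q) (hvy : v y = a - ‖y - p‖^2 / (2 * ε)) {R ϱ : ℝ}
    (hR : ‖y - p‖ ≤ R) (hϱ : 0 < ϱ) (hϱ1 : ϱ ≤ 1) :
    - ((2 * R * ‖c‖ + (‖e‖ + ‖e'‖ + ‖c‖)^2) / (2 * ε)) ≤
      (circAvg (fun z => v (qd y e e' c z)) 0 ϱ - v y) / ϱ^2 := by
  have hpi := Real.pi_pos
  set T := (2 * R * ‖c‖ + (‖e‖ + ‖e'‖ + ‖c‖)^2) / (2 * ε) with hT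
  rw [le_div_iff₀ (by positivity)]
  have key : ∀ t : ℝ, (v y - ϱ^2 * T) + ((-ϱ * inner ℝ (y - p) e / ε) * Real.cos t +
      (-ϱ * inner ℝ (y - p) e' / ε) * Real.sin t) + ϱ^2 * (0 * Real.cos t ^ 2 + 0 * (Real.sin t * Real.cos t)
        + 0 * Real.sin t ^ 2) ≤ v (qd y e e' c (0 + ϱ * Complex.exp (t * Complex.I))) := by
    intro t
    set w : ESp n := (ϱ * Real.cos t) • e + (ϱ * Real.sin t) • e' + (ϱ^2) • c with hw
    have hq : qd y e e' c (0 + ϱ * Complex.exp (t * Complex.I)) = y + w := by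
      rw [circ_pt]
      simp only [qd, hw]
      have e1 : ((ϱ * Real.cos t) • (1:ℂ) + (ϱ * Real.sin t) • Complex.I).re = ϱ * Real.cos t := by
        generalize ϱ * Real.cos t = a; generalize ϱ * Real.sin t = b; simp
      have e2 : ((ϱ * Real.cos t) • (1:ℂ) + (ϱ * Real.sin t) • Complex.I).im = ϱ * Real.sin t := by
        generalize ϱ * Real.cos t = a; generalize ϱ * Real.sin t = b; simp
      rw [e1, e2]
      have e3 : (ϱ * Real.cos t)^2 + (ϱ * Real.sin t)^2 = ϱ^2 := by
        have := Real.sin_sq_add_cos_sq t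
        linear_combination ϱ^2 * this
      rw [e3]
    rw [hq]
    have h1 := hv (y + w)
    have h2 : ‖y + w - p‖^2 = ‖y - p‖^2 + 2 * inner ℝ (y - p) w + ‖w‖^2 := by
      rw [show y + w - p = (y - p) + w by abel, norm_add_sq_real]
    have h3 : inner ℝ (y - p) w = ϱ * Real.cos t * inner ℝ (y - p) e + ϱ * Real.sin t * inner ℝ (y - p) e'
        + ϱ^2 * inner ℝ (y - p) c := by
      simp only [hw, inner_add_right, inner_smul_right]
    have h4 : inner ℝ (y - p) c ≤ R * ‖c‖ := (real_inner_le_norm _ _).trans (by gcongr)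
    have h5 : ‖w‖ ≤ ϱ * (‖e‖ + ‖e'‖ + ‖c‖) := by
      have b1 : ‖(ϱ * Real.cos t) • e‖ ≤ ϱ * ‖e‖ := by
        rw [norm_smul, norm_mul, Real.norm_of_nonneg hϱ.le]
        gcongr; exact mul_le_of_le_one_right hϱ.le (Real.abs_cos_le_one t)
      have b2 : ‖(ϱ * Real.sin t) • e'‖ ≤ ϱ * ‖e'‖ := by
        rw [norm_smul, norm_mul, Real.norm_of_nonneg hϱ.le]
        gcongr; exact mul_le_of_le_one_right hϱ.le (Real.abs_sin_le_one t)
      have b3 : ‖(ϱ^2) • c‖ ≤ ϱ * ‖c‖ := by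
        rw [norm_smul, Real.norm_of_nonneg (by positivity)]
        gcongr; nlinarith
      refine (norm_add₃_le).trans ?_
      linarith
    have h6 : ‖w‖^2 ≤ ϱ^2 * (‖e‖ + ‖e'‖ + ‖c‖)^2 := by
      rw [← mul_pow]; gcongr
    have h7 : (2 * (ϱ^2 * inner ℝ (y - p) c) + ‖w‖^2) / (2 * ε) ≤ ϱ^2 * T := by
      rw [hT, mul_div_assoc']
      gcongr
      have := mul_le_mul_of_nonneg_left h4 (by positivity : 0 ≤ 2 * ϱ^2)
      linarith
    have h8 : ‖y + w - p‖^2 / (2 * ε) = ‖y - p‖^2 / (2 * ε) + (ϱ * inner ℝ (y - p) e / ε) * Real.cos t +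
      (ϱ * inner ℝ (y - p) e' / ε) * Real.sin t + (2 * (ϱ^2 * inner ℝ (y - p) c) + ‖w‖^2) / (2 * ε) := by
      rw [h2, h3]; field_simp; ring
    rw [hvy]
    have h9 : (-ϱ * inner ℝ (y - p) e / ε) * Real.cos t = - ((ϱ * inner ℝ (y - p) e / ε) * Real.cos t) := by ring
    have h10 : (-ϱ * inner ℝ (y - p) e' / ε) * Real.sin t = - ((ϱ * inner ℝ (y - p) e' / ε) * Real.sin t) := by ring
    rw [h9, h10]
    linarith
  have hint := intervalIntegral.integral_mono (μ := volume) (a := 0) (b := 2 * Real.pi) (by positivity)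
    ((by fun_prop : Continuous _).intervalIntegrable _ _)
    ((hvc.comp ((qd_smooth y e e' c).continuous.comp (circ_cont ϱ))).intervalIntegrable _ _) key
  rw [circ_quad] at hint
  have h11 : v y - ϱ^2 * T ≤ circAvg (fun z => v (qd y e e' c z)) 0 ϱ := by
    unfold circAvg
    rw [inv_mul_eq_div, le_div_iff₀ (by positivity)]
    refine le_trans (le_of_eq ?_) hint
    ring
  linarith

end PshAux

/-! ### Smooth almost subsolutions near a compact set -/

namespace PshAux
variable {n : ℕ} {M : Set (ESp n)}

/-- The second order operator obtained by adding, over the coordinate directions `e_i`, the Laplacians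
at the centre of `J`-holomorphic discs tangent to `e_i`. -/
def Lop (S : ACStruct n M) (f : ESp n → ℝ) (x : ESp n) : ℝ :=
  ∑ i, (fderiv ℝ (fderiv ℝ f) x (sb n i) (sb n i) +
    fderiv ℝ (fderiv ℝ f) x (S.J x (sb n i)) (S.J x (sb n i)) + fderiv ℝ f x (cB S x (sb n i) (sb n i)))

/-- The Laplacian along a paraboloid, in terms of the Hessian and the gradient. -/
lemma dd_moll {V : ESp n → ℝ} (hV : ContDiff ℝ (⊤ : ℕ∞) V) (x e e' b : ESp n) :
    dd (fun z => V (qd x e e' ((1/4 : ℝ) • b) z)) 1 + dd (fun z => V (qd x e e' ((1/4 : ℝ) • b) z)) Complex.I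
      = fderiv ℝ (fderiv ℝ V) x e e + fderiv ℝ (fderiv ℝ V) x e' e' + fderiv ℝ V x b := by
  have h1 := dd_comp hV (qd_smooth x e e' ((1/4 : ℝ) • b)) 1
  have h2 := dd_comp hV (qd_smooth x e e' ((1/4 : ℝ) • b)) Complex.I
  have hq0 : qd x e e' ((1/4 : ℝ) • b) 0 = x := by simp [qd]
  rw [hq0, qd_fderiv, dd_qd] at h1 h2
  have h1' : dd (fun z => V (qd x e e' ((1/4 : ℝ) • b) z)) 1 = _ := h1
  have h2' : dd (fun z => V (qd x e e' ((1/4 : ℝ) • b) z)) Complex.I = _ := h2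
  rw [h1', h2']
  simp only [Complex.one_re, Complex.one_im, Complex.I_re, Complex.I_im, Complex.zero_re, Complex.zero_im,
    map_smul, smul_eq_mul]
  simp
  ring

lemma exists_moll (δ : ℝ) (hδ : 0 < δ) : ∃ ρ : ESp n → ℝ, IsMoll ρ δ ∧
    ∀ v : ESp n → ℝ, Continuous v → ContDiff ℝ (⊤ : ℕ∞) (moll ρ v) := by
  let φ : ContDiffBump (0 : ESp n) := ⟨δ / 2, δ, by positivity, by linarith⟩
  refine ⟨φ.normed volume, ⟨φ.continuous_normed, φ.nonneg_normed, fun t ht => ?_, φ.integral_normed⟩,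
    fun v hv => ?_⟩
  · have : t ∈ Function.support (φ.normed volume) := ht
    rw [φ.support_normed_eq, mem_ball_zero_iff] at this
    exact this.le
  · exact φ.hasCompactSupport_normed.contDiff_convolution_left (ContinuousLinearMap.lsmul ℝ ℝ) φ.contDiff_normed
      (hv.locallyIntegrable (μ := volume))

lemma IsMoll.moll_sub_lin {ρ : ESp n → ℝ} {δ : ℝ} (h : IsMoll ρ δ) {v w : ESp n → ℝ} (hv : Continuous v)
    (hw : Continuous w) (a b : ℝ) (x : ESp n) :
    moll ρ (fun y => a * (w y - v y) + b) x = a * (moll ρ w x - moll ρ v x) + b := by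
  unfold moll
  have e1 : ∀ t, ρ t * (a * (w (x - t) - v (x - t)) + b) =
      (a * (ρ t * w (x - t)) - a * (ρ t * v (x - t))) + ρ t * b := by intro t; ring
  simp_rw [e1]
  have i1 := (h.integrable_sub hw x).const_mul a
  have i2 := (h.integrable_sub hv x).const_mul a
  have i3 : Integrable fun t => a * (ρ t * w (x - t)) - a * (ρ t * v (x - t)) := i1.sub i2
  rw [integral_add i3 (h.integrable continuous_const), integral_sub i1 i2, h.const, integral_const_mul,
    integral_const_mul]
  ring

lemma IsMoll.near {ρ : ESp n → ℝ} {δ : ℝ} (h : IsMoll ρ δ) {v : ESp n → ℝ} (hv : Continuous v) {x : ESp n}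
    {a : ℝ} (hx : ∀ y, ‖x - y‖ ≤ δ → |v y - v x| ≤ a) : |moll ρ v x - v x| ≤ a := by
  rw [abs_le]
  have h1 := h.mono hv continuous_const (x := x) (g := fun _ => v x + a)
    fun y hy => by have := (abs_le.1 (hx y hy)).2; linarith
  have h2 := h.mono continuous_const hv (x := x) (f := fun _ => v x - a)
    fun y hy => by have := (abs_le.1 (hx y hy)).1; linarith
  rw [h.moll_const] at h1 h2
  constructor <;> linarith

/-- A mollified sup-convolution is an almost subsolution of `Lop S`, with an error controlled by the
gap between the sup-convolutions with parameters `ε` and `2ε`. -/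
theorem approx_eps (hM : IsOpen M) (S : ACStruct n M) {Ω : Set (ESp n)} (hΩM : Ω ⊆ M)
    {u : ESp n → ℝ} (hu : JPsh S Ω u) {C : ℝ} (hC : ∀ x ∈ Ω, |u x| ≤ C) {K : Set (ESp n)}
    (hK : IsCompact K) {κ : ℝ} (hκ : 0 < κ) (hKΩ : cthickening κ K ⊆ Ω) (hne : K.Nonempty) :
    ∃ N : ℝ, 0 ≤ N ∧ ∃ ε₀ > 0, ∀ ε, 0 < ε → ε < ε₀ → ∃ v η : ESp n → ℝ, ContDiff ℝ (⊤ : ℕ∞) v ∧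
      Continuous η ∧ ∀ x ∈ K, |v x - scv u (cthickening κ K) ε x| ≤ ε ∧ 0 ≤ η x ∧
        η x ≤ N * (scv u (cthickening κ K) (2 * ε) x - scv u (cthickening κ K) ε x + 3 * ε) ∧
        -η x ≤ Lop S v x := by
  set K' := cthickening κ K with hK'
  have hK'c : IsCompact K' := hK.cthickening
  have hKK' : K ⊆ K' := self_subset_cthickening K
  have hne' : K'.Nonempty := hne.mono hKK'
  have husc : UpperSemicontinuousOn u K' := hu.1.mono hKΩ
  have hCK : ∀ x ∈ K', |u x| ≤ C := fun x hx => hC x (hKΩ hx)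
  have hC0 : 0 ≤ C := (abs_nonneg _).trans (hCK _ hne'.some_mem)
  obtain ⟨Λ, hΛ, hL1, hL2⟩ := unif_Lam hM S hK'c (hKΩ.trans hΩM)
  have hball : ∀ x ∈ K, ball x κ ⊆ interior K' := fun x hx =>
    (isOpen_ball.subset_interior_iff).2 ((ball_subset_thickening hx κ).trans (thickening_subset_cthickening κ K))
  have hN : (0:ℝ) ≤ (2 * n : ℕ) * (48 * Λ^2) := by positivity
  -- The bound `4 C ε < (κ/4)²` keeps the maximisers within distance `κ/4`.
  refine ⟨(2 * n : ℕ) * (48 * Λ^2), hN, (κ/4)^2 / (4 * (C + 1)), by positivity, fun ε hε hε1 => ?_⟩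
  have hε2 : 4 * C * ε < (κ/4)^2 := by
    rw [lt_div_iff₀ (by positivity)] at hε1
    nlinarith
  have hc1 : Continuous (scv u K' ε) := scv_cont hK'c hne' husc hε
  have hc2 : Continuous (scv u K' (2 * ε)) := scv_cont hK'c hne' husc (by positivity)
  have huc : ∀ w : ESp n → ℝ, Continuous w → ∃ δ > 0, ∀ x ∈ K', ∀ y ∈ K', ‖x - y‖ < δ → |w y - w x| ≤ ε := by
    intro w hw
    have := hK'c.uniformContinuousOn_of_continuous hw.continuousOn
    rw [Metric.uniformContinuousOn_iff] at this
    obtain ⟨δ, hδ, h⟩ := this ε hε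
    refine ⟨δ, hδ, fun x hx y hy hxy => ?_⟩
    have := h y hy x hx (by rw [dist_comm, dist_eq_norm]; exact hxy)
    rw [Real.dist_eq] at this; exact this.le
  obtain ⟨δ1, hδ1, hu1⟩ := huc _ hc1
  obtain ⟨δ2, hδ2, hu2⟩ := huc _ hc2
  -- The mollification scale: `δ < ε` makes the term `δ²/ε` small, and `δ < δ1, δ2` makes mollification
  -- change the sup-convolutions by at most `ε`.
  obtain ⟨δ, hδ, hδle⟩ : ∃ δ > 0, δ < δ1 ∧ δ < δ2 ∧ δ < ε ∧ δ < κ/4 ∧ δ < 1 := by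
    obtain ⟨δ, h1, h2⟩ := exists_between (show 0 < min (min δ1 δ2) (min ε (min (κ/4) 1)) by positivity)
    simp only [lt_min_iff] at h2
    exact ⟨δ, h1, h2.1.1, h2.1.2, h2.2.1, h2.2.2.1, h2.2.2.2⟩
  obtain ⟨hδ1', hδ2', hδε, hδκ, hδ1⟩ := hδle
  obtain ⟨ρ, hρ, hρs⟩ := exists_moll (n := n) δ hδ
  have hyK : ∀ x ∈ K, ∀ y, ‖x - y‖ ≤ δ → y ∈ K' := fun x hx y hy =>
    interior_subset (hball x hx (by rw [mem_ball, dist_comm, dist_eq_norm]; linarith))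
  have hδε' : δ^2 / ε ≤ ε := by
    rw [div_le_iff₀ hε]; nlinarith
  refine ⟨moll ρ (scv u K' ε), fun x => (2 * n : ℕ) * (48 * Λ^2) *
    (moll ρ (scv u K' (2 * ε)) x - moll ρ (scv u K' ε) x + δ^2 / ε), hρs _ hc1, ?_, ?_⟩
  · have a1 := (hρs _ hc1).continuous; have a2 := (hρs _ hc2).continuous
    fun_prop
  intro x hx
  have n1 := hρ.near hc1 (x := x) (a := ε) fun y hy => hu1 x (hKK' hx) y (hyK x hx y hy) (by linarith)
  have n2 := hρ.near hc2 (x := x) (a := ε) fun y hy => hu2 x (hKK' hx) y (hyK x hx y hy) (by linarith)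
  have hmono : moll ρ (scv u K' ε) x ≤ moll ρ (scv u K' (2 * ε)) x :=
    hρ.mono hc1 hc2 fun y _ => scv_mono hK'c hne' husc hε y
  refine ⟨n1, ?_, ?_, ?_⟩
  · refine mul_nonneg hN ?_
    have : 0 ≤ δ^2 / ε := by positivity
    linarith
  · refine mul_le_mul_of_nonneg_left ?_ hN
    have := abs_le.1 n1; have := abs_le.1 n2
    linarith
  · have hi : ∀ i, - (48 * Λ^2 * (moll ρ (scv u K' (2 * ε)) x - moll ρ (scv u K' ε) x + δ^2 / ε)) ≤
        fderiv ℝ (fderiv ℝ (moll ρ (scv u K' ε))) x (sb n i) (sb n i) +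
        fderiv ℝ (fderiv ℝ (moll ρ (scv u K' ε))) x (S.J x (sb n i)) (S.J x (sb n i)) +
          fderiv ℝ (moll ρ (scv u K' ε)) x (cB S x (sb n i) (sb n i)) := by
      intro i
      rw [← dd_moll (hρs _ hc1)]
      have hH : Continuous fun y => (12 * Λ^2) * (scv u K' (2 * ε) y - scv u K' ε y) + 3 * Λ^2 * δ^2 / ε := by
        fun_prop
      have hpt : ∀ y, ‖x - y‖ ≤ δ → ∃ p ∈ K', scv u K' ε y = u p - ‖y - p‖^2 / (2 * ε) ∧
          ‖y - p‖ < κ/4 ∧ ‖x - p‖ < κ := by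
        intro y hy
        obtain ⟨p, hp, h1, -⟩ := scv_att hK'c hne' husc (ε := ε) y
        have h2 := scv_dist hK'c husc hCK hε (hyK x hx y hy) hp h1
        have h3 : ‖y - p‖ < κ/4 := lt_of_pow_lt_pow_left₀ 2 (by positivity) (h2.trans_lt hε2)
        refine ⟨p, hp, h1, h3, ?_⟩
        have : x - p = (x - y) + (y - p) := by abel
        rw [this]; refine (norm_add_le _ _).trans_lt ?_
        linarith
      have := moll_visc hρ hc1 hH (hρs _ hc1) (x := x) (e := sb n i) (e' := S.J x (sb n i))
        (c := (1/4 : ℝ) • cB S x (sb n i) (sb n i))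
        (B := (2 * (κ/4) * ‖(1/4 : ℝ) • cB S x (sb n i) (sb n i)‖ + (‖sb n i‖ + ‖S.J x (sb n i)‖ +
          ‖(1/4 : ℝ) • cB S x (sb n i) (sb n i)‖)^2) / (2 * ε)) ?_ ?_
      · rw [hρ.moll_sub_lin hc1 hc2] at this
        have e3 : 3 * Λ^2 * δ^2 / ε = 3 * Λ^2 * (δ^2 / ε) := by ring
        have e4 : 0 ≤ Λ^2 * (δ^2 / ε) := by positivity
        rw [e3] at this
        linarith
      · intro y hy η hη
        obtain ⟨p, hp, h1, h2, h3⟩ := hpt y hy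
        have hpU : p ∈ interior K' := hball x hx (by rw [mem_ball, dist_comm, dist_eq_norm]; exact h3)
        obtain ⟨l1, l2⟩ := hL1 p hp
        obtain ⟨l3, l4⟩ := hL2 x p κ ((hball x hx).trans interior_subset) h3 i
        have hvisc := visc hM S hΩM (isOpen_interior (s := K')) (interior_subset.trans hKΩ) hu hC hc1 hε
          (fun q z hz => scv_ge hK'c husc q (interior_subset hz)) hpU h1 hΛ hδ hδ1.le hy (norm_sb i).le
          l1 l3 l2 l4 hη
        filter_upwards [hvisc] with ϱ hϱ
        refine le_trans ?_ hϱ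
        have hgap := scv_gap hK'c husc hε hp h1
        have := mul_le_mul_of_nonneg_left hgap (by positivity : 0 ≤ 3 * Λ^2)
        have e1 : -(3 * Λ^2 / ε) * (‖y - p‖^2 + δ^2) = -(3 * Λ^2 * (‖y - p‖^2 / ε)) - 3 * Λ^2 * δ^2 / ε := by
          ring
        rw [e1]; linarith
      · intro y hy ϱ hϱ0 hϱ1
        obtain ⟨p, hp, h1, h2, h3⟩ := hpt y hy
        exact scv_crude hc1 hε (fun q => scv_ge hK'c husc q hp) h1 h2.le hϱ0 hϱ1
    unfold Lop
    refine le_trans (le_of_eq ?_) (Finset.sum_le_sum fun i _ => hi i)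
    rw [Finset.sum_const, Finset.card_univ, Fintype.card_fin, nsmul_eq_mul]
    ring

lemma usc_aemeas {Ω : Set (ESp n)} (hΩ : MeasurableSet Ω) {u : ESp n → ℝ} (hu : UpperSemicontinuousOn u Ω) :
    AEMeasurable u (volume.restrict Ω) := by
  refine aemeasurable_restrict_of_measurable_subtype hΩ ?_
  have : UpperSemicontinuous fun x : Ω => u x := by
    intro x a ha
    have := hu x x.2 a ha
    rw [nhdsWithin_eq_map_subtype_coe x.2] at this
    exact this
  exact this.measurable

/-- On a compact set, bounded plurisubharmonic functions are `L²` limits of smooth functions which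
are subsolutions of `Lop S` up to a small error in `L¹`. -/
theorem local_approx (hM : IsOpen M) (S : ACStruct n M) {Ω : Set (ESp n)} (hΩ : IsOpen Ω) (hΩM : Ω ⊆ M)
    {u : ESp n → ℝ} (hu : JPsh S Ω u) {C : ℝ} (hC : ∀ x ∈ Ω, |u x| ≤ C) {K : Set (ESp n)}
    (hK : IsCompact K) (hKΩ : K ⊆ Ω) {θ : ℝ} (hθ : 0 < θ) :
    ∃ v η : ESp n → ℝ, ContDiff ℝ (⊤ : ℕ∞) v ∧ Continuous η ∧
      (∀ x ∈ K, |v x| ≤ C + 1 ∧ 0 ≤ η x ∧ -η x ≤ Lop S v x) ∧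
      ∫ x in K, (v x - u x)^2 ≤ θ ∧ ∫ x in K, η x ≤ θ := by
  rcases K.eq_empty_or_nonempty with rfl | hne
  · exact ⟨0, 0, contDiff_const, continuous_const, by simp, by simpa using hθ.le, by simpa using hθ.le⟩
  obtain ⟨κ, hκ, hκΩ⟩ := hK.exists_cthickening_subset_open hΩ hKΩ
  obtain ⟨N, hN, ε₀, hε₀, happ⟩ := approx_eps hM S hΩM hu hC hK hκ hκΩ hne
  set K' := cthickening κ K with hK'
  have hK'c : IsCompact K' := hK.cthickening
  have hKK' : K ⊆ K' := self_subset_cthickening K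
  have hne' : K'.Nonempty := hne.mono hKK'
  have husc : UpperSemicontinuousOn u K' := hu.1.mono hκΩ
  have hCK : ∀ x ∈ K', |u x| ≤ C := fun x hx => hC x (hκΩ hx)
  have hC0 : 0 ≤ C := (abs_nonneg _).trans (hCK _ hne'.some_mem)
  have hm1 : 0 < min ε₀ 1 := lt_min hε₀ one_pos
  set ε : ℕ → ℝ := fun m => min ε₀ 1 / ((m : ℝ) + 2) with hε
  have hεpos : ∀ m, 0 < ε m := fun m => by positivity
  have hεlt : ∀ m, ε m < min ε₀ 1 := fun m => by
    rw [hε]; exact div_lt_self hm1 (by have : (0:ℝ) ≤ m := m.cast_nonneg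
                                       linarith)
  have hεlim0 : Tendsto ε atTop (𝓝 0) := by
    refine Tendsto.const_div_atTop ?_ _
    exact tendsto_natCast_atTop_atTop.atTop_add tendsto_const_nhds
  have hεlim : Tendsto ε atTop (𝓝[>] 0) := tendsto_nhdsWithin_iff.2 ⟨hεlim0, Eventually.of_forall hεpos⟩
  have hεlim2 : Tendsto (fun m => 2 * ε m) atTop (𝓝[>] 0) := by
    refine tendsto_nhdsWithin_iff.2 ⟨?_, Eventually.of_forall fun m => mul_pos two_pos (hεpos m)⟩
    simpa using hεlim0.const_mul 2
  choose v η hv hη hp using fun m => happ (ε m) (hεpos m) ((hεlt m).trans_le (min_le_left _ _))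
  have hKm : MeasurableSet K := hK.measurableSet
  have hfin : volume K < ⊤ := hK.measure_lt_top
  have hs1 : ∀ x ∈ K, Tendsto (fun m => scv u K' (ε m) x) atTop (𝓝 (u x)) := fun x hx =>
    (scv_tendsto hK'c husc hCK (hKK' hx)).comp hεlim
  have hs2 : ∀ x ∈ K, Tendsto (fun m => scv u K' (2 * ε m) x) atTop (𝓝 (u x)) := fun x hx =>
    (scv_tendsto hK'c husc hCK (hKK' hx)).comp hεlim2
  have hsb : ∀ x ∈ K, ∀ e, 0 < e → |scv u K' e x| ≤ C := by
    intro x hx e he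
    rw [abs_le]
    have h1 := scv_le hK'c hne' husc hCK he x
    have h2 := le_scv hK'c husc (ε := e) (hKK' hx)
    have h3 := abs_le.1 (hCK x (hKK' hx))
    constructor <;> linarith
  have hvb : ∀ m, ∀ x ∈ K, |v m x| ≤ C + 1 := by
    intro m x hx
    have h1 := hsb x hx (ε m) (hεpos m)
    have h2 := (hp m x hx).1
    have h3 := (hεlt m).trans_le (min_le_right _ _)
    have := abs_add_le (v m x - scv u K' (ε m) x) (scv u K' (ε m) x)
    rw [sub_add_cancel] at this
    linarith
  have hum : AEStronglyMeasurable u (volume.restrict K) :=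
    ((usc_aemeas hΩ.measurableSet hu.1).mono_measure (Measure.restrict_mono hKΩ le_rfl)).aestronglyMeasurable
  have hvlim : ∀ x ∈ K, Tendsto (fun m => v m x) atTop (𝓝 (u x)) := by
    intro x hx
    have h1 : Tendsto (fun m => v m x - scv u K' (ε m) x) atTop (𝓝 0) :=
      squeeze_zero_norm (fun m => (hp m x hx).1) hεlim0
    simpa using h1.add (hs1 x hx)
  have lim1 : Tendsto (fun m => ∫ x in K, (v m x - u x)^2) atTop (𝓝 (∫ x in K, (0:ℝ))) := by
    refine tendsto_integral_of_dominated_convergence (fun _ => (2 * C + 1)^2) ?_ ?_ ?_ ?_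
    · exact fun m => (((hv m).continuous.aestronglyMeasurable).sub hum).pow 2
    · exact integrableOn_const hfin.ne
    · intro m
      refine (ae_restrict_iff' hKm).2 (Eventually.of_forall fun x hx => ?_)
      rw [norm_pow, Real.norm_eq_abs]
      have := hvb m x hx; have := hCK x (hKK' hx)
      have := abs_sub (v m x) (u x)
      gcongr; linarith
    · refine (ae_restrict_iff' hKm).2 (Eventually.of_forall fun x hx => ?_)
      have := ((hvlim x hx).sub_const (u x)).pow 2
      simpa using this
  have lim2 : Tendsto (fun m => ∫ x in K, η m x) atTop (𝓝 (∫ x in K, (0:ℝ))) := by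
    have hub : ∀ x ∈ K, Tendsto (fun m => N * (scv u K' (2 * ε m) x - scv u K' (ε m) x + 3 * ε m)) atTop (𝓝 0) := by
      intro x hx
      have := (((hs2 x hx).sub (hs1 x hx)).add (hεlim0.const_mul 3)).const_mul N
      simpa using this
    refine tendsto_integral_of_dominated_convergence (fun _ => N * (2 * C + 3)) ?_ ?_ ?_ ?_
    · exact fun m => (hη m).aestronglyMeasurable
    · exact integrableOn_const hfin.ne
    · intro m
      refine (ae_restrict_iff' hKm).2 (Eventually.of_forall fun x hx => ?_)
      obtain ⟨-, h1, h2, -⟩ := hp m x hx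
      rw [Real.norm_of_nonneg h1]
      refine h2.trans (mul_le_mul_of_nonneg_left ?_ hN)
      have h3 := abs_le.1 (hsb x hx (ε m) (hεpos m))
      have h4 := abs_le.1 (hsb x hx (2 * ε m) (mul_pos two_pos (hεpos m)))
      have h5 := (hεlt m).trans_le (min_le_right _ _)
      linarith
    · refine (ae_restrict_iff' hKm).2 (Eventually.of_forall fun x hx => ?_)
      exact squeeze_zero (fun m => (hp m x hx).2.1) (fun m => (hp m x hx).2.2.1) (hub x hx)
  rw [integral_zero] at lim1 lim2
  obtain ⟨m, h1, h2⟩ := ((lim1.eventually (gt_mem_nhds hθ)).and (lim2.eventually (gt_mem_nhds hθ))).exists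
  exact ⟨v m, η m, hv m, hη m, fun x hx => ⟨hvb m x hx, (hp m x hx).2.1, (hp m x hx).2.2.2⟩, h1.le, h2.le⟩

end PshAux

/-! ### Smooth almost subsolutions along an exhaustion -/

namespace PshAux
variable {n : ℕ} {M : Set (ESp n)}

/-- Exhaustion of an open set by compact sets. -/
lemma exists_exh {Ω : Set (ESp n)} (hΩ : IsOpen Ω) : ∃ E : ℕ → Set (ESp n),
    (∀ m, IsCompact (E m)) ∧ (∀ m, E m ⊆ Ω) ∧ Monotone E ∧ (∀ m, E m ⊆ interior (E (m+1))) ∧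
    ∀ K, IsCompact K → K ⊆ Ω → ∃ m, K ⊆ E m := by
  haveI : LocallyCompactSpace Ω := hΩ.locallyCompactSpace
  let X := CompactExhaustion.choice Ω
  refine ⟨fun m => Subtype.val '' X m, fun m => (X.isCompact m).image continuous_subtype_val, ?_, ?_, ?_, ?_⟩
  · rintro m _ ⟨y, -, rfl⟩; exact y.2
  · intro a b hab; exact image_mono (X.subset hab)
  · rintro m _ ⟨y, hy, rfl⟩
    have h := X.subset_interior_succ m hy
    have := hΩ.isOpenMap_subtype_val.image_interior_subset (X (m+1))
    exact this ⟨y, h, rfl⟩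
  · intro K hK hKΩ
    have hc : IsCompact ((↑) ⁻¹' K : Set Ω) := by
      rw [Topology.IsInducing.subtypeVal.isCompact_iff]
      rwa [Subtype.image_preimage_coe, inter_eq_self_of_subset_right hKΩ]
    obtain ⟨m, hm⟩ := X.exists_superset_of_isCompact hc
    exact ⟨m, fun x hx => ⟨⟨x, hKΩ hx⟩, hm hx, rfl⟩⟩

/-- Smooth approximations `v m` of `u` that are almost subsolutions of `Lop S`, with error `η m`
tending to zero in `L¹_loc`, the bounds being valid on each compact set for large `m`. -/
structure IsApprox (S : ACStruct n M) (Ω : Set (ESp n)) (u : ESp n → ℝ) (C : ℝ)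
    (v η : ℕ → ESp n → ℝ) : Prop where
  smooth : ∀ m, ContDiff ℝ (⊤ : ℕ∞) (v m)
  cont : ∀ m, Continuous (η m)
  bd : ∀ K, IsCompact K → K ⊆ Ω → ∀ᶠ m in atTop, ∀ x ∈ K, |v m x| ≤ C ∧ 0 ≤ η m x ∧ -η m x ≤ Lop S (v m) x
  lim_v : ∀ K, IsCompact K → K ⊆ Ω → Tendsto (fun m => ∫ x in K, (v m x - u x)^2) atTop (𝓝 0)
  lim_η : ∀ K, IsCompact K → K ⊆ Ω → Tendsto (fun m => ∫ x in K, η m x) atTop (𝓝 0)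

lemma usc_bdd_sq {Ω : Set (ESp n)} (hΩ : IsOpen Ω) {u : ESp n → ℝ} (hu : UpperSemicontinuousOn u Ω) {C : ℝ}
    (hC : ∀ x ∈ Ω, |u x| ≤ C) {K : Set (ESp n)} (hK : IsCompact K) (hKΩ : K ⊆ Ω) :
    MemLp u 2 (volume.restrict K) := by
  have hum : AEStronglyMeasurable u (volume.restrict K) :=
    ((usc_aemeas hΩ.measurableSet hu).mono_measure (Measure.restrict_mono hKΩ le_rfl)).aestronglyMeasurable
  haveI : IsFiniteMeasure (volume.restrict K) := ⟨by simpa using hK.measure_lt_top⟩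
  exact MemLp.of_bound hum C ((ae_restrict_iff' hK.measurableSet).2 (Eventually.of_forall fun x hx => hC x (hKΩ hx)))

lemma cont_memLp {f : ESp n → ℝ} (hf : Continuous f) {K : Set (ESp n)} (hK : IsCompact K) :
    MemLp f 2 (volume.restrict K) := by
  haveI : IsFiniteMeasure (volume.restrict K) := ⟨by simpa using hK.measure_lt_top⟩
  obtain ⟨C, hC⟩ := hK.exists_bound_of_continuousOn hf.continuousOn
  exact MemLp.of_bound hf.aestronglyMeasurable C
    ((ae_restrict_iff' hK.measurableSet).2 (Eventually.of_forall fun x hx => hC x hx))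

lemma exists_approx (hM : IsOpen M) (S : ACStruct n M) {Ω : Set (ESp n)} (hΩ : IsOpen Ω) (hΩM : Ω ⊆ M)
    {u : ESp n → ℝ} (hu : JPsh S Ω u) {C : ℝ} (hC : ∀ x ∈ Ω, |u x| ≤ C) :
    ∃ v η, IsApprox S Ω u (C+1) v η := by
  obtain ⟨E, hEc, hEΩ, hEm, -, hE⟩ := exists_exh hΩ
  have hpos : ∀ m : ℕ, (0:ℝ) < 1 / ((m:ℝ) + 1) := fun m => by positivity
  choose v η hv hη hb h1 h2 using fun m => local_approx hM S hΩ hΩM hu hC (hEc m) (hEΩ m) (hpos m)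
  have hev : ∀ K, IsCompact K → K ⊆ Ω → ∀ᶠ m in atTop, K ⊆ E m := by
    intro K hK hKΩ
    obtain ⟨m, hm⟩ := hE K hK hKΩ
    exact eventually_atTop.2 ⟨m, fun b hb => hm.trans (hEm hb)⟩
  refine ⟨v, η, hv, hη, ?_, ?_, ?_⟩
  · intro K hK hKΩ
    filter_upwards [hev K hK hKΩ] with m hm x hx using hb m x (hm hx)
  · intro K hK hKΩ
    refine squeeze_zero' (Eventually.of_forall fun m => integral_nonneg fun x => sq_nonneg _) ?_
      tendsto_one_div_add_atTop_nhds_zero_nat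
    filter_upwards [hev K hK hKΩ] with m hm
    refine le_trans (setIntegral_mono_set ?_ (Eventually.of_forall fun x => sq_nonneg _) hm.eventuallyLE) (h1 m)
    exact ((cont_memLp (hv m).continuous (hEc m)).sub (usc_bdd_sq hΩ hu.1 hC (hEc m) (hEΩ m))).integrable_sq
  · intro K hK hKΩ
    refine squeeze_zero' ?_ ?_ tendsto_one_div_add_atTop_nhds_zero_nat
    · filter_upwards [hev K hK hKΩ] with m hm
      exact setIntegral_nonneg hK.measurableSet fun x hx => (hb m x (hm hx)).2.1
    filter_upwards [hev K hK hKΩ] with m hm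
    refine le_trans (setIntegral_mono_set ((hη m).continuousOn.integrableOn_compact (hEc m)) ?_ hm.eventuallyLE) (h2 m)
    exact (ae_restrict_iff' (hEc m).measurableSet).2 (Eventually.of_forall fun x hx => (hb m x hx).2.1)

end PshAux

/-! ### Weak compactness in `L²_loc` -/

namespace PshAux
variable {n : ℕ} {M : Set (ESp n)}

/-- A bounded sequence in a Hilbert space converges weakly as soon as its inner products with
the elements of a total set converge. -/
lemma hilbert_weak {H : Type*} [NormedAddCommGroup H] [InnerProductSpace ℝ H] [CompleteSpace H]
    {f : ℕ → H} {B : ℝ} (hB : ∀ l, ‖f l‖ ≤ B) {D : Set H}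
    (hD : ∀ g : H, (∀ d ∈ D, inner ℝ d g = 0) → g = 0)
    (hc : ∀ d ∈ D, ∃ c : ℝ, Tendsto (fun l => inner ℝ (f l) d) atTop (𝓝 c)) :
    ∃ g : H, ∀ ψ : H, Tendsto (fun l => inner ℝ (f l) ψ) atTop (𝓝 (inner ℝ g ψ)) := by
  have hB0 : 0 ≤ B := (norm_nonneg _).trans (hB 0)
  let P : Submodule ℝ H :=
    { carrier := {ψ | ∃ c : ℝ, Tendsto (fun l => inner ℝ (f l) ψ) atTop (𝓝 c)}
      add_mem' := by
        rintro a b ⟨c, hc⟩ ⟨d, hd⟩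
        exact ⟨c + d, by simpa [inner_add_right] using hc.add hd⟩
      zero_mem' := ⟨0, by simp⟩
      smul_mem' := by
        rintro r a ⟨c, hc⟩
        exact ⟨r * c, by simpa [inner_smul_right] using hc.const_mul r⟩ }
  have hPc : IsClosed (P : Set H) := by
    refine isClosed_of_closure_subset fun ψ hψ => ?_
    refine cauchySeq_tendsto_of_complete ?_
    rw [Metric.cauchySeq_iff']
    intro ε hε
    have hδ : 0 < ε / (4 * (B + 1)) := by positivity
    obtain ⟨φ, ⟨c, hφ⟩, hd⟩ := Metric.mem_closure_iff.1 hψ _ hδ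
    obtain ⟨N, hN⟩ := Metric.cauchySeq_iff'.1 hφ.cauchySeq (ε/2) (half_pos hε)
    refine ⟨N, fun m hm => ?_⟩
    have h1 := hN m hm
    have key : ∀ l, |inner ℝ (f l) ψ - inner ℝ (f l) φ| ≤ ε / 4 := by
      intro l
      rw [← inner_sub_right]
      refine (abs_real_inner_le_norm _ _).trans ?_
      rw [dist_eq_norm] at hd
      calc ‖f l‖ * ‖ψ - φ‖ ≤ (B+1) * (ε / (4 * (B + 1))) :=
            mul_le_mul ((hB l).trans (by linarith)) hd.le (norm_nonneg _) (by linarith)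
        _ = ε / 4 := by field_simp
    rw [Real.dist_eq] at h1 ⊢
    have k1 := abs_le.1 (key m); have k2 := abs_le.1 (key N); have k3 := abs_lt.1 h1
    rw [abs_lt]; constructor <;> linarith
  have hPtop : P = ⊤ := by
    rw [← hPc.submodule_topologicalClosure_eq, Submodule.topologicalClosure_eq_top_iff, Submodule.eq_bot_iff]
    intro g hg
    exact hD g fun d hd => (Submodule.mem_orthogonal _ _).1 hg d (hc d hd)
  have hall : ∀ ψ : H, ∃ c : ℝ, Tendsto (fun l => inner ℝ (f l) ψ) atTop (𝓝 c) := by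
    intro ψ
    have : ψ ∈ P := by rw [hPtop]; trivial
    exact this
  choose c hc' using hall
  have ht : Tendsto (fun l ψ => (innerSL ℝ (f l)) ψ) atTop (𝓝 c) := by
    rw [tendsto_pi_nhds]; exact fun ψ => hc' ψ
  let Λ := continuousLinearMapOfTendsto (fun l => innerSL ℝ (f l)) ht
  refine ⟨(InnerProductSpace.toDual ℝ H).symm Λ, fun ψ => ?_⟩
  rw [InnerProductSpace.toDual_symm_apply]
  exact hc' ψ

lemma toLp_inner {α : Type*} [MeasurableSpace α] {μ : Measure α} {f g : α → ℝ} (hf : MemLp f 2 μ) (hg : MemLp g 2 μ) :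
    inner ℝ (hf.toLp f) (hg.toLp g) = ∫ x, f x * g x ∂μ := by
  rw [MeasureTheory.L2.inner_def]
  refine integral_congr_ae ?_
  filter_upwards [hf.coeFn_toLp, hg.coeFn_toLp] with x h1 h2
  rw [h1, h2]; simp [mul_comm]

/-- Weak compactness in `L²(U)`: convergence against test functions upgrades to weak convergence. -/
lemma wk_compact {U : Set (ESp n)} (hU : IsOpen U) {f : ℕ → ESp n → ℝ} {B : ℝ}
    (hf : ∀ l, MemLp (f l) 2 (volume.restrict U)) (hB : ∀ l, ∫ x in U, (f l x)^2 ≤ B)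
    (hc : ∀ φ : ESp n → ℝ, ContDiff ℝ (⊤ : ℕ∞) φ → HasCompactSupport φ → tsupport φ ⊆ U →
      ∃ c : ℝ, Tendsto (fun l => ∫ x in U, f l x * φ x) atTop (𝓝 c)) :
    ∃ g : ESp n → ℝ, MemLp g 2 (volume.restrict U) ∧ ∀ ψ, MemLp ψ 2 (volume.restrict U) →
      Tendsto (fun l => ∫ x in U, f l x * ψ x) atTop (𝓝 (∫ x in U, g x * ψ x)) := by
  let μ := volume.restrict U
  have htest : ∀ φ : ESp n → ℝ, ContDiff ℝ (⊤ : ℕ∞) φ → HasCompactSupport φ → MemLp φ 2 μ :=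
    fun φ h1 h2 => (h1.continuous.memLp_of_hasCompactSupport h2).restrict U
  let D : Set (Lp ℝ 2 μ) := {d | ∃ (φ : ESp n → ℝ) (h1 : ContDiff ℝ (⊤ : ℕ∞) φ) (h2 : HasCompactSupport φ),
    tsupport φ ⊆ U ∧ d = (htest φ h1 h2).toLp φ}
  have k1 : ∀ l, ‖(hf l).toLp (f l)‖ ≤ Real.sqrt B := by
    intro l
    refine Real.le_sqrt_of_sq_le ?_
    rw [← real_inner_self_eq_norm_sq, toLp_inner]
    simpa [sq] using hB l
  have k2 : ∀ g : Lp ℝ 2 μ, (∀ d ∈ D, inner ℝ d g = 0) → g = 0 := by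
    intro g hg
    have hgm := Lp.memLp g
    have hz : ∀ᵐ x ∂volume, x ∈ U → g x = 0 := by
      refine hU.ae_eq_zero_of_integral_contDiff_smul_eq_zero ?_ ?_
      · intro x hx
        obtain ⟨K, hK, hxK, hKU⟩ := exists_compact_subset hU hx
        refine ⟨K, mem_nhdsWithin_of_mem_nhds (mem_interior_iff_mem_nhds.1 hxK), ?_⟩
        have : IsFiniteMeasure (volume.restrict K) := ⟨by simpa using hK.measure_lt_top⟩
        exact (hgm.mono_measure (Measure.restrict_mono hKU le_rfl)).integrable (by norm_num)
      · intro φ h1 h2 h3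
        have := hg _ ⟨φ, h1, h2, h3, rfl⟩
        have e : inner ℝ ((htest φ h1 h2).toLp φ) g = ∫ x in U, φ x * g x := by
          conv_lhs => rw [← Lp.toLp_coeFn g hgm]
          rw [toLp_inner]
        rw [e] at this
        rw [← this]
        refine (setIntegral_eq_integral_of_forall_compl_eq_zero fun x hx => ?_).symm
        rw [image_eq_zero_of_notMem_tsupport (fun h => hx (h3 h))]; simp
    refine (Lp.eq_zero_iff_ae_eq_zero).2 ?_
    exact (ae_restrict_iff' hU.measurableSet).2 hz
  have k3 : ∀ d ∈ D, ∃ c : ℝ, Tendsto (fun l => inner ℝ ((hf l).toLp (f l)) d) atTop (𝓝 c) := by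
    rintro _ ⟨φ, h1, h2, h3, rfl⟩
    obtain ⟨c, hc⟩ := hc φ h1 h2 h3
    exact ⟨c, by simpa only [toLp_inner] using hc⟩
  obtain ⟨G, hG⟩ := hilbert_weak k1 k2 k3
  refine ⟨G, Lp.memLp G, fun ψ hψ => ?_⟩
  have := hG (hψ.toLp ψ)
  have e : inner ℝ G (hψ.toLp ψ) = ∫ x in U, G x * ψ x := by
    conv_lhs => rw [← Lp.toLp_coeFn G (Lp.memLp G)]
    rw [toLp_inner]
  rw [e] at this
  simpa only [toLp_inner] using this

/-- Local version of `wk_compact`, the local limits being patched along an exhaustion. -/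
lemma wk_compact_loc {Ω : Set (ESp n)} (hΩ : IsOpen Ω) {f : ℕ → ESp n → ℝ}
    (hf : ∀ l K, IsCompact K → K ⊆ Ω → MemLp (f l) 2 (volume.restrict K))
    (hB : ∀ K, IsCompact K → K ⊆ Ω → ∃ B : ℝ, ∀ᶠ l in atTop, ∫ x in K, (f l x)^2 ≤ B)
    (hc : ∀ φ : ESp n → ℝ, ContDiff ℝ (⊤ : ℕ∞) φ → HasCompactSupport φ → tsupport φ ⊆ Ω →
      ∃ c : ℝ, Tendsto (fun l => ∫ x in Ω, f l x * φ x) atTop (𝓝 c)) :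
    ∃ g : ESp n → ℝ, ∀ K, IsCompact K → K ⊆ Ω → MemLp g 2 (volume.restrict K) ∧
      ∀ ψ, MemLp ψ 2 (volume.restrict K) →
      Tendsto (fun l => ∫ x in K, f l x * ψ x) atTop (𝓝 (∫ x in K, g x * ψ x)) := by
  obtain ⟨E, hEc, hEΩ, hEm, hEi, hE⟩ := exists_exh hΩ
  have loc : ∀ m, ∃ g : ESp n → ℝ, MemLp g 2 (volume.restrict (E m)) ∧ ∀ ψ, MemLp ψ 2 (volume.restrict (E m)) →
      Tendsto (fun l => ∫ x in E m, f l x * ψ x) atTop (𝓝 (∫ x in E m, g x * ψ x)) := by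
    intro m
    obtain ⟨B, hB⟩ := hB (E (m+1)) (hEc _) (hEΩ _)
    obtain ⟨N, hN⟩ := eventually_atTop.1 hB
    set U := interior (E (m+1)) with hU
    have hUE : U ⊆ E (m+1) := interior_subset
    have hmem : ∀ l, MemLp (f l) 2 (volume.restrict U) := fun l =>
      (hf l _ (hEc (m+1)) (hEΩ _)).mono_measure (Measure.restrict_mono hUE le_rfl)
    obtain ⟨g, hg, hgw⟩ := wk_compact (U := U) isOpen_interior (f := fun l => f (l + N)) (B := B)
      (fun l => hmem _) (fun l => by
        refine le_trans (setIntegral_mono_set ?_ (Eventually.of_forall fun x => sq_nonneg _)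
          hUE.eventuallyLE) (hN (l+N) (by omega))
        exact (hf _ _ (hEc _) (hEΩ _)).integrable_sq) (fun φ h1 h2 h3 => by
        obtain ⟨c, hc⟩ := hc φ h1 h2 (h3.trans (hUE.trans (hEΩ _)))
        refine ⟨c, ?_⟩
        have e : ∀ l, ∫ x in U, f (l+N) x * φ x = ∫ x in Ω, f (l+N) x * φ x := fun l =>
          (setIntegral_eq_of_subset_of_forall_sdiff_eq_zero hΩ.measurableSet (hUE.trans (hEΩ _)) fun x hx => by
            rw [image_eq_zero_of_notMem_tsupport (fun h => hx.2 (h3 h))]; simp).symm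
        simp only [e]
        exact (tendsto_add_atTop_iff_nat N).2 hc)
    refine ⟨g, hg.mono_measure (Measure.restrict_mono (hEi m) le_rfl), fun ψ hψ => ?_⟩
    have hE' := (hEc m).measurableSet
    have h1 := hgw ((E m).indicator ψ) (by
      have : MemLp ((E m).indicator ψ) 2 volume := (memLp_indicator_iff_restrict hE').2 hψ
      exact this.restrict U)
    have e : ∀ h : ESp n → ℝ, ∫ x in U, h x * (E m).indicator ψ x = ∫ x in E m, h x * ψ x := by
      intro h
      have : (fun x => h x * (E m).indicator ψ x) = (E m).indicator (fun x => h x * ψ x) := by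
        ext x; by_cases hx : x ∈ E m <;> simp [hx]
      rw [this, setIntegral_indicator hE', inter_eq_self_of_subset_right (hEi m)]
    simp only [e] at h1
    exact (tendsto_add_atTop_iff_nat N).1 h1
  choose G hG hGw using loc
  let g : ESp n → ℝ := fun x => if h : ∃ m, x ∈ E m then G (Nat.find h) x else 0
  let P : ℕ → Set (ESp n) := fun m => disjointed E m
  have hPm : ∀ m, MeasurableSet (P m) := fun m => MeasurableSet.disjointed (fun i => (hEc i).measurableSet) m
  have hPE : ∀ m, P m ⊆ E m := fun m => disjointed_le E m
  have hgP : ∀ m, ∀ x ∈ P m, g x = G m x := by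
    intro m x hx
    have hex : ∃ m, x ∈ E m := ⟨m, hPE m hx⟩
    have hx' : x ∈ E m ∧ ∀ i < m, x ∉ E i := by
      have := hx
      simp only [P, disjointed_apply] at this
      refine ⟨this.1, fun i hi hxi => this.2 ?_⟩
      simp only [Finset.sup_eq_iSup, iSup_eq_iUnion, mem_iUnion]
      exact ⟨i, Finset.mem_Iio.2 hi, hxi⟩
    have : Nat.find hex = m := (Nat.find_eq_iff hex).2 ⟨hx'.1, hx'.2⟩
    simp only [g, dif_pos hex, this]
  have hcov : ∀ m, E m = ⋃ i ∈ Finset.range (m+1), P i := by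
    intro m
    apply Subset.antisymm
    · intro x hx
      have hex : ∃ m, x ∈ E m := ⟨m, hx⟩
      simp only [mem_iUnion]
      refine ⟨Nat.find hex, Finset.mem_range.2 (Nat.lt_succ_of_le (Nat.find_min' hex hx)), ?_⟩
      simp only [P, disjointed_apply]
      refine ⟨Nat.find_spec hex, fun h => ?_⟩
      simp only [Finset.sup_eq_iSup, iSup_eq_iUnion, mem_iUnion] at h
      obtain ⟨i, hi, hxi⟩ := h
      exact Nat.find_min hex (Finset.mem_Iio.1 hi) hxi
    · simp only [iUnion_subset_iff]
      intro i hi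
      exact (hPE i).trans (hEm (Nat.lt_succ_iff.1 (Finset.mem_range.1 hi)))
  have hdis : ∀ m : ℕ, ((Finset.range (m+1) : Finset ℕ) : Set ℕ).PairwiseDisjoint P := fun m =>
    (disjoint_disjointed E).set_pairwise _
  have hgMem : ∀ m, MemLp g 2 (volume.restrict (E m)) := by
    intro m
    have : MemLp (fun x => ∑ i ∈ Finset.range (m+1), (P i).indicator (G i) x) 2 (volume.restrict (E m)) := by
      refine memLp_finsetSum _ fun i hi => ?_
      have : MemLp ((P i).indicator (G i)) 2 volume :=
        (memLp_indicator_iff_restrict (hPm i)).2 ((hG i).mono_measure (Measure.restrict_mono (hPE i) le_rfl))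
      exact this.restrict _
    refine this.ae_eq ((ae_restrict_iff' (hEc m).measurableSet).2 (Eventually.of_forall fun x hx => ?_))
    rw [hcov m] at hx
    simp only [mem_iUnion] at hx
    obtain ⟨i, hi, hxi⟩ := hx
    rw [Finset.sum_eq_single_of_mem i hi, indicator_of_mem hxi, hgP i x hxi]
    intro j _ hji
    refine indicator_of_notMem (fun hxj => ?_) _
    exact Set.disjoint_left.1 (disjoint_disjointed E hji) hxj hxi
  have hEw : ∀ m, ∀ ψ, MemLp ψ 2 (volume.restrict (E m)) →
      Tendsto (fun l => ∫ x in E m, f l x * ψ x) atTop (𝓝 (∫ x in E m, g x * ψ x)) := by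
    intro m ψ hψ
    have split : ∀ h : ESp n → ℝ, MemLp h 2 (volume.restrict (E m)) →
        ∫ x in E m, h x * ψ x = ∑ i ∈ Finset.range (m+1), ∫ x in P i, h x * ψ x := by
      intro h hh
      have hi : IntegrableOn (fun x => h x * ψ x) (E m) := hh.integrable_mul hψ
      conv_lhs => rw [hcov m]
      refine integral_biUnion_finset _ (fun i _ => hPm i) (hdis m) fun i hi' => hi.mono_set ?_
      rw [hcov m]; exact subset_biUnion_of_mem (u := P) (Finset.mem_coe.2 hi')
    rw [split g (hgMem m)]
    simp_rw [fun l => split (f l) (hf l _ (hEc m) (hEΩ m))]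
    refine tendsto_finsetSum _ fun i hi => ?_
    have hiE : P i ⊆ E m := by
      rw [hcov m]; exact subset_biUnion_of_mem (u := P) (Finset.mem_coe.2 hi)
    have e : ∀ h : ESp n → ℝ, ∫ x in E i, h x * (P i).indicator ψ x = ∫ x in P i, h x * ψ x := by
      intro h
      have : (fun x => h x * (P i).indicator ψ x) = (P i).indicator (fun x => h x * ψ x) := by
        ext x; by_cases hx : x ∈ P i <;> simp [hx]
      rw [this, setIntegral_indicator (hPm i), inter_eq_self_of_subset_right (hPE i)]
    have h1 := hGw i ((P i).indicator ψ) (by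
      have : MemLp ((P i).indicator ψ) 2 volume :=
        (memLp_indicator_iff_restrict (hPm i)).2 (hψ.mono_measure (Measure.restrict_mono hiE le_rfl))
      exact this.restrict _)
    simp only [e] at h1
    rwa [setIntegral_congr_fun (hPm i) (g := fun x => G i x * ψ x) fun x hx => by simp only [hgP i x hx]]
  refine ⟨g, fun K hK hKΩ => ?_⟩
  obtain ⟨m, hm⟩ := hE K hK hKΩ
  refine ⟨(hgMem m).mono_measure (Measure.restrict_mono hm le_rfl), fun ψ hψ => ?_⟩
  have e : ∀ h : ESp n → ℝ, ∫ x in E m, h x * K.indicator ψ x = ∫ x in K, h x * ψ x := by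
    intro h
    have : (fun x => h x * K.indicator ψ x) = K.indicator (fun x => h x * ψ x) := by
      ext x; by_cases hx : x ∈ K <;> simp [hx]
    rw [this, setIntegral_indicator hK.measurableSet, inter_eq_self_of_subset_right hm]
  have h1 := hEw m (K.indicator ψ) (by
    have : MemLp (K.indicator ψ) 2 volume := (memLp_indicator_iff_restrict hK.measurableSet).2 hψ
    exact this.restrict _)
  simpa only [e] using h1

end PshAux

/-! ### The energy inequality -/

namespace PshAux
variable {n : ℕ} {M : Set (ESp n)}

/-- Partial derivative of `f` in the `i`-th coordinate direction. -/
def pcd (i : Fin (2*n)) (f : ESp n → ℝ) (x : ESp n) : ℝ := fderiv ℝ f x (sb n i)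

/-- Second order coefficients of `Lop S`: the matrix `1 + J Jᵀ`. -/
def aC (S : ACStruct n M) (k l : Fin (2*n)) (x : ESp n) : ℝ :=
  (if k = l then 1 else 0) + ∑ i, S.J x (sb n i) k * S.J x (sb n i) l

/-- First order coefficients of `Lop S`. -/
def cC (S : ACStruct n M) (l : Fin (2*n)) (x : ESp n) : ℝ := ∑ i, cB S x (sb n i) (sb n i) l

/-- The operator `Lop S` in coordinates. -/
lemma Lop_coord (S : ACStruct n M) (v : ESp n → ℝ) (x : ESp n) :
    Lop S v x = ∑ l, ((∑ k, aC S k l x * fderiv ℝ (fderiv ℝ v) x (sb n k) (sb n l)) + cC S l x * pcd l v x) := by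
  have hexp : ∀ (L : ESp n →L[ℝ] ℝ) (w : ESp n), L w = ∑ l, w l * L (sb n l) := by
    intro L w
    conv_lhs => rw [← sum_sb w]
    simp [map_sum]
  have hexp2 : ∀ (L : ESp n →L[ℝ] ESp n →L[ℝ] ℝ) (w : ESp n),
      L w w = ∑ l, ∑ k, w k * w l * L (sb n k) (sb n l) := by
    intro L w
    rw [hexp (L w) w]
    refine Finset.sum_congr rfl fun l _ => ?_
    have := hexp (L.flip (sb n l)) w
    simp only [ContinuousLinearMap.flip_apply] at this
    rw [this, Finset.mul_sum]
    exact Finset.sum_congr rfl fun k _ => by ring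
  unfold Lop
  rw [Finset.sum_add_distrib, Finset.sum_add_distrib, Finset.sum_add_distrib]
  congr 1
  · simp only [aC, add_mul, Finset.sum_add_distrib]
    congr 1
    · simp
    · simp_rw [hexp2 (fderiv ℝ (fderiv ℝ v) x), Finset.sum_mul]
      rw [Finset.sum_comm]
      refine Finset.sum_congr rfl fun l _ => ?_
      rw [Finset.sum_comm]
  · simp_rw [cC, pcd, Finset.sum_mul]
    rw [Finset.sum_comm]
    exact Finset.sum_congr rfl fun i _ => hexp _ _

lemma contDiff_mul_cut {Ω : Set (ESp n)} (hΩ : IsOpen Ω) {f g : ESp n → ℝ} (hf : ContDiff ℝ (⊤ : ℕ∞) f)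
    (hfΩ : tsupport f ⊆ Ω) (hg : ContDiffOn ℝ (⊤ : ℕ∞) g Ω) : ContDiff ℝ (⊤ : ℕ∞) (fun x => f x * g x) := by
  rw [contDiff_iff_contDiffAt]
  intro x
  by_cases hx : x ∈ Ω
  · exact hf.contDiffAt.mul (hg.contDiffAt (hΩ.mem_nhds hx))
  · have : (fun x => f x * g x) =ᶠ[𝓝 x] fun _ => 0 := by
      have h := notMem_tsupport_iff_eventuallyEq.1 (fun h => hx (hfΩ h))
      filter_upwards [h] with y hy
      rw [hy]; simp
    exact contDiffAt_const.congr_of_eventuallyEq this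

lemma aC_smooth (S : ACStruct n M) (k l : Fin (2*n)) :
    ContDiffOn ℝ (⊤ : ℕ∞) (aC S k l) M := by
  have h : ∀ i j, ContDiffOn ℝ (⊤ : ℕ∞) (fun x => S.J x (sb n i) j) M := by
    intro i j
    have h1 : ContDiffOn ℝ (⊤ : ℕ∞) (fun x => S.J x (sb n i)) M := S.smooth.clm_apply contDiffOn_const
    exact (EuclideanSpace.proj (𝕜 := ℝ) j).contDiff.comp_contDiffOn h1
  exact contDiffOn_const.add (ContDiffOn.sum fun i _ => (h i k).mul (h i l))

lemma cC_smooth (hM : IsOpen M) (S : ACStruct n M) (l : Fin (2*n)) :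
    ContDiffOn ℝ (⊤ : ℕ∞) (cC S l) M := by
  refine ContDiffOn.sum fun i _ => ?_
  exact (EuclideanSpace.proj (𝕜 := ℝ) l).contDiff.comp_contDiffOn (cB_smooth hM S _ _)

lemma pcd_smooth {f : ESp n → ℝ} (hf : ContDiff ℝ (⊤ : ℕ∞) f) (i : Fin (2*n)) : ContDiff ℝ (⊤ : ℕ∞) (pcd i f) :=
  (hf.fderiv_right (m := (⊤ : ℕ∞)) (by norm_cast)).clm_apply contDiff_const

lemma pcd_smoothOn {Ω : Set (ESp n)} (hΩ : IsOpen Ω) {f : ESp n → ℝ} (hf : ContDiffOn ℝ (⊤ : ℕ∞) f Ω) (i : Fin (2*n)) :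
    ContDiffOn ℝ (⊤ : ℕ∞) (pcd i f) Ω :=
  (hf.fderiv_of_isOpen hΩ (m := (⊤ : ℕ∞)) (by norm_cast)).clm_apply contDiffOn_const

lemma pcd_pd {v : ESp n → ℝ} (hv : ContDiff ℝ (⊤ : ℕ∞) v) (k l : Fin (2*n)) (x : ESp n) :
    pcd k (pcd l v) x = fderiv ℝ (fderiv ℝ v) x (sb n k) (sb n l) := by
  have h1 : DifferentiableAt ℝ (fderiv ℝ v) x :=
    ((hv.fderiv_right (m := (⊤ : ℕ∞)) (by norm_cast)).differentiable (by simp)) x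
  have h2 : HasFDerivAt (fun y => fderiv ℝ v y (sb n l)) _ x := h1.hasFDerivAt.clm_apply (hasFDerivAt_const _ _)
  unfold pcd
  rw [h2.fderiv]; simp

lemma pcd_mul {f g : ESp n → ℝ} {x : ESp n} (hf : DifferentiableAt ℝ f x) (hg : DifferentiableAt ℝ g x)
    (i : Fin (2*n)) : pcd i (fun y => f y * g y) x = pcd i f x * g x + f x * pcd i g x := by
  have h2 : HasFDerivAt (fun y => f y * g y) _ x := hf.hasFDerivAt.mul hg.hasFDerivAt
  unfold pcd
  rw [h2.fderiv]; simp; ring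

lemma pcd_sum {ι : Type*} (s : Finset ι) {f : ι → ESp n → ℝ} {x : ESp n} (hf : ∀ j ∈ s, DifferentiableAt ℝ (f j) x)
    (i : Fin (2*n)) : pcd i (fun y => ∑ j ∈ s, f j y) x = ∑ j ∈ s, pcd i (f j) x := by
  have h2 : HasFDerivAt (fun y => ∑ j ∈ s, f j y) _ x := HasFDerivAt.fun_sum fun j hj => (hf j hj).hasFDerivAt
  unfold pcd
  rw [h2.fderiv]; simp

/-- Localised coefficients attached to a cut-off function `χ`, and the energy inequality they give for
almost subsolutions of `Lop S`. The intended `α` and `γ` are those of `exists_cut`; the structure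
records only the properties that matter: continuity, symmetry and ellipticity of `α`, and the
inequality `ineq`, where `-η` is a lower bound for `Lop S v` and `w` is a nonnegative test function. -/
structure IsCut (S : ACStruct n M) (Ω : Set (ESp n)) (χ : ESp n → ℝ) (α : Fin (2*n) → Fin (2*n) → ESp n → ℝ)
    (γ : Fin (2*n) → ESp n → ℝ) : Prop where
  χc : Continuous χ
  cpt : IsCompact (tsupport χ)
  sub : tsupport χ ⊆ Ω
  αc : ∀ k l, Continuous (α k l)
  γc : ∀ l, Continuous (γ l)
  symm : ∀ k l x, α k l x = α l k x
  ell : ∀ x (ξ : Fin (2*n) → ℝ), χ x ^ 2 * ∑ k, ξ k ^ 2 ≤ ∑ k, ∑ l, α k l x * ξ k * ξ l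
  ineq : ∀ v η w gw, ContDiff ℝ (⊤ : ℕ∞) v → Continuous η → HasWeakGradOn w gw Ω →
    (∀ x ∈ tsupport χ, -η x ≤ Lop S v x) → (∀ᵐ x ∂(volume.restrict (tsupport χ)), 0 ≤ w x) →
    (∑ k, ∑ l, ∫ x in tsupport χ, pcd l v x * (α k l x * gw x k)) +
      ∑ l, ∫ x in tsupport χ, pcd l v x * (χ x * γ l x * w x) ≤ ∫ x in tsupport χ, χ x ^2 * w x * η x

lemma wg_int {Ω : Set (ESp n)} {w : ESp n → ℝ} {gw : ESp n → ESp n} (h : HasWeakGradOn w gw Ω)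
    {K : Set (ESp n)} (hK : IsCompact K) (hKΩ : K ⊆ Ω) :
    IntegrableOn w K ∧ ∀ k, IntegrableOn (fun x => gw x k) K := by
  refine ⟨h.1.integrableOn_compact_subset hKΩ hK, fun k => ?_⟩
  have := h.2.1.integrableOn_compact_subset hKΩ hK
  exact (EuclideanSpace.proj (𝕜 := ℝ) k).integrable_comp this

/-- For a smooth cut-off `χ` equal to `1` on `K`, the coefficients are `α_kl = χ² a_kl` and
`γ_l = ∑_k (2 a_kl ∂_k χ + χ ∂_k a_kl) - χ c_l`, with `a` and `c` the coefficients `aC`, `cC` of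
`Lop S`. They satisfy `∑_kl ∂_k (α_kl ∂_l v) = χ ∑_l γ_l ∂_l v + χ² Lop S v`. -/
lemma exists_cut (hM : IsOpen M) (S : ACStruct n M) {Ω : Set (ESp n)} (hΩ : IsOpen Ω) (hΩM : Ω ⊆ M)
    {K : Set (ESp n)} (hK : IsCompact K) (hKΩ : K ⊆ Ω) :
    ∃ χ α γ, IsCut S Ω χ α γ ∧ ∀ x ∈ K, χ x = 1 := by
  obtain ⟨χ, hχ1, hχ, hχc, hχΩ⟩ : ∃ χ : ESp n → ℝ, (∀ x ∈ K, χ x = 1) ∧ ContDiff ℝ (⊤ : ℕ∞) χ ∧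
      HasCompactSupport χ ∧ tsupport χ ⊆ Ω := by
    obtain ⟨K', hK', hKK', hK'Ω⟩ := exists_compact_between hK hΩ hKΩ
    obtain ⟨f, h1, h2, h3⟩ := exists_contMDiffMap_zero_one_of_isClosed (n := ⊤) (modelWithCornersSelf ℝ (ESp n))
      (s := (interior K')ᶜ) (t := K) isOpen_interior.isClosed_compl hK.isClosed
      (Set.disjoint_left.2 fun x hx hxK => hx (hKK' hxK))
    have hs : tsupport f ⊆ K' := by
      refine closure_minimal (fun x hx => ?_) hK'.isClosed
      by_contra hxK
      exact hx (h1 (fun h => hxK (interior_subset h)))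
    exact ⟨f, fun x hx => h2 hx, f.contMDiff.contDiff, hK'.of_isClosed_subset (isClosed_tsupport _) hs,
      hs.trans hK'Ω⟩
  have haS : ∀ k l, ContDiffOn ℝ (⊤ : ℕ∞) (aC S k l) Ω := fun k l => (aC_smooth S k l).mono hΩM
  have hcS : ∀ l, ContDiffOn ℝ (⊤ : ℕ∞) (cC S l) Ω := fun l => (cC_smooth hM S l).mono hΩM
  let α : Fin (2*n) → Fin (2*n) → ESp n → ℝ := fun k l x => χ x * (χ x * aC S k l x)
  let γ : Fin (2*n) → ESp n → ℝ := fun l x => (∑ k, 2 * (pcd k χ x * aC S k l x)) +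
    χ x * ((∑ k, pcd k (aC S k l) x) - cC S l x)
  have hαs : ∀ k l, ContDiff ℝ (⊤ : ℕ∞) (α k l) := fun k l => hχ.mul (contDiff_mul_cut hΩ hχ hχΩ (haS k l))
  have hpdχ : ∀ k, tsupport (pcd k χ) ⊆ Ω := by
    intro k
    refine Subset.trans (closure_mono ?_) ((tsupport_fderiv_subset ℝ (f := χ)).trans hχΩ)
    intro x hx h
    exact hx (by simp [pcd, h])
  have hγs : ∀ l, ContDiff ℝ (⊤ : ℕ∞) (γ l) := by
    intro l
    refine ContDiff.add (ContDiff.sum fun k _ => contDiff_const.mul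
      (contDiff_mul_cut hΩ (pcd_smooth hχ k) (hpdχ k) (haS k l))) (contDiff_mul_cut hΩ hχ hχΩ ?_)
    exact (ContDiffOn.sum fun k _ => pcd_smoothOn hΩ (haS k l) k).sub (hcS l)
  have hsymm : ∀ k l x, aC S k l x = aC S l k x := by
    intro k l x
    simp only [aC, eq_comm]
    congr 1
    exact Finset.sum_congr rfl fun i _ => mul_comm _ _
  refine ⟨χ, α, γ, ⟨hχ.continuous, hχc, hχΩ, fun k l => (hαs k l).continuous, fun l => (hγs l).continuous,
    fun k l x => by simp only [α, hsymm k l x], ?_, ?_⟩, hχ1⟩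
  · intro x ξ
    have : ∑ k, ∑ l, α k l x * ξ k * ξ l = χ x ^ 2 * (∑ k, ξ k ^ 2 + ∑ i, (∑ k, S.J x (sb n i) k * ξ k)^2) := by
      have e1 : ∑ k, ∑ l, aC S k l x * ξ k * ξ l = ∑ k, ξ k ^ 2 + ∑ i, (∑ k, S.J x (sb n i) k * ξ k)^2 := by
        simp only [aC, add_mul, Finset.sum_add_distrib]
        congr 1
        · simp [sq]
        · simp_rw [sq, Finset.sum_mul_sum, Finset.sum_mul]
          symm
          rw [Finset.sum_comm]
          refine Finset.sum_congr rfl fun k _ => ?_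
          rw [Finset.sum_comm]
          refine Finset.sum_congr rfl fun l _ => ?_
          exact Finset.sum_congr rfl fun i _ => by ring
      rw [← e1, Finset.mul_sum]
      refine Finset.sum_congr rfl fun k _ => ?_
      rw [Finset.mul_sum]
      refine Finset.sum_congr rfl fun l _ => ?_
      simp only [α]; ring
    rw [this]
    refine mul_le_mul_of_nonneg_left ?_ (sq_nonneg _)
    have : 0 ≤ ∑ i, (∑ k, S.J x (sb n i) k * ξ k)^2 := Finset.sum_nonneg fun i _ => sq_nonneg _
    linarith
  · intro v η w gw hv hη hw hL hw0
    set T := tsupport χ with hT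
    have hTm : MeasurableSet T := hχc.measurableSet
    obtain ⟨iw, igw⟩ := wg_int hw hχc hχΩ
    let φ : Fin (2*n) → ESp n → ℝ := fun k x => ∑ l, α k l x * pcd l v x
    have hφ : ∀ k, ContDiff ℝ (⊤ : ℕ∞) (φ k) := fun k => ContDiff.sum fun l _ => (hαs k l).mul (pcd_smooth hv l)
    have hφT : ∀ k, tsupport (φ k) ⊆ T := by
      intro k
      refine closure_mono fun x hx hχx => hx ?_
      simp only [φ, α]
      refine Finset.sum_eq_zero fun l _ => ?_
      rw [hχx]; ring
    have hpT : ∀ k, ∀ x, x ∉ T → pcd k (φ k) x = 0 := by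
      intro k x hx
      have h := image_eq_zero_of_notMem_tsupport (fun h => hx ((tsupport_fderiv_subset ℝ (f := φ k)).trans (hφT k) h))
      simp [pcd, h]
    have hweak : ∀ k, ∫ x in T, w x * pcd k (φ k) x = -∫ x in T, φ k x * gw x k := by
      intro k
      have h := hw.2.2 (φ k) (hφ k) (hχc.of_isClosed_subset (isClosed_tsupport _) (hφT k)) ((hφT k).trans hχΩ) k
      rw [setIntegral_eq_of_subset_of_forall_sdiff_eq_zero hΩ.measurableSet hχΩ (f := fun x => w x * fderiv ℝ (φ k) x (sb n k))
        (fun x hx => by have := hpT k x hx.2; simp only [pcd] at this; simp only [this, mul_zero]),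
        setIntegral_eq_of_subset_of_forall_sdiff_eq_zero hΩ.measurableSet hχΩ (f := fun x => φ k x * gw x k)
        (fun x hx => by simp only [image_eq_zero_of_notMem_tsupport (fun h => hx.2 (hφT k h)), zero_mul])] at h
      exact h
    -- The divergence form of `χ² Lop S v`.
    have hid : ∀ x ∈ T, ∑ k, pcd k (φ k) x = (∑ l, χ x * γ l x * pcd l v x) + χ x ^ 2 * Lop S v x := by
      intro x hx
      have hda : ∀ k l, DifferentiableAt ℝ (aC S k l) x := fun k l =>
        ((haS k l).contDiffAt (hΩ.mem_nhds (hχΩ hx))).differentiableAt (by simp)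
      have hdχ : DifferentiableAt ℝ χ x := (hχ.differentiable (by simp)) x
      have hdv : ∀ l, DifferentiableAt ℝ (pcd l v) x := fun l => ((pcd_smooth hv l).differentiable (by simp)) x
      have e : ∀ k, pcd k (φ k) x = ∑ l, ((2 * χ x * pcd k χ x * aC S k l x + χ x ^ 2 * pcd k (aC S k l) x) * pcd l v x
          + χ x ^ 2 * (aC S k l x * fderiv ℝ (fderiv ℝ v) x (sb n k) (sb n l))) := by
        intro k
        simp only [φ]
        rw [pcd_sum (f := fun l x => α k l x * pcd l v x) _ fun l _ => ((hαs k l).differentiable (by simp) x).mul (hdv l)]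
        refine Finset.sum_congr rfl fun l _ => ?_
        rw [pcd_mul ((hαs k l).differentiable (by simp) x) (hdv l), pcd_pd hv]
        simp only [α]
        rw [pcd_mul (g := fun x => χ x * aC S k l x) hdχ (hdχ.mul (hda k l)), pcd_mul hdχ (hda k l)]
        ring
      simp_rw [e]
      rw [Finset.sum_comm, Lop_coord, Finset.mul_sum, ← Finset.sum_add_distrib]
      refine Finset.sum_congr rfl fun l _ => ?_
      simp only [γ]
      rw [Finset.sum_add_distrib, ← Finset.sum_mul, Finset.sum_add_distrib, ← Finset.mul_sum, ← Finset.mul_sum]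
      have : ∑ k, 2 * χ x * pcd k χ x * aC S k l x = χ x * ∑ k, 2 * (pcd k χ x * aC S k l x) := by
        rw [Finset.mul_sum]; exact Finset.sum_congr rfl fun k _ => by ring
      rw [this]; ring
    have mulc : ∀ {f g : ESp n → ℝ}, IntegrableOn f T → Continuous g → IntegrableOn (fun x => g x * f x) T := by
      intro f g hf hg
      exact IntegrableOn.continuousOn_mul hg.continuousOn hf hχc
    have s1 : ∑ k, ∑ l, ∫ x in T, pcd l v x * (α k l x * gw x k) = ∑ k, ∫ x in T, φ k x * gw x k := by
      refine Finset.sum_congr rfl fun k _ => ?_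
      rw [← integral_finsetSum _ fun l _ => mulc (mulc (igw k) (hαs k l).continuous) (pcd_smooth hv l).continuous]
      refine integral_congr_ae (Eventually.of_forall fun x => ?_)
      simp only [φ, Finset.sum_mul]
      exact Finset.sum_congr rfl fun l _ => by ring
    have il : ∀ l, IntegrableOn (fun x => pcd l v x * (χ x * γ l x * w x)) T := fun l =>
      mulc (mulc iw (hχ.continuous.mul (hγs l).continuous)) (pcd_smooth hv l).continuous
    have iη : IntegrableOn (fun x => χ x ^2 * w x * η x) T := by
      refine (mulc iw ((hχ.continuous.pow 2).mul hη)).congr_fun (fun x _ => by simp; ring) hTm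
    have ip : ∀ k, IntegrableOn (fun x => w x * pcd k (φ k) x) T := fun k =>
      (mulc iw (pcd_smooth (hφ k) k).continuous).congr_fun (fun x _ => by simp; ring) hTm
    have ipn : IntegrableOn (fun x => -∑ k, w x * pcd k (φ k) x) T := (integrable_finsetSum _ fun k _ => ip k).neg
    have ils : IntegrableOn (fun x => ∑ l, pcd l v x * (χ x * γ l x * w x)) T := integrable_finsetSum _ fun l _ => il l
    rw [s1, ← neg_neg (∑ k, ∫ x in T, φ k x * gw x k), ← Finset.sum_neg_distrib]
    simp_rw [← hweak]
    rw [← integral_finsetSum _ fun k _ => ip k, ← integral_finsetSum _ fun l _ => il l, ← integral_neg,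
      ← integral_add ipn ils]
    refine integral_mono_ae (ipn.add ils) iη ?_
    filter_upwards [hw0, ae_restrict_mem hTm] with x hx0 hxT
    rw [← Finset.mul_sum, hid x hxT]
    have e : ∑ l, pcd l v x * (χ x * γ l x * w x) = w x * ∑ l, χ x * γ l x * pcd l v x := by
      rw [Finset.mul_sum]; exact Finset.sum_congr rfl fun l _ => by ring
    rw [e]
    have := mul_le_mul_of_nonneg_left (hL x hxT) (mul_nonneg (sq_nonneg (χ x)) hx0)
    nlinarith

end PshAux

/-! ### `W^{1,2}_loc` functions and localised forms -/

namespace PshAux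
variable {n : ℕ} {M : Set (ESp n)}

/-- `w ∈ W^{1,2}_loc(Ω)` with weak partial derivatives `h k`. -/
structure W12 (Ω : Set (ESp n)) (w : ESp n → ℝ) (h : Fin (2*n) → ESp n → ℝ) : Prop where
  mem : ∀ K, IsCompact K → K ⊆ Ω → MemLp w 2 (volume.restrict K)
  memd : ∀ k K, IsCompact K → K ⊆ Ω → MemLp (h k) 2 (volume.restrict K)
  wk : ∀ φ : ESp n → ℝ, ContDiff ℝ (⊤ : ℕ∞) φ → HasCompactSupport φ → tsupport φ ⊆ Ω →
    ∀ k, ∫ x in Ω, w x * pcd k φ x = -∫ x in Ω, φ x * h k x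

/-- The vector field with components `h k`. -/
def toV (h : Fin (2*n) → ESp n → ℝ) (x : ESp n) : ESp n := WithLp.toLp 2 fun k => h k x

lemma locInt_of_memLp {E : Type*} [NormedAddCommGroup E] {Ω : Set (ESp n)} (hΩ : IsOpen Ω) {w : ESp n → E}
    (h : ∀ K, IsCompact K → K ⊆ Ω → MemLp w 2 (volume.restrict K)) : LocallyIntegrableOn w Ω volume := by
  intro x hx
  obtain ⟨K, hK, hxK, hKU⟩ := exists_compact_subset hΩ hx
  refine ⟨K, mem_nhdsWithin_of_mem_nhds (mem_interior_iff_mem_nhds.1 hxK), ?_⟩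
  have : IsFiniteMeasure (volume.restrict K) := ⟨by simpa using hK.measure_lt_top⟩
  exact (h K hK hKU).integrable (by norm_num)

lemma W12.weak {Ω : Set (ESp n)} (hΩ : IsOpen Ω) {w : ESp n → ℝ} {h : Fin (2*n) → ESp n → ℝ} (H : W12 Ω w h) :
    HasWeakGradOn w (toV h) Ω := by
  refine ⟨locInt_of_memLp hΩ H.mem, locInt_of_memLp hΩ fun K hK hKΩ => ?_, fun φ h1 h2 h3 i => H.wk φ h1 h2 h3 i⟩
  exact memLp_piLp_iff.2 fun k => H.memd k K hK hKΩ

/-- A locally square integrable function times a compactly supported continuous one is integrable. -/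
lemma int_mul_cpt {Ω : Set (ESp n)} (hΩ : IsOpen Ω) {w : ESp n → ℝ}
    (h : ∀ K, IsCompact K → K ⊆ Ω → MemLp w 2 (volume.restrict K)) {φ : ESp n → ℝ} (hφ : Continuous φ)
    (hc : HasCompactSupport φ) (hs : tsupport φ ⊆ Ω) : IntegrableOn (fun x => w x * φ x) Ω := by
  have h1 : IntegrableOn (fun x => w x * φ x) (tsupport φ) := (h _ hc hs).integrable_mul (cont_memLp hφ hc)
  refine h1.of_forall_sdiff_eq_zero hΩ.measurableSet fun x hx => ?_
  rw [image_eq_zero_of_notMem_tsupport hx.2, mul_zero]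

lemma pcd_supp (k : Fin (2*n)) (φ : ESp n → ℝ) : tsupport (pcd k φ) ⊆ tsupport φ := by
  refine Subset.trans (closure_mono ?_) (tsupport_fderiv_subset ℝ (f := φ))
  intro x hx h
  exact hx (by simp [pcd, h])

lemma W12.lin {Ω : Set (ESp n)} (hΩ : IsOpen Ω) {w w' : ESp n → ℝ} {h h' : Fin (2*n) → ESp n → ℝ}
    (H : W12 Ω w h) (H' : W12 Ω w' h') (c : ℝ) :
    W12 Ω (fun x => w x + c * w' x) (fun k x => h k x + c * h' k x) := by
  refine ⟨fun K hK hKΩ => (H.mem K hK hKΩ).add ((H'.mem K hK hKΩ).const_mul c),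
    fun k K hK hKΩ => (H.memd k K hK hKΩ).add ((H'.memd k K hK hKΩ).const_mul c), fun φ h1 h2 h3 k => ?_⟩
  have hc' : HasCompactSupport (pcd k φ) := h2.of_isClosed_subset (isClosed_tsupport _) (pcd_supp k φ)
  have i1 := int_mul_cpt hΩ H.mem (pcd_smooth h1 k).continuous hc' ((pcd_supp k φ).trans h3)
  have i2 := int_mul_cpt hΩ H'.mem (pcd_smooth h1 k).continuous hc' ((pcd_supp k φ).trans h3)
  have i3 := int_mul_cpt hΩ (H.memd k) h1.continuous h2 h3
  have i4 := int_mul_cpt hΩ (H'.memd k) h1.continuous h2 h3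
  have e1 : ∫ x in Ω, (w x + c * w' x) * pcd k φ x = (∫ x in Ω, w x * pcd k φ x) + c * ∫ x in Ω, w' x * pcd k φ x := by
    rw [← integral_const_mul, ← integral_add i1 (i2.const_mul c)]
    exact integral_congr_ae (Eventually.of_forall fun x => by simp only; ring)
  have e2 : ∫ x in Ω, φ x * (h k x + c * h' k x) = (∫ x in Ω, φ x * h k x) + c * ∫ x in Ω, φ x * h' k x := by
    simp only [mul_comm (φ _)]
    rw [← integral_const_mul, ← integral_add i3 (i4.const_mul c)]
    exact integral_congr_ae (Eventually.of_forall fun x => by simp only; ring)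
  rw [e1, e2, H.wk φ h1 h2 h3 k, H'.wk φ h1 h2 h3 k]; ring

lemma smooth_W12 {Ω : Set (ESp n)} {v : ESp n → ℝ} (hv : ContDiff ℝ (⊤ : ℕ∞) v) : W12 Ω v (fun k => pcd k v) := by
  refine ⟨fun K hK _ => cont_memLp hv.continuous hK, fun k K hK _ => cont_memLp (pcd_smooth hv k).continuous hK,
    fun φ h1 h2 h3 k => ?_⟩
  have hc' : HasCompactSupport (pcd k φ) := h2.of_isClosed_subset (isClosed_tsupport _) (pcd_supp k φ)
  rw [setIntegral_eq_integral_of_forall_compl_eq_zero fun x hx => by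
      rw [image_eq_zero_of_notMem_tsupport (fun h => hx (h3 (pcd_supp k φ h))), mul_zero],
    setIntegral_eq_integral_of_forall_compl_eq_zero fun x hx => by
      rw [image_eq_zero_of_notMem_tsupport (fun h => hx (h3 h)), zero_mul]]
  have := integral_mul_fderiv_eq_neg_fderiv_mul_of_integrable (μ := (volume : Measure (ESp n))) (f := v) (g := φ) (v := sb n k)
    (((pcd_smooth hv k).continuous.mul h1.continuous).integrable_of_hasCompactSupport h2.mul_left)
    ((hv.continuous.mul (pcd_smooth h1 k).continuous).integrable_of_hasCompactSupport hc'.mul_left)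
    ((hv.continuous.mul h1.continuous).integrable_of_hasCompactSupport h2.mul_left)
    (fun x _ => hv.differentiable (by simp) x) (fun x _ => h1.differentiable (by simp) x)
  simp only [pcd, mul_comm (φ _)]
  exact this

lemma mem_cmul {K : Set (ESp n)} (hK : IsCompact K) {a f : ESp n → ℝ} (ha : Continuous a)
    (hf : MemLp f 2 (volume.restrict K)) : MemLp (fun x => a x * f x) 2 (volume.restrict K) := by
  obtain ⟨C, hC⟩ := hK.exists_bound_of_continuousOn ha.continuousOn
  refine hf.of_le_mul (c := C) (ha.aestronglyMeasurable.mul hf.1) ?_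
  refine (ae_restrict_iff' hK.measurableSet).2 (Eventually.of_forall fun x hx => ?_)
  rw [norm_mul]
  exact mul_le_mul_of_nonneg_right (hC x hx) (norm_nonneg _)

lemma cs_int {α : Type*} [MeasurableSpace α] {μ : Measure α} {f g : α → ℝ} (hf : MemLp f 2 μ) (hg : MemLp g 2 μ) :
    |∫ x, f x * g x ∂μ| ≤ Real.sqrt (∫ x, f x ^ 2 ∂μ) * Real.sqrt (∫ x, g x ^ 2 ∂μ) := by
  have hn : ∀ {f : α → ℝ} (hf : MemLp f 2 μ), Real.sqrt (∫ x, f x ^ 2 ∂μ) = ‖hf.toLp f‖ := by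
    intro f hf
    rw [Real.sqrt_eq_iff_eq_sq (integral_nonneg fun x => sq_nonneg _) (norm_nonneg _),
      ← real_inner_self_eq_norm_sq, toLp_inner]
    simp only [sq]
  rw [← toLp_inner hf hg, hn hf, hn hg]
  exact abs_real_inner_le_norm _ _

lemma L2_tendsto_int {K : Set (ESp n)} {f : ℕ → ESp n → ℝ} {u ψ : ESp n → ℝ}
    (hf : ∀ l, MemLp (f l) 2 (volume.restrict K)) (hu : MemLp u 2 (volume.restrict K))
    (hψ : MemLp ψ 2 (volume.restrict K))
    (hl : Tendsto (fun l => ∫ x in K, (f l x - u x)^2) atTop (𝓝 0)) :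
    Tendsto (fun l => ∫ x in K, f l x * ψ x) atTop (𝓝 (∫ x in K, u x * ψ x)) := by
  rw [tendsto_iff_norm_sub_tendsto_zero]
  have h0 : Tendsto (fun l => Real.sqrt (∫ x in K, (f l x - u x)^2) * Real.sqrt (∫ x in K, ψ x ^ 2)) atTop (𝓝 0) := by
    have := ((Real.continuous_sqrt.tendsto 0).comp hl).mul_const (Real.sqrt (∫ x in K, ψ x ^ 2))
    simpa using this
  refine squeeze_zero (fun l => norm_nonneg _) (fun l => ?_) h0
  have i1 : Integrable (fun x => f l x * ψ x) (volume.restrict K) := (hf l).integrable_mul hψ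
  have i2 : Integrable (fun x => u x * ψ x) (volume.restrict K) := hu.integrable_mul hψ
  rw [← integral_sub i1 i2, Real.norm_eq_abs]
  have := cs_int (μ := volume.restrict K) ((hf l).sub hu) hψ
  simp only [Pi.sub_apply] at this
  refine le_trans (le_of_eq ?_) this
  congr 1
  exact integral_congr_ae (Eventually.of_forall fun x => by simp only; ring)

/-- `L²_loc` limits of functions whose weak gradients stay bounded in `L²_loc` are in
`W^{1,2}_loc`, and the gradients converge weakly. -/
lemma weak_limit {Ω : Set (ESp n)} (hΩ : IsOpen Ω) {f : ℕ → ESp n → ℝ} {h : ℕ → Fin (2*n) → ESp n → ℝ} {u : ESp n → ℝ}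
    (H : ∀ l, W12 Ω (f l) (h l)) (hu : ∀ K, IsCompact K → K ⊆ Ω → MemLp u 2 (volume.restrict K))
    (hl : ∀ K, IsCompact K → K ⊆ Ω → Tendsto (fun l => ∫ x in K, (f l x - u x)^2) atTop (𝓝 0))
    (hB : ∀ K, IsCompact K → K ⊆ Ω → ∃ B : ℝ, ∀ᶠ l in atTop, ∀ k, ∫ x in K, (h l k x)^2 ≤ B) :
    ∃ g : Fin (2*n) → ESp n → ℝ, W12 Ω u g ∧ ∀ k K, IsCompact K → K ⊆ Ω →
      ∀ ψ, MemLp ψ 2 (volume.restrict K) →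
      Tendsto (fun l => ∫ x in K, h l k x * ψ x) atTop (𝓝 (∫ x in K, g k x * ψ x)) := by
  have restr : ∀ (F : ESp n → ℝ) (φ : ESp n → ℝ), tsupport φ ⊆ Ω →
      ∫ x in Ω, F x * φ x = ∫ x in tsupport φ, F x * φ x := by
    intro F φ hs
    refine setIntegral_eq_of_subset_of_forall_sdiff_eq_zero hΩ.measurableSet hs fun x hx => ?_
    rw [image_eq_zero_of_notMem_tsupport hx.2, mul_zero]
  have hlim : ∀ k (φ : ESp n → ℝ), ContDiff ℝ (⊤ : ℕ∞) φ → HasCompactSupport φ → tsupport φ ⊆ Ω →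
      Tendsto (fun l => ∫ x in Ω, h l k x * φ x) atTop (𝓝 (-∫ x in Ω, u x * pcd k φ x)) := by
    intro k φ h1 h2 h3
    have hc' : HasCompactSupport (pcd k φ) := h2.of_isClosed_subset (isClosed_tsupport _) (pcd_supp k φ)
    have hs' := (pcd_supp k φ).trans h3
    have e : ∀ l, ∫ x in Ω, h l k x * φ x = -∫ x in tsupport (pcd k φ), f l x * pcd k φ x := by
      intro l
      rw [← restr _ _ hs', (H l).wk φ h1 h2 h3 k, neg_neg]
      simp only [mul_comm]
    simp only [e]
    rw [restr _ _ hs']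
    exact (L2_tendsto_int (fun l => (H l).mem _ hc' hs') (hu _ hc' hs')
      (cont_memLp (pcd_smooth h1 k).continuous hc') (hl _ hc' hs')).neg
  have hk : ∀ k, ∃ g : ESp n → ℝ, ∀ K, IsCompact K → K ⊆ Ω → MemLp g 2 (volume.restrict K) ∧
      ∀ ψ, MemLp ψ 2 (volume.restrict K) →
      Tendsto (fun l => ∫ x in K, h l k x * ψ x) atTop (𝓝 (∫ x in K, g x * ψ x)) := by
    intro k
    refine wk_compact_loc hΩ (fun l => (H l).memd k) (fun K hK hKΩ => ?_) fun φ h1 h2 h3 => ⟨_, hlim k φ h1 h2 h3⟩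
    obtain ⟨B, hB⟩ := hB K hK hKΩ
    exact ⟨B, hB.mono fun l hl => hl k⟩
  choose g hg using hk
  refine ⟨g, ⟨hu, fun k K hK hKΩ => (hg k K hK hKΩ).1, fun φ h1 h2 h3 k => ?_⟩,
    fun k K hK hKΩ => (hg k K hK hKΩ).2⟩
  have t1 := hlim k φ h1 h2 h3
  have t2 := (hg k _ h2 h3).2 φ (cont_memLp h1.continuous h2)
  simp only [restr _ φ h3] at t1
  have := tendsto_nhds_unique t1 t2
  rw [← restr _ _ h3] at this
  simp only [mul_comm (φ _)]
  rw [← this, neg_neg]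

/-- The bilinear form `∫ α(g, h)`. -/
def QF (T : Set (ESp n)) (α : Fin (2*n) → Fin (2*n) → ESp n → ℝ) (g h : Fin (2*n) → ESp n → ℝ) : ℝ :=
  ∑ k, ∑ l, ∫ x in T, g l x * (α k l x * h k x)

/-- The lower order term `∫ χ w γ(g)`. -/
def RF (T : Set (ESp n)) (χ : ESp n → ℝ) (γ : Fin (2*n) → ESp n → ℝ) (g : Fin (2*n) → ESp n → ℝ) (w : ESp n → ℝ) : ℝ :=
  ∑ l, ∫ x in T, g l x * (χ x * γ l x * w x)

/-- The weighted energy `∫ χ² |g|²`. -/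
def NF (T : Set (ESp n)) (χ : ESp n → ℝ) (g : Fin (2*n) → ESp n → ℝ) : ℝ :=
  ∫ x in T, χ x ^ 2 * ∑ l, g l x ^ 2

/-- The weighted norm `∫ w² |γ|²`. -/
def PF (T : Set (ESp n)) (γ : Fin (2*n) → ESp n → ℝ) (w : ESp n → ℝ) : ℝ :=
  ∫ x in T, w x ^ 2 * ∑ l, γ l x ^ 2

section forms
variable {S : ACStruct n M} {Ω : Set (ESp n)} {χ : ESp n → ℝ} {α : Fin (2*n) → Fin (2*n) → ESp n → ℝ}
  {γ : Fin (2*n) → ESp n → ℝ}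

lemma IsCut.int_q (hc : IsCut S Ω χ α γ) {g h : Fin (2*n) → ESp n → ℝ}
    (hg : ∀ k, MemLp (g k) 2 (volume.restrict (tsupport χ)))
    (hh : ∀ k, MemLp (h k) 2 (volume.restrict (tsupport χ))) (k l) :
    IntegrableOn (fun x => g l x * (α k l x * h k x)) (tsupport χ) :=
  (hg l).integrable_mul (mem_cmul hc.cpt (hc.αc k l) (hh k))

lemma IsCut.int_r (hc : IsCut S Ω χ α γ) {g : Fin (2*n) → ESp n → ℝ} {w : ESp n → ℝ}
    (hg : ∀ k, MemLp (g k) 2 (volume.restrict (tsupport χ)))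
    (hw : MemLp w 2 (volume.restrict (tsupport χ))) (l) :
    IntegrableOn (fun x => g l x * (χ x * γ l x * w x)) (tsupport χ) :=
  (hg l).integrable_mul (mem_cmul hc.cpt (hc.χc.mul (hc.γc l)) hw)

lemma IsCut.int_n (hc : IsCut S Ω χ α γ) {g : Fin (2*n) → ESp n → ℝ}
    (hg : ∀ k, MemLp (g k) 2 (volume.restrict (tsupport χ))) :
    IntegrableOn (fun x => χ x ^ 2 * ∑ l, g l x ^ 2) (tsupport χ) :=
  IntegrableOn.continuousOn_mul (hc.χc.pow 2).continuousOn
    (integrable_finsetSum _ fun l _ => (hg l).integrable_sq) hc.cpt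

lemma IsCut.int_p (hc : IsCut S Ω χ α γ) {w : ESp n → ℝ}
    (hw : MemLp w 2 (volume.restrict (tsupport χ))) :
    IntegrableOn (fun x => w x ^ 2 * ∑ l, γ l x ^ 2) (tsupport χ) :=
  IntegrableOn.mul_continuousOn hw.integrable_sq
    (continuous_finsetSum _ fun l _ => (hc.γc l).pow 2).continuousOn hc.cpt

/-- Ellipticity. -/
lemma IsCut.QF_ge (hc : IsCut S Ω χ α γ) {g : Fin (2*n) → ESp n → ℝ}
    (hg : ∀ k, MemLp (g k) 2 (volume.restrict (tsupport χ))) :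
    NF (tsupport χ) χ g ≤ QF (tsupport χ) α g g := by
  unfold QF NF
  simp_rw [← integral_finsetSum _ fun l _ => hc.int_q hg hg _ l]
  rw [← integral_finsetSum _ fun k _ => integrable_finsetSum _ fun l _ => hc.int_q hg hg k l]
  refine integral_mono (hc.int_n hg)
    (integrable_finsetSum _ fun k _ => integrable_finsetSum _ fun l _ => hc.int_q hg hg k l) fun x => ?_
  refine (hc.ell x fun k => g k x).trans (le_of_eq ?_)
  exact Finset.sum_congr rfl fun k _ => Finset.sum_congr rfl fun l _ => by ring

/-- Young's inequality for the lower order term. -/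
lemma IsCut.RF_ge (hc : IsCut S Ω χ α γ) {g : Fin (2*n) → ESp n → ℝ} {w : ESp n → ℝ}
    (hg : ∀ k, MemLp (g k) 2 (volume.restrict (tsupport χ)))
    (hw : MemLp w 2 (volume.restrict (tsupport χ))) {t : ℝ} (ht : 0 < t) :
    -(t * NF (tsupport χ) χ g + 1 / (4 * t) * PF (tsupport χ) γ w) ≤ RF (tsupport χ) χ γ g w := by
  unfold RF NF PF
  have i1 := (hc.int_n hg).const_mul t
  have i2 := (hc.int_p hw).const_mul (1 / (4*t))
  have i3 : IntegrableOn (fun x => -(t * (χ x ^ 2 * ∑ l, g l x ^ 2) + 1 / (4 * t) * (w x ^ 2 * ∑ l, γ l x ^ 2)))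
    (tsupport χ) := (i1.add i2).neg
  rw [← integral_finsetSum _ fun l _ => hc.int_r hg hw l, ← integral_const_mul, ← integral_const_mul,
    ← integral_add i1 i2, ← integral_neg]
  refine integral_mono i3 (integrable_finsetSum _ fun l _ => hc.int_r hg hw l) fun x => ?_
  simp only [Finset.mul_sum]
  rw [← Finset.sum_add_distrib, ← Finset.sum_neg_distrib]
  refine Finset.sum_le_sum fun l _ => ?_
  have h1 : 0 ≤ (2 * t * (χ x * g l x) + w x * γ l x)^2 := sq_nonneg _
  have h2 : t * (χ x ^ 2 * g l x ^ 2) + 1 / (4 * t) * (w x ^ 2 * γ l x ^ 2) + g l x * (χ x * γ l x * w x)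
      = (2 * t * (χ x * g l x) + w x * γ l x)^2 / (4 * t) := by field_simp; ring
  have h3 := div_nonneg h1 (by positivity : 0 ≤ 4 * t)
  linarith

lemma IsCut.QF_lin (hc : IsCut S Ω χ α γ) {g h h' : Fin (2*n) → ESp n → ℝ}
    (hg : ∀ k, MemLp (g k) 2 (volume.restrict (tsupport χ)))
    (hh : ∀ k, MemLp (h k) 2 (volume.restrict (tsupport χ)))
    (hh' : ∀ k, MemLp (h' k) 2 (volume.restrict (tsupport χ))) (c : ℝ) :
    QF (tsupport χ) α g (fun k x => h k x + c * h' k x) = QF (tsupport χ) α g h + c * QF (tsupport χ) α g h' := by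
  unfold QF
  simp only [Finset.mul_sum, ← Finset.sum_add_distrib]
  refine Finset.sum_congr rfl fun k _ => Finset.sum_congr rfl fun l _ => ?_
  rw [← integral_const_mul, ← integral_add (hc.int_q hg hh k l) ((hc.int_q hg hh' k l).const_mul c)]
  exact integral_congr_ae (Eventually.of_forall fun x => by simp only; ring)

lemma IsCut.QF_symm (hc : IsCut S Ω χ α γ) (g h : Fin (2*n) → ESp n → ℝ) :
    QF (tsupport χ) α g h = QF (tsupport χ) α h g := by
  unfold QF
  rw [Finset.sum_comm]
  refine Finset.sum_congr rfl fun k _ => Finset.sum_congr rfl fun l _ => ?_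
  exact integral_congr_ae (Eventually.of_forall fun x => by simp only [hc.symm l k x]; ring)

lemma IsCut.QF_tendsto (hc : IsCut S Ω χ α γ) {g : Fin (2*n) → ESp n → ℝ} {gj : ℕ → Fin (2*n) → ESp n → ℝ}
    {h : Fin (2*n) → ESp n → ℝ}
    (hw : ∀ k K, IsCompact K → K ⊆ Ω → ∀ ψ, MemLp ψ 2 (volume.restrict K) →
      Tendsto (fun j => ∫ x in K, gj j k x * ψ x) atTop (𝓝 (∫ x in K, g k x * ψ x)))
    (hh : ∀ k, MemLp (h k) 2 (volume.restrict (tsupport χ))) :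
    Tendsto (fun j => QF (tsupport χ) α (gj j) h) atTop (𝓝 (QF (tsupport χ) α g h)) :=
  tendsto_finsetSum _ fun k _ => tendsto_finsetSum _ fun l _ =>
    hw l _ hc.cpt hc.sub _ (mem_cmul hc.cpt (hc.αc k l) (hh k))

lemma IsCut.RF_tendsto (hc : IsCut S Ω χ α γ) {g : Fin (2*n) → ESp n → ℝ} {gj : ℕ → Fin (2*n) → ESp n → ℝ}
    {w : ESp n → ℝ}
    (hw : ∀ k K, IsCompact K → K ⊆ Ω → ∀ ψ, MemLp ψ 2 (volume.restrict K) →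
      Tendsto (fun j => ∫ x in K, gj j k x * ψ x) atTop (𝓝 (∫ x in K, g k x * ψ x)))
    (hh : MemLp w 2 (volume.restrict (tsupport χ))) :
    Tendsto (fun j => RF (tsupport χ) χ γ (gj j) w) atTop (𝓝 (RF (tsupport χ) χ γ g w)) :=
  tendsto_finsetSum _ fun l _ =>
    hw l _ hc.cpt hc.sub _ (mem_cmul hc.cpt (hc.χc.mul (hc.γc l)) hh)

lemma NF_ge (hc : IsCut S Ω χ α γ) {g : Fin (2*n) → ESp n → ℝ} {K : Set (ESp n)} (hK : IsCompact K)
    (hg : ∀ k, MemLp (g k) 2 (volume.restrict (tsupport χ)))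
    (h1 : ∀ x ∈ K, χ x = 1) : ∫ x in K, ∑ l, g l x ^ 2 ≤ NF (tsupport χ) χ g := by
  have hKT : K ⊆ tsupport χ := fun x hx => subset_tsupport _ (by rw [Function.mem_support, h1 x hx]; exact one_ne_zero)
  rw [setIntegral_congr_fun hK.measurableSet (g := fun x => χ x ^ 2 * ∑ l, g l x ^ 2) fun x hx => by simp [h1 x hx]]
  exact setIntegral_mono_set (hc.int_n hg) (Eventually.of_forall fun x =>
    mul_nonneg (sq_nonneg _) (Finset.sum_nonneg fun l _ => sq_nonneg _)) hKT.eventuallyLE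

end forms

end PshAux

/-! ### Weak subsolutions and strong convergence -/

namespace PshAux
variable {n : ℕ} {M : Set (ESp n)}

/-- The error term of the energy inequality is controlled by the `L¹` norm of `η`, uniformly over
bounded test functions. -/
lemma cut_rhs {S : ACStruct n M} {Ω : Set (ESp n)} {χ : ESp n → ℝ} {α : Fin (2*n) → Fin (2*n) → ESp n → ℝ}
    {γ : Fin (2*n) → ESp n → ℝ} (hc : IsCut S Ω χ α γ) : ∃ X : ℝ, 0 ≤ X ∧ ∀ (w η : ESp n → ℝ) (B : ℝ),
      Continuous η → (∀ x ∈ tsupport χ, 0 ≤ η x) → 0 ≤ B →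
      (∀ᵐ x ∂(volume.restrict (tsupport χ)), 0 ≤ w x ∧ w x ≤ B) →
      ∫ x in tsupport χ, χ x ^ 2 * w x * η x ≤ X * B * ∫ x in tsupport χ, η x := by
  obtain ⟨X, hX⟩ := hc.cpt.exists_bound_of_continuousOn (hc.χc.pow 2).continuousOn
  refine ⟨|X|, abs_nonneg X, fun w η B hη hη0 hB hw => ?_⟩
  rw [← integral_const_mul]
  refine integral_mono_of_nonneg ?_ ((hη.continuousOn.integrableOn_compact hc.cpt).const_mul _) ?_
  · filter_upwards [hw, ae_restrict_mem hc.cpt.measurableSet] with x hx hxT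
    exact mul_nonneg (mul_nonneg (sq_nonneg _) hx.1) (hη0 x hxT)
  · filter_upwards [hw, ae_restrict_mem hc.cpt.measurableSet] with x hx hxT
    have h1 : χ x ^ 2 ≤ |X| := by
      have := hX x hxT
      rw [Pi.pow_apply, Real.norm_of_nonneg (sq_nonneg _)] at this
      exact this.trans (le_abs_self X)
    exact mul_le_mul_of_nonneg_right (mul_le_mul h1 hx.2 hx.1 (abs_nonneg X)) (hη0 x hxT)

/-- The weak subsolution property of a function with gradient components `g`, tested against bounded
nonnegative functions of class `W^{1,2}_loc` and localised by cut-off functions. -/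
def IsSub (S : ACStruct n M) (Ω : Set (ESp n)) (g : Fin (2*n) → ESp n → ℝ) : Prop :=
  ∀ χ α γ, IsCut S Ω χ α γ → ∀ w h, W12 Ω w h → ∀ B : ℝ,
    (∀ᵐ x ∂(volume.restrict (tsupport χ)), 0 ≤ w x ∧ w x ≤ B) →
    QF (tsupport χ) α g h + RF (tsupport χ) χ γ g w ≤ 0

/-- Bounded plurisubharmonic functions lie in `W^{1,2}_loc` and are weak subsolutions. -/
lemma exists_grad (hM : IsOpen M) (S : ACStruct n M) {Ω : Set (ESp n)} (hΩ : IsOpen Ω) (hΩM : Ω ⊆ M)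
    {u : ESp n → ℝ} (hu : JPsh S Ω u) {C : ℝ} (hC : ∀ x ∈ Ω, |u x| ≤ C) :
    ∃ g, W12 Ω u g ∧ IsSub S Ω g := by
  obtain ⟨v, η, A⟩ := exists_approx hM S hΩ hΩM hu hC
  set D := C + 1 with hD
  have hum : ∀ K, IsCompact K → K ⊆ Ω → MemLp u 2 (volume.restrict K) :=
    fun K hK hKΩ => usc_bdd_sq hΩ hu.1 hC hK hKΩ
  have hsm : ∀ m, W12 Ω (v m) (fun k => pcd k (v m)) := fun m => smooth_W12 (A.smooth m)
  obtain ⟨g, hg, hgw⟩ := weak_limit hΩ hsm hum A.lim_v (fun K hK hKΩ => by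
    obtain ⟨χ, α, γ, hc, h1⟩ := exists_cut hM S hΩ hΩM hK hKΩ
    obtain ⟨X, hX0, hX⟩ := cut_rhs hc
    refine ⟨(2 * |D|)^2 * (∫ x in tsupport χ, ∑ l, γ l x ^ 2) + 2 * (X * (2 * |D|)), ?_⟩
    filter_upwards [A.bd _ hc.cpt hc.sub, (A.lim_η _ hc.cpt hc.sub).eventually (gt_mem_nhds one_pos)]
      with m hm hη k
    have hTm := hc.cpt.measurableSet
    have hcst : W12 Ω (fun _ : ESp n => |D|) (fun k => pcd k (fun _ => |D|)) := smooth_W12 contDiff_const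
    have hW := (hsm m).lin hΩ hcst 1
    have hwb : ∀ x ∈ tsupport χ, 0 ≤ v m x + 1 * |D| ∧ v m x + 1 * |D| ≤ 2 * |D| := by
      intro x hx
      have h2 := abs_le.1 ((hm x hx).1.trans (le_abs_self D))
      constructor <;> linarith
    have hwae : ∀ᵐ x ∂(volume.restrict (tsupport χ)), 0 ≤ v m x + 1 * |D| ∧ v m x + 1 * |D| ≤ 2 * |D| :=
      (ae_restrict_iff' hTm).2 (Eventually.of_forall hwb)
    have hI := hc.ineq (v m) (η m) _ _ (A.smooth m) (A.cont m) (hW.weak hΩ) (fun x hx => (hm x hx).2.2)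
      (hwae.mono fun x hx => hx.1)
    have hR := hX _ (η m) (2 * |D|) (A.cont m) (fun x hx => (hm x hx).2.1) (by positivity) hwae
    have hp0 : ∀ k x, pcd k (fun _ : ESp n => |D|) x = 0 := fun k x => by simp [pcd]
    have hI' : QF (tsupport χ) α (fun k => pcd k (v m)) (fun k => pcd k (v m))
        + RF (tsupport χ) χ γ (fun k => pcd k (v m)) (fun x => v m x + 1 * |D|)
        ≤ ∫ x in tsupport χ, χ x ^ 2 * (v m x + 1 * |D|) * η m x := by
      have := hI
      simp only [toV, hp0, mul_zero, add_zero] at this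
      exact this
    have hmd : ∀ k, MemLp (pcd k (v m)) 2 (volume.restrict (tsupport χ)) := fun k => (hsm m).memd k _ hc.cpt hc.sub
    have q1 := hc.QF_ge hmd
    have q2 := hc.RF_ge hmd (hW.mem _ hc.cpt hc.sub) (t := 1/2) (by norm_num)
    have q3 : PF (tsupport χ) γ (fun x => v m x + 1 * |D|) ≤ (2 * |D|)^2 * ∫ x in tsupport χ, ∑ l, γ l x ^ 2 := by
      unfold PF
      rw [← integral_const_mul]
      refine setIntegral_mono_on (hc.int_p (hW.mem _ hc.cpt hc.sub)) ?_ hTm fun x hx => ?_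
      · exact ((continuous_finsetSum _ fun l _ => (hc.γc l).pow 2).continuousOn.integrableOn_compact hc.cpt).const_mul _
      · refine mul_le_mul_of_nonneg_right ?_ (Finset.sum_nonneg fun l _ => sq_nonneg _)
        exact pow_le_pow_left₀ (hwb x hx).1 (hwb x hx).2 2
    have q4 := NF_ge hc hK hmd h1
    have hKT : K ⊆ tsupport χ := fun x hx =>
      subset_tsupport _ (by rw [Function.mem_support, h1 x hx]; exact one_ne_zero)
    have q5 : ∫ x in K, (pcd k (v m) x)^2 ≤ ∫ x in K, ∑ l, (pcd l (v m) x)^2 := by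
      refine integral_mono ((hsm m).memd k _ hK hKΩ).integrable_sq
        (integrable_finsetSum _ fun l _ => ((hsm m).memd l _ hK hKΩ).integrable_sq) fun x => ?_
      exact Finset.single_le_sum (f := fun l => (pcd l (v m) x)^2) (fun l _ => sq_nonneg _) (Finset.mem_univ k)
    have q6 : X * (2 * |D|) * ∫ x in tsupport χ, η m x ≤ X * (2 * |D|) * 1 :=
      mul_le_mul_of_nonneg_left hη.le (by positivity)
    rw [show (1:ℝ)/(4*(1/2)) = 1/2 by norm_num] at q2
    linarith)
  refine ⟨g, hg, fun χ α γ hc w h hW B hw => ?_⟩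
  obtain ⟨X, hX0, hX⟩ := cut_rhs hc
  have t1 := (hc.QF_tendsto hgw fun k => hW.memd k _ hc.cpt hc.sub).add
    (hc.RF_tendsto hgw (hW.mem _ hc.cpt hc.sub))
  have t2 : Tendsto (fun m => X * |B| * ∫ x in tsupport χ, η m x) atTop (𝓝 0) := by
    simpa using (A.lim_η _ hc.cpt hc.sub).const_mul (X * |B|)
  refine le_of_tendsto_of_tendsto t1 t2 ?_
  filter_upwards [A.bd _ hc.cpt hc.sub] with m hm
  have hI := hc.ineq (v m) (η m) _ _ (A.smooth m) (A.cont m) (hW.weak hΩ) (fun x hx => (hm x hx).2.2)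
      (hw.mono fun x hx => hx.1)
  exact hI.trans (hX _ (η m) |B| (A.cont m) (fun x hx => (hm x hx).2.1) (abs_nonneg B)
    (hw.mono fun x hx => ⟨hx.1, hx.2.trans (le_abs_self B)⟩))

lemma PF_mono {S : ACStruct n M} {Ω : Set (ESp n)} {χ : ESp n → ℝ} {α : Fin (2*n) → Fin (2*n) → ESp n → ℝ}
    {γ : Fin (2*n) → ESp n → ℝ} (hc : IsCut S Ω χ α γ) {w w' : ESp n → ℝ}
    (hw' : MemLp w' 2 (volume.restrict (tsupport χ)))
    (h : ∀ᵐ x ∂(volume.restrict (tsupport χ)), 0 ≤ w x ∧ w x ≤ w' x) :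
    PF (tsupport χ) γ w ≤ PF (tsupport χ) γ w' := by
  refine integral_mono_of_nonneg (Eventually.of_forall fun x =>
    mul_nonneg (sq_nonneg _) (Finset.sum_nonneg fun l _ => sq_nonneg _)) (hc.int_p hw') ?_
  filter_upwards [h] with x hx
  exact mul_le_mul_of_nonneg_right (pow_le_pow_left₀ hx.1 hx.2 2) (Finset.sum_nonneg fun l _ => sq_nonneg _)

/-- An increasing sequence of bounded weak subsolutions converges in `W^{1,2}_loc` as soon as its
limit is in `L²_loc`. -/
lemma conv_main (hM : IsOpen M) (S : ACStruct n M) {Ω : Set (ESp n)} (hΩ : IsOpen Ω) (hΩM : Ω ⊆ M)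
    {u : ESp n → ℝ} (hum : ∀ K, IsCompact K → K ⊆ Ω → MemLp u 2 (volume.restrict K))
    {uj : ℕ → ESp n → ℝ} {C : ℕ → ℝ} (hC : ∀ j, ∀ x ∈ Ω, |uj j x| ≤ C j)
    {gj : ℕ → Fin (2*n) → ESp n → ℝ} (hW : ∀ j, W12 Ω (uj j) (gj j)) (hS : ∀ j, IsSub S Ω (gj j))
    (hmono : ∀ᵐ x ∂(volume.restrict Ω), (∀ j k : ℕ, j ≤ k → uj j x ≤ uj k x) ∧
        Tendsto (fun j => uj j x) atTop (𝓝 (u x))) :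
    ∃ g, W12 Ω u g ∧ ∀ K, IsCompact K → K ⊆ Ω →
      Tendsto (fun j => ∫ x in K, (uj j x - u x)^2) atTop (𝓝 0) ∧
      Tendsto (fun j => ∫ x in K, ∑ l, (gj j l x - g l x)^2) atTop (𝓝 0) := by
  have haeK : ∀ K, IsCompact K → K ⊆ Ω → ∀ᵐ x ∂(volume.restrict K), x ∈ Ω ∧ (∀ j k : ℕ, j ≤ k → uj j x ≤ uj k x) ∧
        (∀ j, uj j x ≤ u x) ∧ Tendsto (fun j => uj j x) atTop (𝓝 (u x)) := by
    intro K hK hKΩ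
    filter_upwards [ae_mono (Measure.restrict_mono hKΩ le_rfl) hmono, ae_restrict_mem hK.measurableSet] with x hx hxK
    exact ⟨hKΩ hxK, hx.1, fun j => Monotone.ge_of_tendsto (fun a b hab => hx.1 a b hab) hx.2 j, hx.2⟩
  have hL2 : ∀ K, IsCompact K → K ⊆ Ω → Tendsto (fun j => ∫ x in K, (uj j x - u x)^2) atTop (𝓝 0) := by
    intro K hK hKΩ
    have := tendsto_integral_of_dominated_convergence (μ := volume.restrict K) (F := fun j x => (uj j x - u x)^2)
      (f := fun _ => (0:ℝ)) (fun x => (u x - uj 0 x)^2)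
      (fun j => (((hW j).mem K hK hKΩ).1.sub (hum K hK hKΩ).1).pow 2)
      ((hum K hK hKΩ).sub ((hW 0).mem K hK hKΩ)).integrable_sq
      (fun j => by
        filter_upwards [haeK K hK hKΩ] with x hx
        rw [Real.norm_of_nonneg (sq_nonneg _)]
        have h1 := hx.2.1 0 j (Nat.zero_le _); have h2 := hx.2.2.1 j
        nlinarith)
      (by
        filter_upwards [haeK K hK hKΩ] with x hx
        have := (hx.2.2.2.sub_const (u x)).pow 2
        simpa using this)
    simpa using this
  have hcst : W12 Ω (fun _ : ESp n => C 0) (fun k => pcd k (fun _ => C 0)) := smooth_W12 contDiff_const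
  have hp0 : ∀ k x, pcd k (fun _ : ESp n => C 0) x = 0 := fun k x => by simp [pcd]
  -- uniform energy bound, testing the subsolution inequality with `u_j + C 0`
  have hE : ∀ χ α γ, IsCut S Ω χ α γ → ∃ B : ℝ, ∀ j, NF (tsupport χ) χ (gj j) ≤ B := by
    intro χ α γ hc
    refine ⟨PF (tsupport χ) γ (fun x => u x + 1 * C 0), fun j => ?_⟩
    have hw := (hW j).lin hΩ hcst 1
    have hae : ∀ᵐ x ∂(volume.restrict (tsupport χ)), 0 ≤ uj j x + 1 * C 0 ∧ uj j x + 1 * C 0 ≤ u x + 1 * C 0 := by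
      filter_upwards [haeK _ hc.cpt hc.sub] with x hx
      have h1 := hx.2.1 0 j (Nat.zero_le _); have h2 := hx.2.2.1 j
      have h3 := abs_le.1 (hC 0 x hx.1)
      constructor <;> linarith
    have hI := hS j χ α γ hc _ _ hw (C j + C 0) (by
      filter_upwards [hae, haeK _ hc.cpt hc.sub] with x hx hx'
      have h3 := abs_le.1 (hC j x hx'.1)
      exact ⟨hx.1, by linarith⟩)
    simp only [hp0, mul_zero, add_zero] at hI
    have hmd : ∀ k, MemLp (gj j k) 2 (volume.restrict (tsupport χ)) := fun k => (hW j).memd k _ hc.cpt hc.sub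
    have q1 := hc.QF_ge hmd
    have q2 := hc.RF_ge hmd (hw.mem _ hc.cpt hc.sub) (t := 1/2) (by norm_num)
    have q3 := PF_mono (w := fun x => uj j x + 1 * C 0) (w' := fun x => u x + 1 * C 0) hc
      ((hum _ hc.cpt hc.sub).add ((hcst.mem _ hc.cpt hc.sub).const_mul 1)) hae
    norm_num at q2 q3 hI ⊢
    linarith
  obtain ⟨g, hg, hgw⟩ := weak_limit hΩ hW hum hL2 (fun K hK hKΩ => by
    obtain ⟨χ, α, γ, hc, h1⟩ := exists_cut hM S hΩ hΩM hK hKΩ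
    obtain ⟨B, hB⟩ := hE χ α γ hc
    refine ⟨B, Eventually.of_forall fun j k => ?_⟩
    refine le_trans ?_ ((NF_ge hc hK (fun k => (hW j).memd k _ hc.cpt hc.sub) h1).trans (hB j))
    refine integral_mono ((hW j).memd k _ hK hKΩ).integrable_sq
        (integrable_finsetSum _ fun l _ => ((hW j).memd l _ hK hKΩ).integrable_sq) fun x => ?_
    exact Finset.single_le_sum (f := fun l => (gj j l x)^2) (fun l _ => sq_nonneg _) (Finset.mem_univ k))
  refine ⟨g, hg, fun K hK hKΩ => ⟨hL2 K hK hKΩ, ?_⟩⟩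
  obtain ⟨χ, α, γ, hc, h1⟩ := exists_cut hM S hΩ hΩM hK hKΩ
  obtain ⟨B, hB⟩ := hE χ α γ hc
  set T := tsupport χ with hT
  have hB0 : 0 ≤ B := le_trans (integral_nonneg fun x =>
    mul_nonneg (sq_nonneg _) (Finset.sum_nonneg fun l _ => sq_nonneg _)) (hB 0)
  have hmj : ∀ j k, MemLp (gj j k) 2 (volume.restrict T) := fun j k => (hW j).memd k _ hc.cpt hc.sub
  have hmg : ∀ k, MemLp (g k) 2 (volume.restrict T) := fun k => hg.memd k _ hc.cpt hc.sub
  -- testing with `u_j - u_k`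
  have key : ∀ t : ℝ, 0 < t → ∀ k j, k ≤ j →
      QF T α (gj j) (gj j) ≤ QF T α (gj j) (gj k) + t * B + 1 / (4*t) * PF T γ (fun x => u x - uj k x) := by
    intro t ht k j hkj
    have hw := (hW j).lin hΩ (hW k) (-1)
    have hae : ∀ᵐ x ∂(volume.restrict T), 0 ≤ uj j x + (-1) * uj k x ∧ uj j x + (-1) * uj k x ≤ u x - uj k x := by
      filter_upwards [haeK _ hc.cpt hc.sub] with x hx
      have h1 := hx.2.1 k j hkj; have h2 := hx.2.2.1 j
      constructor <;> linarith
    have hI := hS j χ α γ hc _ _ hw (C j + C k) (by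
      filter_upwards [hae, haeK _ hc.cpt hc.sub] with x hx hx'
      have h3 := abs_le.1 (hC j x hx'.1); have h4 := abs_le.1 (hC k x hx'.1)
      exact ⟨hx.1, by linarith⟩)
    rw [hc.QF_lin (hmj j) (hmj j) (hmj k)] at hI
    have q2 := hc.RF_ge (hmj j) (hw.mem _ hc.cpt hc.sub) ht
    have q3 := PF_mono (w := fun x => uj j x + (-1) * uj k x) (w' := fun x => u x - uj k x) hc
      ((hum _ hc.cpt hc.sub).sub ((hW k).mem _ hc.cpt hc.sub)) hae
    have q4 := mul_le_mul_of_nonneg_left q3 (by positivity : 0 ≤ 1 / (4*t))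
    have q5 := mul_le_mul_of_nonneg_left (hB j) ht.le
    linarith
  have hexp : ∀ j, NF T χ (fun l x => gj j l x + (-1) * g l x) ≤
      QF T α (gj j) (gj j) - 2 * QF T α (gj j) g + QF T α g g := by
    intro j
    have hd : ∀ k, MemLp (fun x => gj j k x + (-1) * g k x) 2 (volume.restrict T) := fun k =>
      (hmj j k).add ((hmg k).const_mul (-1))
    have q := hc.QF_ge hd
    rw [hc.QF_lin hd (hmj j) hmg, hc.QF_symm _ (gj j), hc.QF_symm _ g, hc.QF_lin (hmj j) (hmj j) hmg,
      hc.QF_lin hmg (hmj j) hmg, hc.QF_symm g (gj j)] at q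
    linarith
  have hD : Tendsto (fun k => PF T γ (fun x => u x - uj k x)) atTop (𝓝 0) := by
    obtain ⟨X, hX⟩ := hc.cpt.exists_bound_of_continuousOn
      (continuous_finsetSum Finset.univ fun l _ => (hc.γc l).pow 2).continuousOn
    have h0 := (hL2 T hc.cpt hc.sub).const_mul X
    rw [mul_zero] at h0
    refine squeeze_zero (fun k => integral_nonneg fun x =>
      mul_nonneg (sq_nonneg _) (Finset.sum_nonneg fun l _ => sq_nonneg _)) (fun k => ?_) h0
    unfold PF
    rw [← integral_const_mul]
    have hmk : MemLp (fun x => u x - uj k x) 2 (volume.restrict T) :=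
      (hum _ hc.cpt hc.sub).sub ((hW k).mem _ hc.cpt hc.sub)
    have hmk' : MemLp (fun x => uj k x - u x) 2 (volume.restrict T) :=
      ((hW k).mem _ hc.cpt hc.sub).sub (hum _ hc.cpt hc.sub)
    refine setIntegral_mono_on (hc.int_p hmk) (hmk'.integrable_sq.const_mul X) hc.cpt.measurableSet fun x hx => ?_
    have := (le_abs_self _).trans (hX x hx)
    simp only [Pi.pow_apply] at this
    have h2 := mul_le_mul_of_nonneg_left this (sq_nonneg (u x - uj k x))
    nlinarith
  have hQk : Tendsto (fun k => QF T α g (gj k)) atTop (𝓝 (QF T α g g)) := by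
    exact (hc.QF_tendsto hgw hmg).congr fun k => hc.QF_symm _ _
  -- Given `ε`, first `t` is chosen, then `k` depending on `t`, then `j` large depending on `k`.
  have hNF : Tendsto (fun j => NF T χ (fun l x => gj j l x + (-1) * g l x)) atTop (𝓝 0) := by
    rw [Metric.tendsto_atTop']
    intro ε hε
    have ht : 0 < ε / (4 * (B + 1)) := by positivity
    set t := ε / (4 * (B + 1)) with htd
    have htB : t * B ≤ ε / 4 := by
      have : t * (B + 1) = ε / 4 := by rw [htd]; field_simp
      nlinarith
    have e1 := (hD.const_mul (1 / (4*t))).eventually (gt_mem_nhds (show 1 / (4*t) * 0 < ε/4 by rw [mul_zero]; positivity))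
    have e2 := hQk.eventually (gt_mem_nhds (show QF T α g g < QF T α g g + ε/4 by linarith))
    obtain ⟨k, hk1, hk2⟩ := (e1.and e2).exists
    have t1 : Tendsto (fun j => QF T α (gj j) (gj k) - 2 * QF T α (gj j) g) atTop
        (𝓝 (QF T α g (gj k) - 2 * QF T α g g)) :=
      (hc.QF_tendsto hgw (hmj k)).sub ((hc.QF_tendsto hgw hmg).const_mul 2)
    have e3 := t1.eventually (gt_mem_nhds (show _ < QF T α g (gj k) - 2 * QF T α g g + ε/4 by linarith))
    obtain ⟨N, hN⟩ := eventually_atTop.1 (e3.and (eventually_ge_atTop k))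
    refine ⟨N, fun j hj => ?_⟩
    obtain ⟨h2, h3⟩ := hN j (le_of_lt hj)
    have hn : 0 ≤ NF T χ (fun l x => gj j l x + (-1) * g l x) := integral_nonneg fun x =>
      mul_nonneg (sq_nonneg _) (Finset.sum_nonneg fun l _ => sq_nonneg _)
    rw [Real.dist_0_eq_abs, abs_of_nonneg hn]
    have := key t ht k j h3
    have := hexp j
    linarith
  refine squeeze_zero (fun j => integral_nonneg fun x => Finset.sum_nonneg fun l _ => sq_nonneg _) (fun j => ?_) hNF
  have := NF_ge hc hK (g := fun l x => gj j l x + (-1) * g l x)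
    (fun k => (hmj j k).add ((hmg k).const_mul (-1))) h1
  refine le_trans (le_of_eq ?_) this
  refine integral_congr_ae (Eventually.of_forall fun x => Finset.sum_congr rfl fun l _ => by ring)

end PshAux

open PshAux in
/-- **Proposition (iii).** If `u ∈ PSH ∩ W^{1,2}_loc(Ω)` and a sequence `u_j` of
bounded `J`-plurisubharmonic functions increases to `u` almost everywhere, then
`u_j → u` in `W^{1,2}_loc(Ω)`. -/
theorem psh_increasing_w12loc_convergence
    {n : ℕ} {M : Set (ESp n)} (hM : IsOpen M) (S : ACStruct n M)
    (Ω : Set (ESp n)) (hΩ : IsOpen Ω) (hΩM : Ω ⊆ M)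
    (u : ESp n → ℝ) (hu : JPsh S Ω u) (huW : MemW12loc u Ω)
    (uj : ℕ → ESp n → ℝ) (hj : ∀ j, JPsh S Ω (uj j))
    (hbdd : ∀ j, ∃ C : ℝ, ∀ x ∈ Ω, |uj j x| ≤ C)
    (hmono : ∀ᵐ x ∂(volume.restrict Ω),
      (∀ j k : ℕ, j ≤ k → uj j x ≤ uj k x) ∧
        Filter.Tendsto (fun j => uj j x) Filter.atTop (nhds (u x))) :
    ∃ g : ESp n → ESp n, HasWeakGradOn u g Ω ∧
      ∃ G : ℕ → ESp n → ESp n, (∀ j, HasWeakGradOn (uj j) (G j) Ω) ∧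
        ∀ K : Set (ESp n), K ⊆ Ω → IsCompact K →
          Filter.Tendsto
            (fun j => ∫ x in K, ((uj j x - u x) ^ 2 + ‖G j x - g x‖ ^ 2))
            Filter.atTop (nhds 0) := by
  have hum : ∀ K, IsCompact K → K ⊆ Ω → MemLp u 2 (volume.restrict K) := by
    intro K hK hKΩ
    obtain ⟨g, hg, hint⟩ := huW
    have hm : AEStronglyMeasurable u (volume.restrict K) :=
      (hg.1.integrableOn_compact_subset hKΩ hK).1
    rw [memLp_two_iff_integrable_sq hm]
    refine (hint K hKΩ hK).mono' (hm.pow 2) (Eventually.of_forall fun x => ?_)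
    rw [Real.norm_of_nonneg (sq_nonneg _)]
    exact le_add_of_nonneg_right (sq_nonneg _)
  choose C hC using hbdd
  choose gj hW hS using fun j => exists_grad hM S hΩ hΩM (hj j) (hC j)
  obtain ⟨g, hg, hlim⟩ := conv_main hM S hΩ hΩM hum hC hW hS hmono
  refine ⟨toV g, hg.weak hΩ, fun j => toV (gj j), fun j => (hW j).weak hΩ, fun K hKΩ hK => ?_⟩
  obtain ⟨l1, l2⟩ := hlim K hK hKΩ
  have l3 := l1.add l2
  rw [add_zero] at l3
  refine l3.congr fun j => ?_
  have i1 : Integrable (fun x => (uj j x - u x)^2) (volume.restrict K) :=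
    (((hW j).mem K hK hKΩ).sub (hum K hK hKΩ)).integrable_sq
  have i2 : Integrable (fun x => ∑ l, (gj j l x - g l x)^2) (volume.restrict K) :=
    integrable_finsetSum _ fun l _ => (((hW j).memd l K hK hKΩ).sub (hg.memd l K hK hKΩ)).integrable_sq
  rw [← integral_add i1 i2]
  refine integral_congr_ae (Eventually.of_forall fun x => ?_)
  simp only [EuclideanSpace.norm_sq_eq, toV, PiLp.sub_apply, Real.norm_eq_abs, sq_abs]
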